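/- arXiv:2112.04220 — 2 statements merged into one kernel-verified Lean document; each statement's English description precedes it below -/
import Mathlib

section
/- Let G be a finite nonabelian simple group such that exactly three primes divide |G| and each of these primes belongs to {2, 3, 5, 7, 11, 13}. Then either G is isomorphic to the alternating group A_5, or o(G) ≥ 71/20. -/
/-- The average element order `o(G) = ψ(G)/|G|` of a finite group `G`,
where `ψ(G) = ∑_{x ∈ G} |x|` is the sum of the orders of all elements of `G`. -/
noncomputable def avgOrder (G : Type*) [Group G] [Fintype G] : ℚ :=
  (∑ x : G, (orderOf x : ℚ)) / (Fintype.card G : ℚ)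

/-!
Let `A ≠ 1` be a maximal elementary abelian `p`-subgroup of `G` with `p ∈ {5, 7, 11, 13}`, and sum
the element orders coset by coset over the cosets `x A`. Put `C = C_G(A)`, let `I` be the set of
elements inverting `A`, and let `F` be the set of `x` such that every element of `x A` has trivial
cube. The average order over `x A` is close to `p` for `x ∈ C`, at least `2` for `x ∈ I`, and at
least `3` for `x ∈ F`. For every other `x` it is at least `4 - r / p`, where `r` bounds the size of
the subsets of `ℤ/p` without three-term arithmetic progressions: if `(x a)³ = 1` holds for three
terms `a`, `a h`, `a h²` of a progression in `A`, then it holds on the whole coset `a ⟨h⟩`.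

The sets `C`, `I`, `F` are disjoint subsets of `N = N_G(A)` and `|I| ≤ |C|`, so
`(4p - r) |G| - (p - r) |N| ≤ p ψ(G)`, which gives the bound unless `|G : N|` is small. If
`|G : N| < p²`, the faithful action of the simple group `G` on `G / N` forces a Sylow `p`-subgroup
containing `A` to be elementary abelian, hence equal to `A`, and so `|G : N| ≡ 1 mod p`. The only
remaining indices are `8` for `p = 7` and `6` for `p = 5`. Then `|A| = p`, and sharper bounds on
`C`, `I` and `F` leave only `|G| = 60` acting on six points, that is `G ≅ A₅`.
-/

open Finset

section RothNumbers

theorem addRothNumber_univ_zmod_le {p r : ℕ} [NeZero p]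
    (h : ∀ S ∈ powersetCard (r + 1) (range p),
      ∃ a ∈ S, ∃ b ∈ S, a ≠ b ∧ (b + b + (p - a)) % p ∈ S) :
    addRothNumber (univ : Finset (ZMod p)) ≤ r := by
  refine Nat.lt_succ_iff.1 (addRothNumber_lt_of_forall_not_threeAPFree fun T hT hfree ↦ ?_)
  have hvals : T.image ZMod.val ∈ powersetCard (r + 1) (range p) := by
    refine mem_powersetCard.2 ⟨image_subset_iff.2 fun x _ ↦ mem_range.2 x.val_lt, ?_⟩
    rw [card_image_of_injective T (ZMod.val_injective p), (mem_powersetCard.1 hT).2]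
  obtain ⟨_, ha, _, hb, hab, hc⟩ := h _ hvals
  obtain ⟨a, haT, rfl⟩ := mem_image.1 ha
  obtain ⟨b, hbT, rfl⟩ := mem_image.1 hb
  obtain ⟨c, hcT, hcval⟩ := mem_image.1 hc
  have hcab : c = b + b - a := by
    rw [← ZMod.natCast_zmod_val c, hcval, ZMod.natCast_mod, Nat.cast_add, Nat.cast_add,
      Nat.cast_sub a.val_lt.le, ZMod.natCast_self]
    simp only [ZMod.natCast_zmod_val]
    ring
  exact hab (congrArg ZMod.val (hfree haT hbT hcT (by rw [hcab]; abel)))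

theorem addRothNumber_zmod_five_le : addRothNumber (univ : Finset (ZMod 5)) ≤ 2 :=
  addRothNumber_univ_zmod_le (by decide +kernel)

theorem addRothNumber_zmod_seven_le : addRothNumber (univ : Finset (ZMod 7)) ≤ 3 :=
  addRothNumber_univ_zmod_le (by decide +kernel)

theorem addRothNumber_zmod_eleven_le : addRothNumber (univ : Finset (ZMod 11)) ≤ 4 :=
  addRothNumber_univ_zmod_le (by decide +kernel)

theorem addRothNumber_zmod_thirteen_le : addRothNumber (univ : Finset (ZMod 13)) ≤ 5 :=
  addRothNumber_univ_zmod_le (by decide +kernel)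

end RothNumbers

section ProgressionClosed

variable (K : Type*) {V : Type*} [Field K] [AddCommGroup V] [Module K V]

/-- A set of vectors is progression-closed if, as soon as it contains three terms `a, a + h, a + 2h`
of an arithmetic progression, it contains the whole line `a + K h`. -/
def IsProgressionClosed (T : Finset V) : Prop :=
  ∀ ⦃a h : V⦄, a ∈ T → a + h ∈ T → a + h + h ∈ T → ∀ i : K, a + i • h ∈ T

variable {K}

theorem IsProgressionClosed.translate_subtype [DecidableEq V] {T : Finset V}
    (hT : IsProgressionClosed K T) (W : Submodule K V) [Fintype W] (x : V) :
    IsProgressionClosed K ({k : W | x + k ∈ T} : Finset W) := by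
  intro a h h1 h2 h3 i
  simp only [mem_filter, mem_univ, true_and, Submodule.coe_add, Submodule.coe_smul,
    ← add_assoc] at h1 h2 h3 ⊢
  exact hT h1 h2 h3 i

theorem card_eq_card_mul_card_ker [Fintype K] [Fintype V] {f : V →ₗ[K] K}
    [Fintype (LinearMap.ker f)] (hf : Function.Surjective f) :
    Fintype.card V = Fintype.card K * Fintype.card (LinearMap.ker f) := by
  rw [Module.card_eq_pow_finrank (K := K) (V := V),
    Module.card_eq_pow_finrank (K := K) (V := LinearMap.ker f),
    ← LinearMap.finrank_range_add_finrank_ker f, LinearMap.range_eq_top.2 hf, finrank_top,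
    Module.finrank_self, pow_add, pow_one]

theorem card_fiber_le_card_translate_ker [DecidableEq K] [DecidableEq V] {f : V →ₗ[K] K}
    [Fintype (LinearMap.ker f)] (T : Finset V) (x : V) :
    #{y ∈ T | f y = f x} ≤ #{k : LinearMap.ker f | x + k ∈ T} := by
  refine card_le_card_of_surjOn (fun k ↦ x + k) fun y hy ↦ ?_
  obtain ⟨hyT, hyf⟩ : y ∈ T ∧ f y = f x := by simpa using hy
  exact ⟨⟨y - x, by simp [hyf]⟩, by simpa using hyT, by simp⟩

variable [Fintype K] [DecidableEq K] {T : Finset V} {r : ℕ}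

theorem IsProgressionClosed.card_line_le [DecidableEq V] (hT : IsProgressionClosed K T)
    (hr : addRothNumber (univ : Finset K) ≤ r) {w v : V} (hw : ∃ i : K, w + i • v ∉ T) :
    #{i : K | w + i • v ∈ T} ≤ r := by
  refine (ThreeAPFree.le_addRothNumber (fun i hi j hj k hk hijk ↦ ?_) (subset_univ _)).trans hr
  obtain ⟨l, hl⟩ := hw
  simp only [coe_filter, mem_univ, true_and, Set.mem_ofPred_eq] at hi hj hk
  by_contra hij
  have hne : j - i ≠ 0 := sub_ne_zero.2 (Ne.symm hij)
  refine hl ?_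
  convert hT hi (h := (j - i) • v) (by convert hj using 1; module) ?_ ((l - i) / (j - i)) using 1
  · rw [smul_smul, div_mul_cancel₀ _ hne]
    module
  · convert hk using 1
    rw [eq_sub_of_add_eq' hijk]
    module

variable [Fintype V]

-- Every line through a point outside `T` meets `T` in at most `r` points.
theorem IsProgressionClosed.pred_card_mul_card_le (hT : IsProgressionClosed K T)
    (hr : addRothNumber (univ : Finset K) ≤ r) (hne : T ≠ univ) :
    (Fintype.card K - 1) * #T ≤ r * (Fintype.card V - 1) := by
  classical
  obtain ⟨w, hw⟩ : ∃ w, w ∉ T := by simpa [eq_univ_iff_forall] using hne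
  have card_scaled (i : K) (hi : i ∈ univ.erase 0) : #{v ∈ univ.erase 0 | w + i • v ∈ T} = #T := by
    have hi0 : i ≠ 0 := ne_of_mem_erase hi
    refine card_nbij' (fun v ↦ w + i • v) (fun x ↦ i⁻¹ • (x - w)) ?_ ?_ ?_ ?_
    · intro v hv
      exact (mem_filter.1 hv).2
    · intro x hx
      have hxw : x - w ≠ 0 := sub_ne_zero.2 fun h ↦ hw (h ▸ hx)
      simpa [hi0, hxw] using hx
    · intro v _
      simp [hi0]
    · intro x _
      simp [hi0]
  calc (Fintype.card K - 1) * #T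
    _ = ∑ i ∈ univ.erase (0 : K), #{v ∈ univ.erase 0 | w + i • v ∈ T} := by
        rw [sum_const_nat card_scaled, card_erase_of_mem (mem_univ _), card_univ]
    _ = ∑ v ∈ univ.erase (0 : V), #{i ∈ univ.erase (0 : K) | w + i • v ∈ T} :=
        sum_card_bipartiteAbove_eq_sum_card_bipartiteBelow _
    _ ≤ ∑ _v ∈ univ.erase (0 : V), r := sum_le_sum fun _ _ ↦
        (card_le_card (filter_subset_filter _ (erase_subset _ _))).trans
          (hT.card_line_le hr ⟨0, by simpa using hw⟩)
    _ = r * (Fintype.card V - 1) := by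
        rw [sum_const, card_erase_of_mem (mem_univ _), card_univ, smul_eq_mul, mul_comm]

-- Lines of distinct slopes meet in at most one point, so the `i`-th line adds at least `q - i`.
theorem sum_card_sub_le_card_biUnion_lines (c : K → K) (M : Finset K) :
    ∑ i ∈ range #M, (Fintype.card K - i) ≤
      #(M.biUnion fun m ↦ univ.image fun x ↦ (x, m * x + c m)) := by
  induction M using Finset.induction_on with
  | empty => simp
  | insert m M hm ih =>
    rw [biUnion_insert, card_insert_of_notMem hm, sum_range_succ]
    set U := M.biUnion fun m ↦ univ.image fun x ↦ (x, m * x + c m)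
    set L := univ.image fun x ↦ (x, m * x + c m)
    have card_line : #L = Fintype.card K :=
      card_image_of_injective _ fun _ _ h ↦ (Prod.mk.inj h).1
    have card_inter : #(L ∩ U) ≤ #M := by
      let meet (m' : K) : K := (c m' - c m) / (m - m')
      have hsub : L ∩ U ⊆ M.image fun m' ↦ (meet m', m * meet m' + c m) := by
        intro x hx
        simp only [L, U, mem_inter, mem_image, mem_univ, true_and, mem_biUnion] at hx ⊢
        obtain ⟨⟨y, rfl⟩, m', hm', z, hz⟩ := hx
        obtain ⟨rfl, hz⟩ := Prod.mk.inj hz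
        have hmm' : m - m' ≠ 0 := sub_ne_zero.2 fun h ↦ hm (h ▸ hm')
        have hmeet : meet m' = z := by
          rw [div_eq_iff hmm']
          linear_combination hz
        exact ⟨m', hm', by rw [hmeet]⟩
      exact (card_le_card hsub).trans card_image_le
    have := card_union_add_card_inter L U
    have := card_union_le L U
    have : #U ≤ #(L ∪ U) := card_le_card subset_union_right
    omega

theorem IsProgressionClosed.exists_slope {T : Finset (K × K)} (hT : IsProgressionClosed K T)
    (hr : addRothNumber (univ : Finset K) ≤ r) (hrK : 2 * r < Fintype.card K) (hne : T ≠ univ) :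
    ∃ m : K, ∀ c : K, ∃ x, (x, m * x + c) ∉ T := by
  set q := Fintype.card K with hq
  by_contra! hcon
  choose c hc using hcon
  have hunion : (univ.biUnion fun m ↦ univ.image fun x ↦ (x, m * x + c m)) ⊆ T := by
    simp only [biUnion_subset, image_subset_iff]
    exact fun m _ x _ ↦ hc m x
  have lower : q * (q + 1) ≤ 2 * #T := by
    have hsum := (sum_card_sub_le_card_biUnion_lines c univ).trans (card_le_card hunion)
    rw [card_univ, ← hq, ← sum_range_reflect, sum_congr rfl (g := fun i ↦ i + 1) fun i hi ↦ by
      have := mem_range.1 hi; omega] at hsum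
    have gauss := sum_range_id_mul_two (q + 1)
    rw [sum_range_succ'] at gauss
    simp only [add_tsub_cancel_right, add_zero] at gauss
    linarith
  have upper : #T ≤ r * (q + 1) := by
    have h := hT.pred_card_mul_card_le hr hne
    have hq1 : 0 < q - 1 := Nat.sub_pos_of_lt Fintype.one_lt_card
    have hsq : q ^ 2 - 1 = (q + 1) * (q - 1) := Nat.sq_sub_sq q 1
    rw [Fintype.card_prod, ← hq, ← sq, hsq] at h
    exact Nat.le_of_mul_le_mul_left (by linarith) hq1
  nlinarith

-- The points of a plane quotient whose fibres lie in `T` form a progression-closed set.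
theorem IsProgressionClosed.exists_linearMap_fiber_not_subset (hT : IsProgressionClosed K T)
    (hr : addRothNumber (univ : Finset K) ≤ r) (hrK : 2 * r < Fintype.card K) (hne : T ≠ univ)
    (hV : 2 ≤ Module.finrank K V) :
    ∃ f : V →ₗ[K] K, Function.Surjective f ∧ ∀ c, ∃ x, f x = c ∧ x ∉ T := by
  classical
  obtain ⟨F, hF⟩ : ∃ F : V →ₗ[K] K × K, Function.Surjective F := by
    let b := Module.finBasis K V
    let i : Fin (Module.finrank K V) := ⟨0, by omega⟩
    let j : Fin (Module.finrank K V) := ⟨1, by omega⟩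
    have hij : i ≠ j := by simp [i, j]
    refine ⟨(b.coord i).prod (b.coord j), fun ⟨x, y⟩ ↦ ⟨x • b i + y • b j, ?_⟩⟩
    simp [hij, hij.symm]
  let T' : Finset (K × K) := {u | ∀ x, F x = u → x ∈ T}
  have mem_T' {u : K × K} : u ∈ T' ↔ ∀ x, F x = u → x ∈ T := by simp [T']
  have hT' : IsProgressionClosed K T' := by
    intro a h h1 h2 h3 i
    obtain ⟨y, rfl⟩ := hF h
    rw [mem_T'] at *
    intro x hx
    simpa using hT (h := y) (h1 (x - i • y) (by simp [hx])) (h2 _ (by simp [hx]))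
      (h3 _ (by simp [hx])) i
  have hne' : T' ≠ univ := fun h ↦ hne <| eq_univ_of_forall fun x ↦
    mem_T'.1 (h ▸ mem_univ (F x)) x rfl
  obtain ⟨m, hm⟩ := hT'.exists_slope hr hrK hne'
  let f : V →ₗ[K] K := (LinearMap.snd K K K - m • LinearMap.fst K K K) ∘ₗ F
  have f_apply (x : V) : f x = (F x).2 - m * (F x).1 := by simp [f]
  refine ⟨f, fun c ↦ ?_, fun c ↦ ?_⟩
  · obtain ⟨x, hx⟩ := hF (0, c)
    exact ⟨x, by simp [f_apply, hx]⟩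
  · obtain ⟨y, hy⟩ := hm c
    obtain ⟨x, hx, hxT⟩ : ∃ x, F x = (y, m * y + c) ∧ x ∉ T := by simpa [mem_T'] using hy
    exact ⟨x, by simp [f_apply, hx], hxT⟩

theorem IsProgressionClosed.card_mul_card_le_of_finrank_eq_one (hT : IsProgressionClosed K T)
    (hr : addRothNumber (univ : Finset K) ≤ r) (hne : T ≠ univ) (hV : Module.finrank K V = 1) :
    Fintype.card K * #T ≤ r * Fintype.card V := by
  classical
  obtain ⟨v, -, hv⟩ := finrank_eq_one_iff'.1 hV
  obtain ⟨w, hw⟩ : ∃ w, w ∉ T := by simpa [eq_univ_iff_forall] using hne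
  have hcard : Fintype.card V = Fintype.card K := by
    rw [Module.card_eq_pow_finrank (K := K), hV, pow_one]
  have hT_le : #T ≤ #{i : K | 0 + i • v ∈ T} := by
    refine card_le_card_of_surjOn (fun i ↦ i • v) fun x hx ↦ ?_
    obtain ⟨i, rfl⟩ := hv x
    exact ⟨i, by simpa using hx, rfl⟩
  have hline := hT.card_line_le (w := 0) (v := v) hr ((hv w).imp fun i hi ↦ by simpa [hi] using hw)
  rw [hcard, mul_comm]
  exact Nat.mul_le_mul_right _ (hT_le.trans hline)

theorem IsProgressionClosed.card_mul_card_le (hT : IsProgressionClosed K T)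
    (hr : addRothNumber (univ : Finset K) ≤ r) (hrK : 2 * r < Fintype.card K) (hne : T ≠ univ) :
    Fintype.card K * #T ≤ r * Fintype.card V := by
  classical
  induction hd : Module.finrank K V using Nat.strong_induction_on generalizing V with
  | h d ih
  obtain hd0 | hd1 | hd2 : d = 0 ∨ d = 1 ∨ 2 ≤ d := by omega
  · have : Subsingleton V := Module.finrank_zero_iff.1 (hd.trans hd0)
    have hT_empty : T = ∅ := by
      by_contra h
      obtain ⟨x, hx⟩ := nonempty_iff_ne_empty.2 h
      exact hne (eq_univ_of_forall fun y ↦ Subsingleton.elim x y ▸ hx)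
    simp [hT_empty]
  · exact hT.card_mul_card_le_of_finrank_eq_one hr hne (hd.trans hd1)
  obtain ⟨f, hf, hfiber⟩ := hT.exists_linearMap_fiber_not_subset hr hrK hne (hd ▸ hd2)
  have hker : Module.finrank K (LinearMap.ker f) < d := by
    rw [← hd, ← LinearMap.finrank_range_add_finrank_ker f, LinearMap.range_eq_top.2 hf, finrank_top,
      Module.finrank_self]
    omega
  let _ : Fintype (LinearMap.ker f) := Fintype.ofFinite _
  have card_fiber (c : K) :
      Fintype.card K * #{x ∈ T | f x = c} ≤ r * Fintype.card (LinearMap.ker f) := by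
    obtain ⟨x, rfl, hxT⟩ := hfiber c
    have hne' : ({k | x + k ∈ T} : Finset (LinearMap.ker f)) ≠ univ := fun h ↦ hxT <| by
      simpa using h.ge (mem_univ (0 : LinearMap.ker f))
    exact (Nat.mul_le_mul_left _ (card_fiber_le_card_translate_ker T x)).trans
      (ih _ hker (hT.translate_subtype _ x) hne' rfl)
  calc Fintype.card K * #T = ∑ c : K, Fintype.card K * #{x ∈ T | f x = c} := by
        rw [card_eq_sum_card_fiberwise fun x _ ↦ mem_univ (f x), mul_sum]
    _ ≤ ∑ _c : K, r * Fintype.card (LinearMap.ker f) := sum_le_sum fun c _ ↦ card_fiber c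
    _ = r * Fintype.card V := by
        rw [sum_const, card_univ, card_eq_card_mul_card_ker hf, smul_eq_mul, mul_left_comm]

end ProgressionClosed

section CubeNorm

variable {G : Type*} [Group G]

/-- The norm `φ²(k) φ(k) k` of `k` along an endomorphism `φ`. For `φ` the conjugation
`k ↦ t⁻¹ k t` it measures how the cube of `t` changes when `t` is multiplied by `k`. -/
def cubeNorm (φ : G →* G) (k : G) : G := φ (φ k) * φ k * k

theorem mul_pow_three_eq_mul_cubeNorm (t k : G) :
    (t * k) ^ 3 = t ^ 3 * cubeNorm (MulAut.conj t⁻¹).toMonoidHom k := by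
  simp only [cubeNorm, MulEquiv.toMonoidHom_eq_coe, MonoidHom.coe_coe, MulAut.conj_apply,
    pow_succ, pow_zero]
  group

theorem cubeNorm_conj_eq_one {t k : G} (ht : t ^ 3 = 1) (htk : (t * k) ^ 3 = 1) :
    cubeNorm (MulAut.conj t⁻¹).toMonoidHom k = 1 := by
  rwa [mul_pow_three_eq_mul_cubeNorm, ht, one_mul] at htk

variable {φ : G →* G} {a b : G}

theorem map_map_eq_of_cubeNorm_eq_one (ha : cubeNorm φ a = 1) : φ (φ a) = a⁻¹ * (φ a)⁻¹ := by
  rw [cubeNorm, mul_assoc] at ha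
  rw [eq_inv_of_mul_eq_one_left ha, mul_inv_rev]

theorem commute_map_of_cubeNorm_eq_one (hab : Commute a b) (ha : cubeNorm φ a = 1)
    (hb : cubeNorm φ b = 1) (hba : cubeNorm φ (b * a) = 1) : Commute (φ b) a := by
  have hnorm : cubeNorm φ (b * a) = b⁻¹ * ((φ b)⁻¹ * a⁻¹ * φ b * a) * b := calc
    cubeNorm φ (b * a) = b⁻¹ * (φ b)⁻¹ * (a⁻¹ * (φ a)⁻¹) * φ (b * a) * (b * a) := by
      rw [cubeNorm, map_mul φ, map_mul φ, map_map_eq_of_cubeNorm_eq_one ha,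
        map_map_eq_of_cubeNorm_eq_one hb]
    _ = _ := by
      rw [← hab.eq, map_mul φ]
      group
  have hcomm : (φ b)⁻¹ * a⁻¹ * φ b * a = 1 := by
    rw [hba] at hnorm
    simpa [mul_assoc, eq_comm] using congrArg (fun z ↦ b * z * b⁻¹) hnorm
  calc φ b * a = a * φ b * ((φ b)⁻¹ * a⁻¹ * φ b * a) := by group
    _ = a * φ b := by rw [hcomm, mul_one]

theorem cubeNorm_pow_eq_one {h : G} (h1 : cubeNorm φ h = 1) (h2 : cubeNorm φ (h * h) = 1) (n : ℕ) :
    cubeNorm φ (h ^ n) = 1 := by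
  have hcomm := commute_map_of_cubeNorm_eq_one (Commute.refl h) h1 h1 h2
  rw [cubeNorm, map_pow, map_pow, map_map_eq_of_cubeNorm_eq_one h1, mul_assoc, ← hcomm.mul_pow,
    ← mul_inv_rev, inv_pow, inv_mul_cancel]

theorem mul_pow_pow_three_eq_one {t h : G} (h0 : t ^ 3 = 1) (h1 : (t * h) ^ 3 = 1)
    (h2 : (t * h * h) ^ 3 = 1) (n : ℕ) : (t * h ^ n) ^ 3 = 1 := by
  rw [mul_assoc] at h2
  rw [mul_pow_three_eq_mul_cubeNorm, h0, one_mul,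
    cubeNorm_pow_eq_one (cubeNorm_conj_eq_one h0 h1) (cubeNorm_conj_eq_one h0 h2)]

end CubeNorm

section ElementaryAbelian

variable {G : Type*} [Group G]

/-- An elementary abelian `p`-subgroup: a commutative subgroup of exponent dividing `p`. The trivial
subgroup is allowed. -/
structure IsElementaryAbelian (p : ℕ) (A : Subgroup G) : Prop where
  isMulCommutative : IsMulCommutative A
  pow_eq_one : ∀ a ∈ A, a ^ p = 1

variable {p : ℕ} {A : Subgroup G}

theorem IsElementaryAbelian.commute (hA : IsElementaryAbelian p A) {a b : G} (ha : a ∈ A)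
    (hb : b ∈ A) : Commute a b :=
  have := hA.isMulCommutative
  setLike_mul_comm ha hb

theorem IsElementaryAbelian.le_centralizer (hA : IsElementaryAbelian p A) :
    A ≤ Subgroup.centralizer A :=
  have := hA.isMulCommutative
  Subgroup.le_centralizer A

theorem IsElementaryAbelian.isPGroup (hA : IsElementaryAbelian p A) : IsPGroup p A :=
  fun a ↦ ⟨1, by simpa [Subtype.ext_iff] using hA.pow_eq_one a a.2⟩

theorem IsElementaryAbelian.pow_injective (hA : IsElementaryAbelian p A) {n : ℕ}
    (hn : p.Coprime n) : Function.Injective fun a : A ↦ a ^ n :=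
  (hA.isPGroup.powEquiv hn).injective

theorem IsElementaryAbelian.eq_bot_of_pow_eq_one (hA : IsElementaryAbelian p A) {n : ℕ}
    (hn : p.Coprime n) (h : ∀ a ∈ A, a ^ n = 1) : A = ⊥ :=
  (Subgroup.eq_bot_iff_forall A).2 fun a ha ↦ congrArg Subtype.val <|
    hA.pow_injective hn (a₁ := ⟨a, ha⟩) (a₂ := 1) <| by simpa [Subtype.ext_iff] using h a ha

theorem IsElementaryAbelian.orderOf_eq [Fact p.Prime] (hA : IsElementaryAbelian p A) {a : G}
    (ha : a ∈ A) (ha1 : a ≠ 1) : orderOf a = p :=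
  orderOf_eq_prime (hA.pow_eq_one a ha) ha1

theorem IsElementaryAbelian.le_index [Finite A] [hp : Fact p.Prime] (hA : IsElementaryAbelian p A)
    {S : Subgroup A} (hS : S ≠ ⊤) : p ≤ S.index := by
  obtain ⟨n, hn⟩ := hA.isPGroup.index S
  have hn0 : n ≠ 0 := by
    rintro rfl
    exact hS (Subgroup.index_eq_one.1 (by simpa using hn))
  exact hn ▸ Nat.le_self_pow hn0 p

theorem IsElementaryAbelian.dvd_card [Finite A] [Fact p.Prime] (hA : IsElementaryAbelian p A)
    (hA1 : A ≠ ⊥) : p ∣ Nat.card A :=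
  hA.isPGroup.card_eq_or_dvd.resolve_left (mt Subgroup.card_eq_one.1 hA1)

open scoped IsMulCommutative in
theorem IsElementaryAbelian.card_mul_card_pow_three_eq_one_le [DecidableEq G] [Fintype A]
    [Fact p.Prime] (hA : IsElementaryAbelian p A) {r : ℕ}
    (hr : addRothNumber (univ : Finset (ZMod p)) ≤ r) (hrp : 2 * r < p) {x : G}
    (hx : ∃ a ∈ A, (x * a) ^ 3 ≠ 1) :
    p * #{a : A | (x * a) ^ 3 = 1} ≤ r * Fintype.card A := by
  have := hA.isMulCommutative
  let _ : Module (ZMod p) (Additive A) := AddCommGroup.zmodModule fun a ↦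
    congrArg Additive.ofMul (Subtype.ext (hA.pow_eq_one _ a.toMul.2) : a.toMul ^ p = 1)
  let T : Finset (Additive A) := {a | (x * (a.toMul : A)) ^ 3 = 1}
  have hT : IsProgressionClosed (ZMod p) T := by
    intro a h h0 h1 h2 i
    have hi : i • h = i.val • h := by
      rw [← Nat.cast_smul_eq_nsmul (ZMod p), ZMod.natCast_zmod_val]
    simp only [T, mem_filter, mem_univ, true_and, toMul_add, Subgroup.coe_mul, ← mul_assoc] at *
    rw [hi, toMul_nsmul, Subgroup.coe_pow]
    exact mul_pow_pow_three_eq_one h0 h1 h2 _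
  have hT' : T ≠ univ := by
    obtain ⟨a, ha, hxa⟩ := hx
    exact fun h ↦ hxa (mem_filter.1 (h.ge (mem_univ (Additive.ofMul (⟨a, ha⟩ : A))))).2
  have hcard := hT.card_mul_card_le hr (by rwa [ZMod.card]) hT'
  have hcard_T : #T = #{a : A | (x * a) ^ 3 = 1} :=
    card_equiv Additive.toMul fun a ↦ by simp [T]
  rwa [ZMod.card, hcard_T, Fintype.card_additive] at hcard

end ElementaryAbelian

section CosetOrderSum

variable {G : Type*} [Group G] {p r : ℕ} {A : Subgroup G} {x : G}

/-- The sum of the orders of the elements of the coset `x A`. -/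
noncomputable def cosetOrderSum (A : Subgroup G) [Fintype A] (x : G) : ℕ :=
  ∑ a : A, orderOf (x * a)

/-- The elements `x` whose conjugation `a ↦ x⁻¹ a x` agrees with `φ` on `A`. For `φ = Inv.inv` these
are the elements inverting `A`. -/
def conjFiber (A : Subgroup G) (φ : G → G) : Set G := {x | ∀ a ∈ A, x⁻¹ * a * x = φ a}

/-- The elements `x` such that every element of the coset `x A` has trivial cube. -/
def cubeTrivialCosets (A : Subgroup G) : Set G := {x | ∀ a ∈ A, (x * a) ^ 3 = 1}

theorem sum_cosetOrderSum [Fintype G] (A : Subgroup G) [Fintype A] :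
    ∑ x : G, cosetOrderSum A x = Fintype.card A * ∑ x : G, orderOf x := by
  have sum_translate (a : A) : ∑ x : G, orderOf (x * a) = ∑ x : G, orderOf x :=
    Equiv.sum_comp (Equiv.mulRight (a : G)) orderOf
  simp only [cosetOrderSum]
  rw [sum_comm, sum_congr rfl fun a _ ↦ sum_translate a, sum_const, card_univ, smul_eq_mul]

theorem cosetOrderSum_mul [Fintype A] {c : G} (hc : c ∈ A) :
    cosetOrderSum A (x * c) = cosetOrderSum A x := by
  simp only [cosetOrderSum]
  rw [← Equiv.sum_comp (Equiv.mulLeft (⟨c, hc⟩ : A)) fun a : A ↦ orderOf (x * (a : G))]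
  simp [mul_assoc]

theorem mul_card_le_cosetOrderSum [Fintype A] {n : ℕ} (h : ∀ a ∈ A, n ≤ orderOf (x * a)) :
    n * Fintype.card A ≤ cosetOrderSum A x := by
  rw [mul_comm, ← smul_eq_mul]
  exact card_nsmul_le_sum univ _ n fun a _ ↦ h a a.2

theorem IsElementaryAbelian.mul_ne_one (hA : IsElementaryAbelian p A)
    (hx : x ∉ Subgroup.centralizer A) {a : G} (ha : a ∈ A) : x * a ≠ 1 :=
  fun h ↦ hx (eq_inv_of_mul_eq_one_left h ▸ hA.le_centralizer (A.inv_mem ha))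

theorem IsElementaryAbelian.mul_mem_conjFiber_iff (hA : IsElementaryAbelian p A) {φ : G → G}
    (hφ : ∀ a ∈ A, φ a ∈ A) {c : G} (hc : c ∈ A) : x * c ∈ conjFiber A φ ↔ x ∈ conjFiber A φ := by
  refine forall₂_congr fun a ha ↦ ?_
  have hconj : (x * c)⁻¹ * a * (x * c) = c⁻¹ * (x⁻¹ * a * x) * c := by group
  rw [hconj, mul_assoc, inv_mul_eq_iff_eq_mul, (hA.commute hc (hφ a ha)).eq, mul_left_inj]

theorem IsElementaryAbelian.three_mul_card_le_cosetOrderSum [Fintype A]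
    (hA : IsElementaryAbelian p A) (hx : x ∉ Subgroup.centralizer A)
    (hF : x ∈ cubeTrivialCosets A) : 3 * Fintype.card A ≤ cosetOrderSum A x :=
  mul_card_le_cosetOrderSum fun a ha ↦ (orderOf_eq_prime (hF a ha) (hA.mul_ne_one hx ha)).ge

theorem orderOf_mul_sq {a : G} (hx : x ^ 2 = 1) (hxa : (x * a) ^ 3 = 1) :
    orderOf (x * a ^ 2) = orderOf a := by
  have hconj : x * a ^ 2 = MulAut.conj (x * a)⁻¹ a⁻¹ := calc
    x * a ^ 2 = (x * a) * x ^ 2 * a := by rw [hx, mul_one, mul_assoc, ← sq]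
    _ = (x * a) ^ 2 * a⁻¹ * (x * a) := by simp only [sq]; group
    _ = MulAut.conj (x * a)⁻¹ a⁻¹ := by
      rw [MulAut.conj_apply, inv_inv, eq_inv_of_mul_eq_one_left ((pow_succ _ 2).symm.trans hxa)]
  rw [hconj, MulEquiv.orderOf_eq, orderOf_inv]

theorem IsElementaryAbelian.orderOf_mul_sq_eq [Fact p.Prime] (hA : IsElementaryAbelian p A)
    (hC : x ∉ Subgroup.centralizer A) (hx : x ^ 2 = 1) {a : G} (ha : a ∈ A)
    (hxa : (x * a) ^ 3 = 1) : orderOf (x * a ^ 2) = p := by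
  have ha1 : a ≠ 1 := fun h ↦ hA.mul_ne_one hC A.one_mem <| by
    rwa [h, mul_one, pow_succ, hx, one_mul, ← mul_one x] at hxa
  rw [orderOf_mul_sq hx hxa, hA.orderOf_eq ha ha1]

theorem IsElementaryAbelian.card_not_dvd_orderOf_mul_le_one [Fintype A] [hp : Fact p.Prime]
    (hA : IsElementaryAbelian p A) (hx : x ∈ Subgroup.centralizer A) :
    #{a : A | ¬ p ∣ orderOf (x * a)} ≤ 1 := by
  refine card_le_one.2 fun a ha b hb ↦ ?_
  simp only [mem_filter, mem_univ, true_and, ← hp.out.coprime_iff_not_dvd] at ha hb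
  have mul_pow (c : A) (n : ℕ) : (x * c) ^ n = x ^ n * (c : G) ^ n :=
    Commute.mul_pow (Subgroup.mem_centralizer_iff.1 hx c c.2).symm n
  let n := orderOf (x * (a : G)) * orderOf (x * (b : G))
  have hab : (x * (a : G)) ^ n = (x * (b : G)) ^ n := by
    rw [pow_mul, pow_orderOf_eq_one, one_pow, pow_mul', pow_orderOf_eq_one, one_pow]
  rw [mul_pow, mul_pow, mul_right_inj] at hab
  exact hA.pow_injective (ha.mul_right hb) (Subtype.ext hab)

open scoped IsMulCommutative in
theorem IsElementaryAbelian.mul_card_inverted_le [DecidableEq G] [Fintype A] [Fact p.Prime]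
    (hA : IsElementaryAbelian p A) (hI : x ∉ conjFiber A Inv.inv) :
    p * #{a : A | x⁻¹ * a * x = (a : G)⁻¹} ≤ Fintype.card A := by
  have := hA.isMulCommutative
  let S : Subgroup A := MonoidHom.eqLocus ((MulAut.conj x⁻¹).toMonoidHom.comp A.subtype)
    (A.subtype.comp invMonoidHom)
  have mem_S {a : A} : a ∈ S ↔ x⁻¹ * a * x = (a : G)⁻¹ := by
    change x⁻¹ * (a : G) * x⁻¹⁻¹ = _ ↔ _
    rw [inv_inv]
    rfl
  have hS : S ≠ ⊤ := fun h ↦ hI fun a ha ↦ mem_S.1 (h ▸ Subgroup.mem_top (⟨a, ha⟩ : A))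
  have hcard : #{a : A | x⁻¹ * a * x = (a : G)⁻¹} = Nat.card S := by
    rw [← Fintype.card_subtype, ← Nat.card_eq_fintype_card]
    exact Nat.card_congr (Equiv.subtypeEquivRight fun a ↦ mem_S.symm)
  rw [hcard, ← Nat.card_eq_fintype_card, ← S.card_mul_index, mul_comm]
  exact Nat.mul_le_mul_left _ (hA.le_index hS)

section Finite

variable [Finite G]

theorem two_le_orderOf {y : G} (h1 : y ≠ 1) : 2 ≤ orderOf y := by
  have := orderOf_pos y
  have := mt orderOf_eq_one_iff.1 h1
  omega

theorem four_le_orderOf {y : G} (h1 : y ≠ 1) (h2 : y ^ 2 ≠ 1) (h3 : y ^ 3 ≠ 1) :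
    4 ≤ orderOf y := by
  have ne_two : orderOf y ≠ 2 := fun h ↦ h2 (h ▸ pow_orderOf_eq_one y)
  have ne_three : orderOf y ≠ 3 := fun h ↦ h3 (h ▸ pow_orderOf_eq_one y)
  have := two_le_orderOf h1
  omega

theorem IsElementaryAbelian.mul_card_add_one_le_cosetOrderSum_add [Fintype A] [hp : Fact p.Prime]
    (hA : IsElementaryAbelian p A) (hx : x ∈ Subgroup.centralizer A) :
    p * Fintype.card A + 1 ≤ cosetOrderSum A x + p := by
  have pointwise (a : A) : p ≤ orderOf (x * a) + if ¬ p ∣ orderOf (x * a) then p - 1 else 0 := by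
    have hpos := orderOf_pos (x * (a : G))
    by_cases h : p ∣ orderOf (x * (a : G))
    · simpa [h] using Nat.le_of_dvd hpos h
    · rw [if_pos h]
      omega
  have hsum := sum_le_sum (s := univ) fun a _ ↦ pointwise a
  rw [sum_const, sum_add_distrib, ← sum_filter, sum_const, card_univ, smul_eq_mul, smul_eq_mul,
    mul_comm] at hsum
  have hcard := Nat.mul_le_mul_right (p - 1) (hA.card_not_dvd_orderOf_mul_le_one hx)
  have hp0 := hp.out.pos
  rw [cosetOrderSum]
  omega

theorem IsElementaryAbelian.two_mul_card_le_cosetOrderSum [Fintype A]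
    (hA : IsElementaryAbelian p A) (hx : x ∉ Subgroup.centralizer A) :
    2 * Fintype.card A ≤ cosetOrderSum A x :=
  mul_card_le_cosetOrderSum fun _ ha ↦ two_le_orderOf (hA.mul_ne_one hx ha)

theorem IsElementaryAbelian.le_cosetOrderSum_of_sq_ne_one [Fintype A] [Fact p.Prime]
    (hA : IsElementaryAbelian p A) (hr : addRothNumber (univ : Finset (ZMod p)) ≤ r)
    (hrp : 2 * r < p) (hC : x ∉ Subgroup.centralizer A) (hF : x ∉ cubeTrivialCosets A)
    (hsq : ∀ a ∈ A, (x * a) ^ 2 ≠ 1) :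
    4 * p * Fintype.card A ≤ p * cosetOrderSum A x + r * Fintype.card A := by
  classical
  have hcube := hA.card_mul_card_pow_three_eq_one_le hr hrp (x := x)
    (by simpa [cubeTrivialCosets] using hF)
  have pointwise (a : A) : 4 ≤ orderOf (x * a) + if (x * (a : G)) ^ 3 = 1 then 1 else 0 := by
    have hne := hA.mul_ne_one hC a.2
    split_ifs with h
    · exact Nat.succ_le_succ (orderOf_eq_prime h hne).ge
    · exact four_le_orderOf hne (hsq a a.2) h
  have hsum := sum_le_sum (s := univ) fun a _ ↦ pointwise a
  rw [sum_const, sum_add_distrib, sum_boole, card_univ, smul_eq_mul, Nat.cast_id] at hsum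
  rw [cosetOrderSum]
  nlinarith

-- Squaring sends the order-three elements of the coset `x A` to elements of order `p ≥ 5`, which
-- pays for the former; only the involutions are lost.
theorem IsElementaryAbelian.le_cosetOrderSum_of_sq_eq_one [Fintype A] [hp : Fact p.Prime]
    (hA : IsElementaryAbelian p A) (hp5 : 5 ≤ p) (hC : x ∉ Subgroup.centralizer A)
    (hI : x ∉ conjFiber A Inv.inv) (hx : x ^ 2 = 1) :
    4 * p * Fintype.card A ≤ p * cosetOrderSum A x + 2 * Fintype.card A := by
  classical
  have hinv := hA.mul_card_inverted_le hI
  have sq_eq_one_iff (a : A) : (x * (a : G)) ^ 2 = 1 ↔ x⁻¹ * a * x = (a : G)⁻¹ := by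
    rw [inv_eq_of_mul_eq_one_left ((sq x).symm.trans hx), sq, ← mul_assoc, mul_eq_one_iff_eq_inv]
  simp only [← sq_eq_one_iff] at hinv
  let T : Finset A := {a | (x * (a : G)) ^ 3 = 1}
  have hT : #(T.image (· ^ 2)) = #T := card_image_of_injective _ <| hA.pow_injective <|
    (Nat.coprime_primes hp.out Nat.prime_two).2 (by omega)
  have five_le (b : A) (hb : b ∈ T.image (· ^ 2)) : 5 ≤ orderOf (x * (b : G)) := by
    obtain ⟨a, ha, rfl⟩ := mem_image.1 hb
    rwa [Subgroup.coe_pow, hA.orderOf_mul_sq_eq hC hx a.2 (mem_filter.1 ha).2]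
  have pointwise (a : A) : 4 + (if a ∈ T.image (· ^ 2) then 1 else 0) ≤ orderOf (x * (a : G)) +
      (if (x * (a : G)) ^ 2 = 1 then 2 else 0) + if (x * (a : G)) ^ 3 = 1 then 1 else 0 := by
    have hne := hA.mul_ne_one hC a.2
    by_cases ha : a ∈ T.image (· ^ 2)
    · have := five_le a ha
      rw [if_pos ha]
      omega
    rw [if_neg ha]
    split_ifs with h2 h3 h3
    · have := two_le_orderOf hne
      omega
    · exact Nat.add_le_add_right (two_le_orderOf hne) 2
    · exact Nat.succ_le_succ (orderOf_eq_prime h3 hne).ge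
    · exact four_le_orderOf hne h2 h3
  have hsum := sum_le_sum (s := univ) fun a _ ↦ pointwise a
  rw [sum_add_distrib, sum_add_distrib, sum_add_distrib, sum_boole, sum_boole, ← sum_filter,
    sum_const, sum_const, filter_univ_mem, hT] at hsum
  simp only [smul_eq_mul, card_univ, Nat.cast_id] at hsum
  rw [cosetOrderSum]
  nlinarith

theorem IsElementaryAbelian.le_cosetOrderSum [Fintype A] [Fact p.Prime]
    (hA : IsElementaryAbelian p A) (hr : addRothNumber (univ : Finset (ZMod p)) ≤ r)
    (hr2 : 2 ≤ r) (hrp : 2 * r < p) (hC : x ∉ Subgroup.centralizer A)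
    (hI : x ∉ conjFiber A Inv.inv) (hF : x ∉ cubeTrivialCosets A) :
    4 * p * Fintype.card A ≤ p * cosetOrderSum A x + r * Fintype.card A := by
  by_cases hsq : ∀ a ∈ A, (x * a) ^ 2 ≠ 1
  · exact hA.le_cosetOrderSum_of_sq_ne_one hr hrp hC hF hsq
  push Not at hsq
  obtain ⟨c, hc, hc2⟩ := hsq
  have hC' := (Subgroup.mul_mem_cancel_right _ (hA.le_centralizer hc)).not.2 hC
  have hI' := (hA.mul_mem_conjFiber_iff (fun a ↦ A.inv_mem) hc).not.2 hI
  have hbound := hA.le_cosetOrderSum_of_sq_eq_one (by omega) hC' hI' hc2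
  rw [cosetOrderSum_mul hc] at hbound
  exact hbound.trans (Nat.add_le_add_left (Nat.mul_le_mul_right _ hr2) _)

end Finite

end CosetOrderSum

section Counting

variable {G : Type*} [Group G] {p r : ℕ} {A : Subgroup G} {x : G}

theorem sum_indicator_const {ι : Type*} [Fintype ι] (S : Set ι) (c : ℤ) :
    ∑ i, S.indicator (fun _ ↦ c) i = c * S.ncard := by
  classical
  simp only [Set.indicator_apply]
  rw [← sum_filter, sum_const, nsmul_eq_mul, mul_comm, ← Set.ncard_coe_finset, coe_filter_univ,
    Set.ofPred_mem_eq]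

theorem IsElementaryAbelian.weight_le_cosetOrderSum [Finite G] [Fintype A] [hp : Fact p.Prime]
    (hA : IsElementaryAbelian p A) (hA1 : A ≠ ⊥)
    (hr : addRothNumber (univ : Finset (ZMod p)) ≤ r) (hr2 : 2 ≤ r) (hrp : 2 * r < p) (x : G) :
    Fintype.card A * ((4 * p - r : ℤ)
        + (Subgroup.centralizer (A : Set G) : Set G).indicator
            (fun _ ↦ (p ^ 2 - 5 * p + 1 + r : ℤ)) x
        - (conjFiber A Inv.inv).indicator (fun _ ↦ (2 * p - r : ℤ)) x
        - (cubeTrivialCosets A).indicator (fun _ ↦ (p - r : ℤ)) x) ≤ p * cosetOrderSum A x := by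
  have hAp : (p : ℤ) ≤ Fintype.card A := by
    rw [← Nat.card_eq_fintype_card]
    exact_mod_cast Nat.le_of_dvd Nat.card_pos (hA.dvd_card hA1)
  zify at hr2 hrp
  have hI0 : 0 ≤ (conjFiber A Inv.inv).indicator (fun _ ↦ (2 * p - r : ℤ)) x :=
    Set.indicator_nonneg (fun _ _ ↦ by linarith) x
  have hF0 : 0 ≤ (cubeTrivialCosets A).indicator (fun _ ↦ (p - r : ℤ)) x :=
    Set.indicator_nonneg (fun _ _ ↦ by linarith) x
  by_cases hC : x ∈ Subgroup.centralizer (A : Set G)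
  · have hS := hA.mul_card_add_one_le_cosetOrderSum_add hC
    rw [Set.indicator_of_mem (SetLike.mem_coe.2 hC)]
    zify at hS
    nlinarith
  rw [Set.indicator_of_notMem (mt SetLike.mem_coe.1 hC)]
  by_cases hI : x ∈ conjFiber A Inv.inv
  · have hS := hA.two_mul_card_le_cosetOrderSum hC
    rw [Set.indicator_of_mem hI]
    zify at hS
    nlinarith
  rw [Set.indicator_of_notMem hI]
  by_cases hF : x ∈ cubeTrivialCosets A
  · have hS := hA.three_mul_card_le_cosetOrderSum hC hF
    rw [Set.indicator_of_mem hF]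
    zify at hS
    nlinarith
  · have hS := hA.le_cosetOrderSum hr (by exact_mod_cast hr2) (by exact_mod_cast hrp) hC hI hF
    rw [Set.indicator_of_notMem hF]
    zify at hS
    linarith

theorem IsElementaryAbelian.weighted_card_le_sum_orderOf [Fintype G] [hp : Fact p.Prime]
    (hA : IsElementaryAbelian p A) (hA1 : A ≠ ⊥)
    (hr : addRothNumber (univ : Finset (ZMod p)) ≤ r) (hr2 : 2 ≤ r) (hrp : 2 * r < p) :
    (4 * p - r : ℤ) * Fintype.card G
        + (p ^ 2 - 5 * p + 1 + r) * Nat.card (Subgroup.centralizer (A : Set G))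
        - (2 * p - r) * (conjFiber A Inv.inv).ncard - (p - r) * (cubeTrivialCosets A).ncard ≤
      p * ∑ x : G, (orderOf x : ℤ) := by
  have := Fintype.ofFinite A
  have hsum := sum_le_sum (s := univ) fun x _ ↦ hA.weight_le_cosetOrderSum hA1 hr hr2 hrp x
  rw [← mul_sum, ← mul_sum, ← Nat.cast_sum, sum_cosetOrderSum, sum_sub_distrib, sum_sub_distrib,
    sum_add_distrib, sum_indicator_const, sum_indicator_const, sum_indicator_const, sum_const,
    card_univ, nsmul_eq_mul, mul_comm (Fintype.card G : ℤ)] at hsum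
  push_cast at hsum
  refine le_of_mul_le_mul_left (hsum.trans_eq (mul_left_comm _ _ _)) ?_
  exact_mod_cast Fintype.card_pos

theorem mem_centralizer_iff_conj_eq :
    x ∈ Subgroup.centralizer (A : Set G) ↔ ∀ a ∈ A, x⁻¹ * a * x = a :=
  forall₂_congr fun a _ ↦ by rw [mul_assoc, inv_mul_eq_iff_eq_mul]

theorem ncard_conjFiber_le [Finite G] (A : Subgroup G) (φ : G → G) :
    (conjFiber A φ).ncard ≤ Nat.card (Subgroup.centralizer (A : Set G)) := by
  obtain h | ⟨s, hs⟩ := (conjFiber A φ).eq_empty_or_nonempty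
  · simp [h]
  refine Set.ncard_le_ncard_of_injOn (· * s⁻¹) (fun x hx ↦ ?_) (mul_left_injective _).injOn
  refine mem_centralizer_iff_conj_eq.2 fun a ha ↦ ?_
  calc (x * s⁻¹)⁻¹ * a * (x * s⁻¹) = s * (x⁻¹ * a * x) * s⁻¹ := by group
    _ = s * (s⁻¹ * a * s) * s⁻¹ := by rw [hx a ha, hs a ha]
    _ = a := by group

theorem mem_normalizer_of_conj_mem [Finite G] (h : ∀ a ∈ A, x⁻¹ * a * x ∈ A) :
    x ∈ Subgroup.normalizer (A : Set G) :=
  inv_inv x ▸ inv_mem (Subgroup.mem_normalizer_fintype fun a ha ↦ by simpa using h a ha)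

theorem conjFiber_subset_normalizer [Finite G] {φ : G → G} (hφ : ∀ a ∈ A, φ a ∈ A) :
    conjFiber A φ ⊆ Subgroup.normalizer (A : Set G) :=
  fun _ hx ↦ mem_normalizer_of_conj_mem fun a ha ↦ (hx a ha).symm ▸ hφ a ha

theorem isElementaryAbelian_closure {s : Set G} (hcomm : ∀ a ∈ s, ∀ b ∈ s, a * b = b * a)
    (hpow : ∀ a ∈ s, a ^ p = 1) : IsElementaryAbelian p (Subgroup.closure s) := by
  have := Subgroup.isMulCommutative_closure hcomm
  refine ⟨this, fun a ha ↦ ?_⟩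
  induction ha using Subgroup.closure_induction with
  | mem a ha => exact hpow a ha
  | one => exact one_pow p
  | mul a b ha hb ha' hb' =>
    rw [Commute.mul_pow (setLike_mul_comm ha hb), ha', hb', one_mul]
  | inv a _ ha => rw [inv_pow, ha, inv_one]

theorem mem_of_maximal_isElementaryAbelian (hA : Maximal (IsElementaryAbelian p) A)
    (hx : x ^ p = 1) (hxA : x ∈ Subgroup.centralizer A) : x ∈ A := by
  have hclosure : IsElementaryAbelian p (Subgroup.closure (insert x (A : Set G))) := by
    refine isElementaryAbelian_closure ?_ (Set.forall_mem_insert.2 ⟨hx, hA.prop.pow_eq_one⟩)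
    rintro a (rfl | ha) b (rfl | hb)
    · rfl
    · exact (hxA b hb).symm
    · exact hxA a ha
    · exact hA.prop.commute ha hb
  have hle : A ≤ Subgroup.closure (insert x (A : Set G)) :=
    (Set.subset_insert x _).trans Subgroup.subset_closure
  exact hA.le_of_ge hclosure hle (Subgroup.subset_closure (Set.mem_insert x _))

theorem exists_maximal_isElementaryAbelian [Finite G] [hp : Fact p.Prime] (hd : p ∣ Nat.card G) :
    ∃ A : Subgroup G, Maximal (IsElementaryAbelian p) A ∧ A ≠ ⊥ := by
  obtain ⟨g, hg⟩ := exists_prime_orderOf_dvd_card' p hd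
  have hzpowers : IsElementaryAbelian p (Subgroup.closure {g}) := by
    refine isElementaryAbelian_closure ?_ ?_
    · simp
    · simpa using orderOf_dvd_iff_pow_eq_one.1 hg.dvd
  obtain ⟨A, hle, hA⟩ := (Set.toFinite {A : Subgroup G | IsElementaryAbelian p A}).exists_le_maximal
    hzpowers
  refine ⟨A, hA, fun h ↦ hp.out.one_lt.ne ?_⟩
  have hg1 : g ∈ A := hle (Subgroup.subset_closure rfl)
  rw [h, Subgroup.mem_bot] at hg1
  rw [← hg, hg1, orderOf_one]

-- The vanishing of the cube norm on `A` forces `A` to commute with its conjugate, so maximality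
-- applies.
theorem conj_mem_of_mem_cubeTrivialCosets (hA : Maximal (IsElementaryAbelian p) A)
    (hx : x ∈ cubeTrivialCosets A) {a : G} (ha : a ∈ A) : x⁻¹ * a * x ∈ A := by
  let φ : G →* G := (MulAut.conj x⁻¹).toMonoidHom
  have hφ : φ a = x⁻¹ * a * x := by simp [φ]
  have cubeNorm_eq_one (b : G) (hb : b ∈ A) : cubeNorm φ b = 1 :=
    cubeNorm_conj_eq_one (by simpa using hx 1 A.one_mem) (hx b hb)
  have hpow : (φ a) ^ p = 1 := by rw [← map_pow, hA.prop.pow_eq_one a ha, map_one]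
  refine hφ ▸ mem_of_maximal_isElementaryAbelian hA hpow fun b hb ↦ ?_
  exact (commute_map_of_cubeNorm_eq_one (hA.prop.commute hb ha) (cubeNorm_eq_one b hb)
    (cubeNorm_eq_one a ha) (cubeNorm_eq_one _ (A.mul_mem ha hb))).symm

theorem IsElementaryAbelian.disjoint_centralizer_conjFiber_inv (hA : IsElementaryAbelian p A)
    (hA1 : A ≠ ⊥) (hp : p.Coprime 2) :
    Disjoint (Subgroup.centralizer (A : Set G) : Set G) (conjFiber A Inv.inv) := by
  refine Set.disjoint_left.2 fun x hC hI ↦ hA1 (hA.eq_bot_of_pow_eq_one hp fun a ha ↦ ?_)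
  have ha_inv := (mem_centralizer_iff_conj_eq.1 hC a ha).symm.trans (hI a ha)
  rw [sq, mul_eq_one_iff_eq_inv, ← ha_inv]

theorem IsElementaryAbelian.disjoint_centralizer_cubeTrivialCosets (hA : IsElementaryAbelian p A)
    (hA1 : A ≠ ⊥) (hp : p.Coprime 3) :
    Disjoint (Subgroup.centralizer (A : Set G) : Set G) (cubeTrivialCosets A) := by
  refine Set.disjoint_left.2 fun x hC hF ↦ hA1 (hA.eq_bot_of_pow_eq_one hp fun a ha ↦ ?_)
  have hxa := hF a ha
  rwa [Commute.mul_pow (hC a ha).symm, ← mul_one x, hF 1 A.one_mem, one_mul] at hxa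

theorem disjoint_conjFiber_inv_cubeTrivialCosets (hA1 : A ≠ ⊥) :
    Disjoint (conjFiber A Inv.inv) (cubeTrivialCosets A) := by
  refine Set.disjoint_left.2 fun x hI hF ↦ hA1 ((Subgroup.eq_bot_iff_forall A).2 fun a ha ↦ ?_)
  let φ : G →* G := (MulAut.conj x⁻¹).toMonoidHom
  have hφ : φ a = a⁻¹ := (by simp [φ] : φ a = x⁻¹ * a * x).trans (hI a ha)
  have hnorm : cubeNorm φ a = 1 :=
    cubeNorm_conj_eq_one (by simpa using hF 1 A.one_mem) (hF a ha)
  simpa [cubeNorm, hφ] using hnorm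

theorem card_centralizer_add_ncard_add_ncard_le [Finite G] (hA : Maximal (IsElementaryAbelian p) A)
    (hA1 : A ≠ ⊥) (hp2 : p.Coprime 2) (hp3 : p.Coprime 3) :
    Nat.card (Subgroup.centralizer (A : Set G)) + (conjFiber A Inv.inv).ncard +
      (cubeTrivialCosets A).ncard ≤ Nat.card (Subgroup.normalizer (A : Set G)) := by
  have hCI := hA.prop.disjoint_centralizer_conjFiber_inv hA1 hp2
  have hCF := hA.prop.disjoint_centralizer_cubeTrivialCosets hA1 hp3
  have hIF := disjoint_conjFiber_inv_cubeTrivialCosets hA1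
  have hsub : (Subgroup.centralizer (A : Set G) : Set G) ∪ conjFiber A Inv.inv ∪
      cubeTrivialCosets A ⊆ Subgroup.normalizer (A : Set G) :=
    Set.union_subset (Set.union_subset
      (fun x hx ↦ mem_normalizer_of_conj_mem fun a ha ↦
        (mem_centralizer_iff_conj_eq.1 hx a ha).symm ▸ ha)
      (conjFiber_subset_normalizer fun a ↦ A.inv_mem))
      fun x hx ↦ mem_normalizer_of_conj_mem fun a ↦ conj_mem_of_mem_cubeTrivialCosets hA hx
  have hcard := Set.ncard_le_ncard hsub
  rwa [Set.ncard_union_eq (Set.disjoint_union_left.2 ⟨hCF, hIF⟩), Set.ncard_union_eq hCI] at hcard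

end Counting

section PermutationActions

open MulAction Nat

variable {G X : Type*} [Group G] [MulAction G X] {p : ℕ}

theorem commutator_le_and_pow_mem_of_index_lt_sq {P : Type*} [Group P] [Finite P]
    [hp : Fact p.Prime] (hP : IsPGroup p P) {K : Subgroup P} (hK : K.index < p ^ 2) :
    commutator P ≤ K ∧ ∀ x : P, x ^ p ∈ K := by
  obtain ⟨k, hk⟩ := hP.index K
  have hk2 : k < 2 := (Nat.pow_lt_pow_iff_right hp.out.one_lt).1 (hk ▸ hK)
  interval_cases k
  · simp [Subgroup.index_eq_one.1 hk]
  rw [pow_one] at hk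
  obtain ⟨n, hn⟩ := IsPGroup.iff_card.1 hP
  have hn0 : n ≠ 0 := by
    rintro rfl
    rw [pow_zero] at hn
    exact hp.out.one_lt.not_ge (Nat.le_of_dvd one_pos (hn ▸ hk ▸ K.index_dvd_card))
  have : K.Normal := Subgroup.normal_of_index_eq_minFac_card (by rw [hn, hk, hp.out.pow_minFac hn0])
  have : IsCyclic (P ⧸ K) := isCyclic_of_prime_card (p := p) hk
  exact ⟨Subgroup.Normal.quotient_commutative_iff_commutator_le.1 inferInstance,
    fun x ↦ hk ▸ K.pow_index_mem x⟩

theorem isElementaryAbelian_of_card_lt_sq [FaithfulSMul G X] [Finite X] [Fact p.Prime]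
    {P : Subgroup G} [Finite P] (hP : IsPGroup p P) (hX : Nat.card X < p ^ 2) :
    IsElementaryAbelian p P := by
  have hstab (q : X) : commutator P ≤ stabilizer P q ∧ ∀ x : P, x ^ p ∈ stabilizer P q := by
    refine commutator_le_and_pow_mem_of_index_lt_sq hP ?_
    rw [index_stabilizer]
    exact (Set.ncard_le_card _).trans_lt hX
  have eq_one {g : P} (hg : ∀ q : X, g • q = q) : g = 1 :=
    FaithfulSMul.eq_of_smul_eq_smul fun q : X ↦ by rw [hg, one_smul]
  refine ⟨⟨⟨fun x y ↦ ?_⟩⟩, fun a ha ↦ ?_⟩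
  · exact commutatorElement_eq_one_iff_mul_comm.1 <| eq_one fun q ↦
      (hstab q).1 (Subgroup.commutator_mem_commutator (Subgroup.mem_top x) (Subgroup.mem_top y))
  · exact congrArg Subtype.val (eq_one (g := ⟨a, ha⟩ ^ p) fun q ↦ (hstab q).2 _)

theorem ncard_orbit_eq_prime_card {A : Type*} [Group A] [MulAction A X] [hp : Fact p.Prime]
    (hA : Nat.card A = p) {a : A} {q : X} (haq : a • q ≠ q) : (orbit A q).ncard = p := by
  rw [← index_stabilizer]
  refine ((Nat.dvd_prime hp.out).1 (hA ▸ Subgroup.index_dvd_card _)).resolve_left fun h ↦ haq ?_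
  exact (Subgroup.index_eq_one.1 h).ge (Subgroup.mem_top a)

theorem exists_smul_eq_iff_and_mem_orbit {A : Type*} [CommGroup A] [MulAction A X]
    [FaithfulSMul A X] [Fact p.Prime] (hA : Nat.card A = p) (hX : Nat.card X = p + 1) {a : A}
    (ha : a ≠ 1) :
    ∃ q b : X, a • q ≠ q ∧ (∀ y, a • y = y ↔ y = b) ∧ ∀ y ≠ b, y ∈ orbit A q := by
  have : Finite X := Nat.finite_of_card_ne_zero (by omega)
  obtain ⟨q, haq⟩ : ∃ q : X, a • q ≠ q := by
    by_contra! h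
    exact ha (FaithfulSMul.eq_of_smul_eq_smul fun q : X ↦ by rw [h, one_smul])
  obtain ⟨b, hb⟩ : ∃ b, (orbit A q)ᶜ = {b} := by
    rw [← Set.ncard_eq_one, Set.ncard_compl, ncard_orbit_eq_prime_card hA haq, hX,
      Nat.add_sub_cancel_left]
  have notMem_orbit_iff {y : X} : y ∉ orbit A q ↔ y = b := by
    rw [← Set.mem_compl_iff, hb, Set.mem_singleton_iff]
  refine ⟨q, b, haq, fun y ↦ ⟨fun hy ↦ notMem_orbit_iff.1 ?_, ?_⟩,
    fun y ↦ not_imp_comm.1 notMem_orbit_iff.1⟩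
  · rintro ⟨c, rfl⟩
    exact haq (smul_left_cancel c (by rwa [smul_comm] at hy))
  · rintro rfl
    rw [← notMem_orbit_iff, ← orbit_eq_iff, orbit_smul, orbit_eq_iff, notMem_orbit_iff]

open scoped IsMulCommutative in
-- Modulo `A`, an element centralizing `A` fixes a point of the orbit of length `p`, hence all of
-- it, and it fixes the remaining point.
theorem centralizer_le_of_card_eq_succ [FaithfulSMul G X] [hp : Fact p.Prime] {A : Subgroup G}
    (hA : Nat.card A = p) (hX : Nat.card X = p + 1) : Subgroup.centralizer A ≤ A := by
  have : IsCyclic A := isCyclic_of_prime_card hA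
  have : Finite A := Nat.finite_of_card_ne_zero (hA ▸ hp.out.ne_zero)
  have : Nontrivial A := Finite.one_lt_card_iff_nontrivial.1 (hA ▸ hp.out.one_lt)
  obtain ⟨a, ha⟩ := exists_ne (1 : A)
  obtain ⟨q, b, haq, fixed_iff, mem_orbit⟩ := exists_smul_eq_iff_and_mem_orbit hA hX ha
  intro c hc
  have smul_smul_comm (d : A) (y : X) : d • c • y = c • d • y := by
    change (d : G) • c • y = c • (d : G) • y
    rw [← mul_smul, ← mul_smul, hc d d.2]
  have smul_eq_b {y : X} : c • y = b ↔ y = b := by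
    rw [← fixed_iff, ← fixed_iff, smul_smul_comm, smul_left_cancel_iff]
  have ab_eq : a • b = b := (fixed_iff b).2 rfl
  obtain ⟨d, hd : d • q = c • q⟩ := mem_orbit (c • q) (mt smul_eq_b.1 (mt (fixed_iff q).2 haq))
  suffices c = d from this ▸ d.2
  refine FaithfulSMul.eq_of_smul_eq_smul fun y : X ↦ ?_
  change c • y = d • y
  by_cases hy : y = b
  · rw [hy, smul_eq_b.2 rfl, (fixed_iff (d • b)).1 (by rw [smul_comm, ab_eq])]
  · obtain ⟨e, rfl⟩ := mem_orbit y hy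
    change c • e • q = d • e • q
    rw [← smul_smul_comm, ← hd, smul_comm]

end PermutationActions

section SimpleGroup

variable {G : Type*} [Group G] [IsSimpleGroup G] {N : Subgroup G}

theorem faithfulSMul_quotient (hN : N ≠ ⊤) : FaithfulSMul G (G ⧸ N) := by
  have hker : (MulAction.toPermHom G (G ⧸ N)).ker = ⊥ := by
    rw [← Subgroup.normalCore_eq_ker]
    refine (IsSimpleGroup.eq_bot_or_eq_top_of_normal _ N.normalCore_normal).resolve_right fun h ↦ ?_
    exact hN (top_le_iff.1 (h ▸ N.normalCore_le))
  exact ⟨fun h ↦ (MonoidHom.ker_eq_bot_iff _).1 hker (Equiv.ext h)⟩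

open Nat in
theorem card_dvd_index_factorial [Finite G] (hN : N ≠ ⊤) : Nat.card G ∣ N.index ! := by
  have := faithfulSMul_quotient hN
  have hdvd := Subgroup.card_dvd_of_injective (MulAction.toPermHom G (G ⧸ N))
    MulAction.toPerm_injective
  rwa [Nat.card_perm] at hdvd

open Nat in
theorem not_sq_dvd_factorial_succ {p : ℕ} (hp : p.Prime) : ¬ p ^ 2 ∣ (p + 1)! := by
  intro h
  rw [factorial_succ, ← mul_factorial_pred hp.ne_zero, mul_left_comm, sq,
    Nat.mul_dvd_mul_iff_left hp.pos, hp.dvd_mul, Nat.dvd_add_right dvd_rfl, hp.dvd_factorial] at h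
  exact h.elim hp.not_dvd_one (Nat.sub_lt hp.pos one_pos).not_ge

variable {p : ℕ} {A : Subgroup G}

theorem IsElementaryAbelian.normalizer_ne_top (hna : ¬ ∀ a b : G, a * b = b * a)
    (hA : IsElementaryAbelian p A) (hA1 : A ≠ ⊥) : Subgroup.normalizer (A : Set G) ≠ ⊤ := by
  intro hN
  have hA_top : A = ⊤ := (IsSimpleGroup.eq_bot_or_eq_top_of_normal A
    (Subgroup.normalizer_eq_top_iff.1 hN)).resolve_left hA1
  exact hna fun a b ↦ hA.commute (by simp [hA_top]) (by simp [hA_top])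

variable [Finite G] [hp : Fact p.Prime]

theorem IsElementaryAbelian.card_eq_of_index_eq_succ (hA : IsElementaryAbelian p A) (hA1 : A ≠ ⊥)
    (hN : N.index = p + 1) : Nat.card A = p := by
  have hN_ne_top : N ≠ ⊤ := by
    rintro rfl
    exact hp.out.ne_zero (by simpa using hN.symm)
  obtain ⟨n, hn⟩ := IsPGroup.iff_card.1 hA.isPGroup
  have hn0 : n ≠ 0 := by
    rintro rfl
    exact hA1 (Subgroup.card_eq_one.1 hn)
  have hn2 : ¬ 2 ≤ n := fun h ↦ not_sq_dvd_factorial_succ hp.out <|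
    calc p ^ 2 ∣ p ^ n := pow_dvd_pow p h
      _ ∣ Nat.card G := hn ▸ A.card_subgroup_dvd_card
      _ ∣ _ := hN ▸ card_dvd_index_factorial hN_ne_top
  rw [hn, show n = 1 by omega, pow_one]

theorem IsElementaryAbelian.centralizer_le_of_index_eq_succ (hA : IsElementaryAbelian p A)
    (hA1 : A ≠ ⊥) (hN : N.index = p + 1) : Subgroup.centralizer (A : Set G) ≤ A := by
  have : FaithfulSMul G (G ⧸ N) := faithfulSMul_quotient <| by
    rintro rfl
    exact hp.out.ne_zero (by simpa using hN.symm)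
  exact centralizer_le_of_card_eq_succ (hA.card_eq_of_index_eq_succ hA1 hN) hN

-- A Sylow `p`-subgroup containing `A` acts faithfully on `G ⧸ N(A)`, so it is elementary abelian
-- and must coincide with `A`.
theorem index_normalizer_modEq_one (hna : ¬ ∀ a b : G, a * b = b * a)
    (hA : Maximal (IsElementaryAbelian p) A) (hA1 : A ≠ ⊥)
    (hlt : (Subgroup.normalizer (A : Set G)).index < p ^ 2) :
    (Subgroup.normalizer (A : Set G)).index ≡ 1 [MOD p] := by
  have := faithfulSMul_quotient (hA.prop.normalizer_ne_top hna hA1)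
  obtain ⟨P, hAP⟩ := hA.prop.isPGroup.exists_le_sylow
  have hP : IsElementaryAbelian p (P : Subgroup G) :=
    isElementaryAbelian_of_card_lt_sq P.isPGroup' hlt
  obtain rfl : A = P := hA.eq_of_le hP hAP
  exact P.card_eq_index_normalizer ▸ card_sylow_modEq_one p G

theorem succ_le_index_normalizer (hna : ¬ ∀ a b : G, a * b = b * a)
    (hA : Maximal (IsElementaryAbelian p) A) (hA1 : A ≠ ⊥) :
    p + 1 ≤ (Subgroup.normalizer (A : Set G)).index := by
  by_contra! hlt
  have hne : (Subgroup.normalizer (A : Set G)).index ≠ 1 :=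
    mt Subgroup.index_eq_one.1 (hA.prop.normalizer_ne_top hna hA1)
  have hp1 := hp.out.one_lt
  have hmod := index_normalizer_modEq_one hna hA hA1 (by nlinarith)
  have hpos : (Subgroup.normalizer (A : Set G)).index ≠ 0 := Subgroup.index_ne_zero_of_finite
  have := (Nat.modEq_iff_dvd' (by omega)).1 hmod.symm
  have := Nat.le_of_dvd (by omega) this
  omega

end SimpleGroup

section PrimeOrder

variable {G : Type*} [Group G] {p : ℕ} {A : Subgroup G} {x : G}

theorem exists_mem_conjFiber_pow [hp : Fact p.Prime] (hA : Nat.card A = p)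
    (hx : ∀ a ∈ A, x⁻¹ * a * x ∈ A) : ∃ i < p, x ∈ conjFiber A (· ^ i) := by
  have : IsCyclic A := isCyclic_of_prime_card hA
  have hmaps : Set.MapsTo (MulAut.conj x⁻¹).toMonoidHom (A : Set G) A :=
    fun a ha ↦ by simpa using hx a ha
  obtain ⟨m, hm⟩ := MonoidHom.map_cyclic (G := A) (MonoidHom.restrict hmaps)
  have hp0 : (0 : ℤ) < p := by exact_mod_cast hp.out.pos
  obtain ⟨i, hi⟩ := Int.eq_ofNat_of_zero_le (Int.emod_nonneg m hp0.ne')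
  refine ⟨i, by exact_mod_cast hi ▸ Int.emod_lt_of_pos m hp0, fun a ha ↦ ?_⟩
  have hpow : (⟨a, ha⟩ : A) ^ m = ⟨a, ha⟩ ^ i := by rw [← zpow_mod_natCard, hA, hi, zpow_natCast]
  calc x⁻¹ * a * x = MulAut.conj x⁻¹ a := by simp
    _ = a ^ i := congrArg Subtype.val ((hm ⟨a, ha⟩).trans hpow)

theorem IsElementaryAbelian.dvd_of_mem_conjFiber_pow [Fact p.Prime] (hA : IsElementaryAbelian p A)
    (hA1 : A ≠ ⊥) {i : ℕ} (hx : x ∈ conjFiber A (· ^ i)) (hx3 : x ∈ cubeTrivialCosets A) :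
    p ∣ i ^ 2 + i + 1 := by
  obtain ⟨a, ha, ha1⟩ := A.bot_or_exists_ne_one.resolve_left hA1
  let φ : G →* G := (MulAut.conj x⁻¹).toMonoidHom
  have hφ : φ a = a ^ i := (by simp [φ] : φ a = x⁻¹ * a * x).trans (hx a ha)
  have hnorm : cubeNorm φ a = 1 :=
    cubeNorm_conj_eq_one (by simpa using hx3 1 A.one_mem) (hx3 a ha)
  rw [cubeNorm, hφ, map_pow, hφ, ← pow_mul, ← pow_add, ← pow_succ, ← sq] at hnorm
  exact hA.orderOf_eq ha ha1 ▸ orderOf_dvd_of_pow_eq_one hnorm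

theorem ncard_cubeTrivialCosets_le [Finite G] [hp : Fact p.Prime]
    (hA : Maximal (IsElementaryAbelian p) A) (hAp : Nat.card A = p) :
    (cubeTrivialCosets A).ncard ≤
      #{i ∈ range p | p ∣ i ^ 2 + i + 1} * Nat.card (Subgroup.centralizer (A : Set G)) := by
  have hA1 : A ≠ ⊥ := by
    rintro rfl
    exact hp.out.ne_one (hAp.symm.trans Subgroup.card_bot)
  have hsub : cubeTrivialCosets A ⊆
      ⋃ i ∈ ({i ∈ range p | p ∣ i ^ 2 + i + 1} : Finset ℕ), conjFiber A (· ^ i) := by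
    intro x hx
    obtain ⟨i, hip, hi⟩ :=
      exists_mem_conjFiber_pow hAp fun a ↦ conj_mem_of_mem_cubeTrivialCosets hA hx
    exact Set.mem_biUnion
      (by simpa using ⟨hip, hA.prop.dvd_of_mem_conjFiber_pow hA1 hi hx⟩) hi
  calc (cubeTrivialCosets A).ncard
    _ ≤ _ := Set.ncard_le_ncard hsub
    _ ≤ ∑ i ∈ range p with p ∣ i ^ 2 + i + 1, (conjFiber A (· ^ i)).ncard :=
      Finset.set_ncard_biUnion_le _ _
    _ ≤ _ := sum_le_card_nsmul _ _ _ fun i _ ↦ ncard_conjFiber_le A _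

theorem sq_mem_centralizer_of_mem_conjFiber_inv (hx : x ∈ conjFiber A Inv.inv) :
    x ^ 2 ∈ Subgroup.centralizer (A : Set G) := by
  refine mem_centralizer_iff_conj_eq.2 fun a ha ↦ ?_
  calc (x ^ 2)⁻¹ * a * x ^ 2 = x⁻¹ * (x⁻¹ * a * x) * x := by rw [sq]; group
    _ = a := by rw [hx a ha, hx _ (A.inv_mem ha), inv_inv]

theorem two_dvd_orderOf_of_mem_conjFiber_inv (hx : x ∈ conjFiber A Inv.inv)
    (hxC : x ∉ Subgroup.centralizer (A : Set G)) : 2 ∣ orderOf x := by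
  by_contra hodd
  obtain ⟨k, hk⟩ := exists_pow_eq_self_of_coprime (Nat.prime_two.coprime_iff_not_dvd.2 hodd)
  exact hxC (hk ▸ pow_mem (sq_mem_centralizer_of_mem_conjFiber_inv hx) k)

theorem IsElementaryAbelian.two_mul_dvd_card_normalizer [Finite G] (hp : p.Coprime 2)
    (hA : IsElementaryAbelian p A) (hA1 : A ≠ ⊥) (hAp : Nat.card A = p)
    (hx : x ∈ conjFiber A Inv.inv) : 2 * p ∣ Nat.card (Subgroup.normalizer (A : Set G)) := by
  have hxC := Set.disjoint_right.1 (hA.disjoint_centralizer_conjFiber_inv hA1 hp) hx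
  have hxN := conjFiber_subset_normalizer (fun a ↦ A.inv_mem) hx
  exact hp.symm.mul_dvd_of_dvd_of_dvd
    ((two_dvd_orderOf_of_mem_conjFiber_inv hx hxC).trans (Subgroup.orderOf_dvd_natCard _ hxN))
    (hAp ▸ Subgroup.card_dvd_of_le Subgroup.le_normalizer)

end PrimeOrder

section AlternatingGroup

open Equiv Nat

variable {G X : Type*} [Group G] [MulAction G X] [FaithfulSMul G X] {n : ℕ}

theorem exists_injective_monoidHom_perm_fin [Finite X] (hX : Nat.card X = n) :
    ∃ ρ : G →* Perm (Fin n), Function.Injective ρ :=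
  ⟨((Finite.equivFinOfCardEq hX).permCongrHom : Perm X →* Perm (Fin n)).comp
      (MulAction.toPermHom G X),
    (Finite.equivFinOfCardEq hX).permCongrHom.injective.comp MulAction.toPerm_injective⟩

theorem nonempty_mulEquiv_alternatingGroup_of_two_mul_card [Finite X] (hX : Nat.card X = n)
    (hG : 2 * Nat.card G = n !) : Nonempty (G ≃* alternatingGroup (Fin n)) := by
  obtain ⟨ρ, hρ⟩ := exists_injective_monoidHom_perm_fin (G := G) hX
  have hcard : Nat.card ρ.range = Nat.card G :=
    (Nat.card_congr (MonoidHom.ofInjective hρ).toEquiv).symm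
  have hindex : ρ.range.index = 2 := by
    refine Nat.eq_of_mul_eq_mul_right (m := Nat.card ρ.range) Nat.card_pos ?_
    rw [Subgroup.index_mul_card, hcard, hG, Nat.card_perm, Nat.card_fin]
  exact ⟨(MonoidHom.ofInjective hρ).trans
    (MulEquiv.subgroupCongr (Perm.eq_alternatingGroup_of_index_eq_two hindex))⟩

theorem faithfulSMul_ofStabilizer (b : X) :
    FaithfulSMul (MulAction.stabilizer G b) (SubMulAction.ofStabilizer G b) where
  eq_of_smul_eq_smul {g h} hgh := by
    refine Subtype.ext (FaithfulSMul.eq_of_smul_eq_smul fun y : X ↦ ?_)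
    by_cases hy : y = b
    · rw [hy, g.2, h.2]
    · exact congrArg Subtype.val (hgh ⟨y, hy⟩)

theorem nonempty_stabilizer_mulEquiv_alternatingGroup [Finite X] (b : X)
    (hX : Nat.card X = n + 1) (hG : 2 * Nat.card (MulAction.stabilizer G b) = n !) :
    Nonempty (MulAction.stabilizer G b ≃* alternatingGroup (Fin n)) := by
  have := faithfulSMul_ofStabilizer (G := G) b
  refine nonempty_mulEquiv_alternatingGroup_of_two_mul_card
    (X := SubMulAction.ofStabilizer G b) ?_ hG
  rw [SubMulAction.nat_card_ofStabilizer_eq, hX, Nat.add_sub_cancel]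

end AlternatingGroup

section SimpleGroup

open Equiv Nat

variable {G : Type*} [Group G] [IsSimpleGroup G] {H : Subgroup G} {n : ℕ}

theorem nonempty_subgroup_mulEquiv_alternatingGroup (hH : H.index = n + 1)
    (hG : 2 * Nat.card G = (n + 1)!) : Nonempty (H ≃* alternatingGroup (Fin n)) := by
  have hX : Nat.card (G ⧸ H) = n + 1 := hH
  have : Finite (G ⧸ H) := Nat.finite_of_card_ne_zero (hX ▸ n.succ_ne_zero)
  have := faithfulSMul_quotient (N := H) <| by
    rintro rfl
    obtain rfl : n = 0 := by simpa using hH.symm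
    simp at hG
  have hcard : 2 * Nat.card H = n ! := by
    refine Nat.eq_of_mul_eq_mul_right n.succ_pos ?_
    rw [mul_assoc, succ_eq_add_one, ← hH, H.card_mul_index, hG, hH, factorial_succ, mul_comm]
  have hstab := MulAction.stabilizer_quotient H
  exact (nonempty_stabilizer_mulEquiv_alternatingGroup ((1 : G) : G ⧸ H) hX
    (hstab.symm ▸ hcard)).map (MulEquiv.subgroupCongr hstab).symm.trans

theorem mem_alternatingGroup_of_two_lt_card {X : Type*} [Fintype X] [DecidableEq X]
    (ρ : G →* Perm X) (hG : 2 < Nat.card G) (g : G) : ρ g ∈ alternatingGroup X := by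
  have hker : (Perm.sign.comp ρ).ker = ⊤ := by
    refine (IsSimpleGroup.eq_bot_or_eq_top_of_normal _ inferInstance).resolve_left fun h ↦ ?_
    have hle := Nat.card_le_card_of_injective _ ((MonoidHom.ker_eq_bot_iff _).1 h)
    rw [Nat.card_eq_fintype_card (α := ℤˣ), Fintype.card_units_int] at hle
    exact hle.not_gt hG
  exact hker.ge (Subgroup.mem_top g)

-- The image of `G` in `A_{n+1}`, although transitive on the `n + 1` cosets of `H`, is a point
-- stabilizer for another action of `A_{n+1}`: the one on the cosets of that image.
theorem nonempty_mulEquiv_alternatingGroup_of_index_eq_succ [Finite G] (hn : 4 ≤ n)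
    (hH : H.index = n + 1) (hG : 2 * Nat.card G = n !) :
    Nonempty (G ≃* alternatingGroup (Fin n)) := by
  have := faithfulSMul_quotient (N := H) <| by
    rintro rfl
    rw [Subgroup.index_top] at hH
    omega
  obtain ⟨ρ, hρ⟩ := exists_injective_monoidHom_perm_fin (G := G) (X := G ⧸ H) hH
  have hG2 : 2 < Nat.card G := by
    have : 4 ! ≤ n ! := factorial_le hn
    rw [show 4 ! = 24 from rfl] at this
    omega
  let ι : G →* alternatingGroup (Fin (n + 1)) :=
    ρ.codRestrict _ (mem_alternatingGroup_of_two_lt_card ρ hG2)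
  have hι : Function.Injective ι := fun a b hab ↦ hρ (congrArg Subtype.val hab)
  have : IsSimpleGroup (alternatingGroup (Fin (n + 1))) :=
    alternatingGroup.isSimpleGroup (by rw [Nat.card_fin]; omega)
  have hcard_alt : 2 * Nat.card (alternatingGroup (Fin (n + 1))) = (n + 1)! := by
    have : Nontrivial (Fin (n + 1)) := Fin.nontrivial_iff_two_le.2 (by omega)
    rw [two_mul_nat_card_alternatingGroup, Nat.card_perm, Nat.card_fin]
  have hcard : Nat.card ι.range = Nat.card G :=
    (Nat.card_congr (MonoidHom.ofInjective hι).toEquiv).symm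
  have hindex : ι.range.index = n + 1 := by
    refine Nat.eq_of_mul_eq_mul_right n.factorial_pos ?_
    rw [← factorial_succ, ← hcard_alt, ← ι.range.card_mul_index, hcard, ← hG]
    ring
  exact (nonempty_subgroup_mulEquiv_alternatingGroup hindex hcard_alt).map
    (MonoidHom.ofInjective hι).trans

end SimpleGroup

section AverageOrder

variable {G : Type*} [Group G] [Fintype G] {p r : ℕ} {A : Subgroup G}

theorem div_le_avgOrder {c d : ℕ} (hd : 0 < d)
    (h : (c * Fintype.card G : ℤ) ≤ d * ∑ x : G, (orderOf x : ℤ)) : (c / d : ℚ) ≤ avgOrder G := by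
  rw [avgOrder, div_le_div_iff₀ (by exact_mod_cast hd) (by exact_mod_cast Fintype.card_pos)]
  rw [mul_comm (∑ x : G, _)]
  exact_mod_cast h

theorem card_normalizer_mul_index (A : Subgroup G) :
    Nat.card (Subgroup.normalizer (A : Set G)) * (Subgroup.normalizer (A : Set G)).index =
      Fintype.card G := by
  rw [Subgroup.card_mul_index, Nat.card_eq_fintype_card]

theorem mul_card_sub_mul_card_normalizer_le [hp : Fact p.Prime]
    (hA : Maximal (IsElementaryAbelian p) A) (hA1 : A ≠ ⊥)
    (hr : addRothNumber (univ : Finset (ZMod p)) ≤ r) (hr2 : 2 ≤ r) (hrp : 2 * r < p) :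
    (4 * p - r : ℤ) * Fintype.card G - (p - r) * Nat.card (Subgroup.normalizer (A : Set G)) ≤
      p * ∑ x : G, (orderOf x : ℤ) := by
  have hp2 : p.Coprime 2 := (Nat.coprime_primes hp.out Nat.prime_two).2 (by omega)
  have hp3 : p.Coprime 3 := (Nat.coprime_primes hp.out Nat.prime_three).2 (by omega)
  have hsum := hA.prop.weighted_card_le_sum_orderOf hA1 hr hr2 hrp
  have hCIF := card_centralizer_add_ncard_add_ncard_le hA hA1 hp2 hp3
  have hIC := ncard_conjFiber_le A Inv.inv
  zify at hCIF hIC hr2 hrp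
  have hC0 : 0 ≤ ((p : ℤ) ^ 2 - 5 * p + 1) * Nat.card (Subgroup.centralizer (A : Set G)) :=
    mul_nonneg (by nlinarith) (by positivity)
  nlinarith [mul_le_mul_of_nonneg_left hCIF (by linarith : (0 : ℤ) ≤ p - r),
    mul_le_mul_of_nonneg_left hIC (by linarith : (0 : ℤ) ≤ p)]

theorem le_avgOrder_of_le_index_normalizer [hp : Fact p.Prime]
    (hA : Maximal (IsElementaryAbelian p) A) (hA1 : A ≠ ⊥)
    (hr : addRothNumber (univ : Finset (ZMod p)) ≤ r) (hr2 : 2 ≤ r) (hrp : 20 * r ≤ 9 * p) {ν : ℕ}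
    (hν : ν ≤ (Subgroup.normalizer (A : Set G)).index)
    (hpν : (20 * (p - r) : ℤ) ≤ (9 * p - 20 * r) * ν) : 71 / 20 ≤ avgOrder G := by
  have hsum := mul_card_sub_mul_card_normalizer_le hA hA1 hr hr2 (by omega)
  set m := Nat.card (Subgroup.normalizer (A : Set G))
  have hmν : (m * ν : ℤ) ≤ Fintype.card G := by
    exact_mod_cast card_normalizer_mul_index A ▸ Nat.mul_le_mul_left m hν
  have hp0 : (0 : ℤ) < p := by exact_mod_cast hp.out.pos
  zify at hrp
  have hm := calc (20 * (p - r) * m : ℤ)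
    _ ≤ (9 * p - 20 * r) * ν * m := mul_le_mul_of_nonneg_right hpν (by positivity)
    _ = (9 * p - 20 * r) * (m * ν) := by ring
    _ ≤ (9 * p - 20 * r) * Fintype.card G := mul_le_mul_of_nonneg_left hmν (by linarith)
  refine div_le_avgOrder (c := 71) (d := 20) (by norm_num) (le_of_mul_le_mul_left ?_ hp0)
  push_cast
  linarith

section SimpleGroup

variable [IsSimpleGroup G]

theorem le_avgOrder_of_index_normalizer_eq_eight (hA : Maximal (IsElementaryAbelian 7) A)
    (hA1 : A ≠ ⊥) (hN : (Subgroup.normalizer (A : Set G)).index = 8) : 71 / 20 ≤ avgOrder G := by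
  have : Fact (Nat.Prime 7) := ⟨by norm_num⟩
  have hsum := hA.prop.weighted_card_le_sum_orderOf hA1 addRothNumber_zmod_seven_le
    (by norm_num) (by norm_num)
  have hCIF := card_centralizer_add_ncard_add_ncard_le hA hA1 (by norm_num) (by norm_num)
  have hI := ncard_conjFiber_le A Inv.inv
  have hF := ncard_cubeTrivialCosets_le hA (hA.prop.card_eq_of_index_eq_succ hA1 hN)
  have hroots : #{i ∈ range 7 | 7 ∣ i ^ 2 + i + 1} = 2 := by decide
  have hcard := card_normalizer_mul_index A
  rw [hN] at hcard
  rw [hroots] at hF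
  refine div_le_avgOrder (c := 71) (d := 20) (by norm_num) ?_
  push_cast at hsum ⊢
  zify at hCIF hI hF hcard
  linarith

theorem le_avgOrder_of_index_normalizer_eq_six (hA : Maximal (IsElementaryAbelian 5) A)
    (hA1 : A ≠ ⊥) (hN : (Subgroup.normalizer (A : Set G)).index = 6)
    (h : 100 ≤ Fintype.card G ∨ conjFiber A Inv.inv = ∅) : 71 / 20 ≤ avgOrder G := by
  have : Fact (Nat.Prime 5) := ⟨by norm_num⟩
  have hA5 : Nat.card A = 5 := hA.prop.card_eq_of_index_eq_succ hA1 hN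
  have hC : Nat.card (Subgroup.centralizer (A : Set G)) ≤ 5 :=
    hA5 ▸ Subgroup.card_le_of_le (hA.prop.centralizer_le_of_index_eq_succ hA1 hN)
  have hF : (cubeTrivialCosets A).ncard = 0 := by
    have hroots : #{i ∈ range 5 | 5 ∣ i ^ 2 + i + 1} = 0 := by decide
    simpa only [hroots, zero_mul, Nat.le_zero] using ncard_cubeTrivialCosets_le hA hA5
  have hsum := hA.prop.weighted_card_le_sum_orderOf hA1 addRothNumber_zmod_five_le
    (by norm_num) (by norm_num)
  refine div_le_avgOrder (c := 71) (d := 20) (by norm_num) ?_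
  rw [hF] at hsum
  push_cast at hsum ⊢
  obtain hlarge | hempty := h
  · have hI := ncard_conjFiber_le A Inv.inv
    zify at hlarge hI hC
    linarith
  · rw [hempty, Set.ncard_empty, Nat.cast_zero] at hsum
    linarith

theorem mulEquiv_or_le_avgOrder_of_index_normalizer_eq_six
    (hA : Maximal (IsElementaryAbelian 5) A) (hA1 : A ≠ ⊥)
    (hN : (Subgroup.normalizer (A : Set G)).index = 6) :
    Nonempty (G ≃* alternatingGroup (Fin 5)) ∨ 71 / 20 ≤ avgOrder G := by
  have : Fact (Nat.Prime 5) := ⟨by norm_num⟩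
  refine or_iff_not_imp_right.2 fun hlt ↦ ?_
  obtain ⟨hsmall, hI⟩ := not_or.1 (mt (le_avgOrder_of_index_normalizer_eq_six hA hA1 hN) hlt)
  obtain ⟨x, hx⟩ := Set.nonempty_iff_ne_empty.2 hI
  have h10 := hA.prop.two_mul_dvd_card_normalizer (by norm_num) hA1
    (hA.prop.card_eq_of_index_eq_succ hA1 hN) hx
  have hcard := card_normalizer_mul_index A
  rw [hN] at hcard
  have hpos : 0 < Fintype.card G := Fintype.card_pos
  have h60 : Fintype.card G = 60 := by omega
  exact nonempty_mulEquiv_alternatingGroup_of_index_eq_succ (by norm_num) hN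
    (by rw [Nat.card_eq_fintype_card, h60]; rfl)

theorem le_avgOrder_of_dvd_card [Fact p.Prime] (hna : ¬ ∀ a b : G, a * b = b * a)
    (hp : p ∣ Fintype.card G) (hr : addRothNumber (univ : Finset (ZMod p)) ≤ r) (hr2 : 2 ≤ r)
    (hrp : 20 * r ≤ 9 * p) (hpr : (20 * (p - r) : ℤ) ≤ (9 * p - 20 * r) * (p + 1)) :
    71 / 20 ≤ avgOrder G := by
  rw [← Nat.card_eq_fintype_card] at hp
  obtain ⟨A, hA, hA1⟩ := exists_maximal_isElementaryAbelian hp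
  exact le_avgOrder_of_le_index_normalizer hA hA1 hr hr2 hrp
    (succ_le_index_normalizer hna hA hA1) (by exact_mod_cast hpr)

theorem le_avgOrder_of_seven_dvd_card (hna : ¬ ∀ a b : G, a * b = b * a)
    (h7 : 7 ∣ Fintype.card G) (h5 : ¬ 5 ∣ Fintype.card G) (h11 : ¬ 11 ∣ Fintype.card G) :
    71 / 20 ≤ avgOrder G := by
  have : Fact (Nat.Prime 7) := ⟨by norm_num⟩
  rw [← Nat.card_eq_fintype_card] at h5 h7 h11
  obtain ⟨A, hA, hA1⟩ := exists_maximal_isElementaryAbelian h7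
  by_cases h8 : (Subgroup.normalizer (A : Set G)).index = 8
  · exact le_avgOrder_of_index_normalizer_eq_eight hA hA1 h8
  refine le_avgOrder_of_le_index_normalizer (ν := 29) hA hA1 addRothNumber_zmod_seven_le
    (by norm_num) (by norm_num) ?_ (by norm_num)
  by_contra! hlt
  have hdvd := (Subgroup.normalizer (A : Set G)).index_dvd_card
  have hge := succ_le_index_normalizer hna hA hA1
  have hmod := index_normalizer_modEq_one hna hA hA1 (by omega)
  generalize (Subgroup.normalizer (A : Set G)).index = ν at *
  obtain rfl | rfl : ν = 15 ∨ ν = 22 := by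
    unfold Nat.ModEq at hmod
    omega
  · exact h5 (dvd_trans (by norm_num) hdvd)
  · exact h11 (dvd_trans (by norm_num) hdvd)

theorem mulEquiv_or_le_avgOrder_of_five_dvd_card (hna : ¬ ∀ a b : G, a * b = b * a)
    (h5 : 5 ∣ Fintype.card G) (h11 : ¬ 11 ∣ Fintype.card G) :
    Nonempty (G ≃* alternatingGroup (Fin 5)) ∨ 71 / 20 ≤ avgOrder G := by
  have : Fact (Nat.Prime 5) := ⟨by norm_num⟩
  rw [← Nat.card_eq_fintype_card] at h5 h11
  obtain ⟨A, hA, hA1⟩ := exists_maximal_isElementaryAbelian h5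
  by_cases h6 : (Subgroup.normalizer (A : Set G)).index = 6
  · exact mulEquiv_or_le_avgOrder_of_index_normalizer_eq_six hA hA1 h6
  refine Or.inr <| le_avgOrder_of_le_index_normalizer (ν := 16) hA hA1 addRothNumber_zmod_five_le
    (by norm_num) (by norm_num) ?_ (by norm_num)
  by_contra! hlt
  have hdvd := (Subgroup.normalizer (A : Set G)).index_dvd_card
  have hge := succ_le_index_normalizer hna hA hA1
  have hmod := index_normalizer_modEq_one hna hA hA1 (by omega)
  generalize (Subgroup.normalizer (A : Set G)).index = ν at *
  obtain rfl : ν = 11 := by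
    unfold Nat.ModEq at hmod
    omega
  exact h11 hdvd

end SimpleGroup

end AverageOrder

theorem simple_K3_group_avgOrder_general {G : Type*} [Group G] [Fintype G]
    (hs : IsSimpleGroup G) (hna : ¬ ∀ a b : G, a * b = b * a)
    (hp : ∃ p ∈ ({5, 7, 11, 13} : Finset ℕ), p ∣ Fintype.card G) :
    Nonempty (G ≃* alternatingGroup (Fin 5)) ∨ 71 / 20 ≤ avgOrder G := by
  by_cases h11 : 11 ∣ Fintype.card G
  · have : Fact (Nat.Prime 11) := ⟨by norm_num⟩
    exact Or.inr <| le_avgOrder_of_dvd_card hna h11 addRothNumber_zmod_eleven_le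
      (by norm_num) (by norm_num) (by norm_num)
  by_cases h13 : 13 ∣ Fintype.card G
  · have : Fact (Nat.Prime 13) := ⟨by norm_num⟩
    exact Or.inr <| le_avgOrder_of_dvd_card hna h13 addRothNumber_zmod_thirteen_le
      (by norm_num) (by norm_num) (by norm_num)
  by_cases h5 : 5 ∣ Fintype.card G
  · exact mulEquiv_or_le_avgOrder_of_five_dvd_card hna h5 h11
  have h7 : 7 ∣ Fintype.card G := by simpa [h5, h11, h13] using hp
  exact Or.inr (le_avgOrder_of_seven_dvd_card hna h7 h5 h11)

theorem exists_mem_dvd_of_primeFactors_subset {n : ℕ} (hcard : n.primeFactors.card = 3)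
    (hsub : n.primeFactors ⊆ ({2, 3, 5, 7, 11, 13} : Finset ℕ)) :
    ∃ p ∈ ({5, 7, 11, 13} : Finset ℕ), p ∣ n := by
  obtain ⟨p, hpn, hp⟩ : ∃ p ∈ n.primeFactors, p ∉ ({2, 3} : Finset ℕ) :=
    exists_mem_notMem_of_card_lt_card (by rw [hcard]; decide)
  have hp' := hsub hpn
  refine ⟨p, ?_, Nat.dvd_of_mem_primeFactors hpn⟩
  simp only [mem_insert, mem_singleton] at hp hp' ⊢
  tauto

theorem simple_K3_group_avgOrder {G : Type*} [Group G] [Fintype G]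
    (hs : IsSimpleGroup G) (hna : ¬ ∀ a b : G, a * b = b * a)
    (hcard : (Fintype.card G).primeFactors.card = 3)
    (hsub : (Fintype.card G).primeFactors ⊆ ({2, 3, 5, 7, 11, 13} : Finset ℕ)) :
    Nonempty (G ≃* alternatingGroup (Fin 5)) ∨ 71 / 20 ≤ avgOrder G :=
  simple_K3_group_avgOrder_general hs hna (exists_mem_dvd_of_primeFactors_subset hcard hsub)
end

section
/- Let G be a finite non-solvable group which contains no nontrivial solvable normal subgroups (i.e., every solvable normal subgroup of G is trivial), and let θ be an automorphism of G. If the number of elements g ∈ G with θ(g) = g⁻¹ is strictly greater than (2/9)·|G|, then G is isomorphic to the alternating group A_5. -/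
/-!
If `θ` inverts `x`, then the inverted elements in the coset `H * x` correspond to those in `H` of
`θ` followed by conjugation by `x`. Hence some such twist of `θ` inverts at least the same
proportion of any given subgroup `H`. We apply this twice.

First take `H = N`, a minimal characteristic subgroup, which is characteristically simple and not
solvable. Inside `N` take `H` to be a Sylow `p`-subgroup `P` with `p ≥ 5`: a twist inverts all of
`P`, so `P` is abelian. Every inverted element outside the centralizer `C` of `P` commutes with at
most `1 / p` of the elements of `P`, which bounds the index of `C` from above, while by Burnside's
transfer theorem this index is a proper multiple of the number of Sylow `p`-subgroups. This leaves
`p = 5`, so by Burnside's `p ^ a * q ^ b` theorem the primes dividing `|N|` are `2`, `3` and `5`,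
and the same bound for `p = 5` gives `|N| = 60`.

The automorphisms of `N` then act faithfully on its five Sylow 2-subgroups. If `θ` acts on a
subgroup of `S₅` as conjugation by `s`, then `g ↦ g * s⁻¹` sends its inverted elements to square
roots of `s⁻²`. There are at most 16 of these of a given sign, so `θ` inverts more than `3 / 4` of
`G / N`, which is therefore abelian. So the centralizer of `N` is abelian, hence trivial, and `G`
embeds in `S₅`. At most 26 elements of `G` are inverted, so `|G| < 120`.
-/

section RootsOfUnity

variable {ι : Type*} [Fintype ι]

theorem eq_smul_sum_of_norm_sum_eq_card {E : Type*} [NormedAddCommGroup E]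
    [InnerProductSpace ℝ E] [Nonempty ι] {f : ι → E} (hf : ∀ i, ‖f i‖ = 1)
    (hsum : ‖∑ i, f i‖ = Fintype.card ι) (i : ι) :
    f i = (Fintype.card ι : ℝ)⁻¹ • ∑ j, f j := by
  set c : ℝ := (Fintype.card ι : ℝ)
  set w := c⁻¹ • ∑ j, f j with hw
  have hc : 0 < c := Nat.cast_pos.mpr Fintype.card_pos
  have hw_norm : ‖w‖ = 1 := by
    rw [hw, norm_smul, hsum, norm_inv, Real.norm_of_nonneg hc.le, inv_mul_cancel₀ hc.ne']
  have hle (j : ι) : 0 ≤ 1 - inner ℝ w (f j) := by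
    have := real_inner_le_norm w (f j)
    rw [hw_norm, hf, one_mul] at this
    exact sub_nonneg.mpr this
  have hzero : ∑ j, (1 - inner ℝ w (f j)) = 0 := by
    have hsum_w : ∑ j, f j = c • w := (smul_inv_smul₀ hc.ne' _).symm
    rw [Finset.sum_sub_distrib, ← inner_sum, hsum_w, real_inner_smul_right,
      real_inner_self_eq_norm_sq, hw_norm]
    simp [c]
  have hi := (Finset.sum_eq_zero_iff_of_nonneg fun j _ => hle j).mp hzero i (Finset.mem_univ i)
  exact ((inner_eq_one_iff_of_norm_eq_one hw_norm (hf i)).mp (sub_eq_zero.mp hi).symm).symm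

-- Every Galois conjugate of the average is again an average of roots of unity, so Kronecker's
-- theorem applies.
theorem norm_sum_eq_card_of_isIntegral_average {f : ι → ℂ} {n : ℕ} (hn : n ≠ 0)
    (hf : ∀ i, f i ^ n = 1) (hint : IsIntegral ℤ ((∑ i, f i) / Fintype.card ι))
    (hsum : ∑ i, f i ≠ 0) : ‖∑ i, f i‖ = Fintype.card ι := by
  let K := IntermediateField.adjoin ℚ (Set.range f)
  have : FiniteDimensional ℚ K := by
    refine IntermediateField.finiteDimensional_adjoin ?_
    rintro _ ⟨i, rfl⟩
    exact IsIntegral.of_pow hn.bot_lt (hf i ▸ isIntegral_one)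
  have : NumberField K := { to_charZero := K.charZero, to_finiteDimensional := this }
  let g (i : ι) : K := ⟨f i, IntermediateField.subset_adjoin ℚ _ ⟨i, rfl⟩⟩
  have hcard : (Fintype.card ι : ℂ) ≠ 0 := by
    have : Nonempty ι := not_isEmpty_iff.mp fun _ => hsum (Fintype.sum_empty f)
    exact_mod_cast Fintype.card_ne_zero
  set y : K := (∑ i, g i) / Fintype.card ι
  have map_y (φ : K →+* ℂ) : φ y = (∑ i, φ (g i)) / Fintype.card ι := by
    simp only [y, map_div₀, map_sum, map_natCast]
  have hy : algebraMap K ℂ y = (∑ i, f i) / Fintype.card ι := map_y (algebraMap K ℂ)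
  have hy_ne : y ≠ 0 := fun h => div_ne_zero hsum hcard (by rw [← hy, h, map_zero])
  have hy_int : IsIntegral ℤ y :=
    (isIntegral_algebraMap_iff (algebraMap K ℂ).injective).mp (hy ▸ hint)
  have hy_norm (φ : K →+* ℂ) : ‖φ y‖ ≤ 1 := by
    have hg (i : ι) : ‖φ (g i)‖ = 1 := by
      refine Complex.norm_eq_one_of_pow_eq_one ?_ hn
      rw [← map_pow, show g i ^ n = 1 from Subtype.ext (hf i), map_one]
    rw [map_y, norm_div, Complex.norm_natCast]
    refine div_le_one_of_le₀ ((norm_sum_le _ _).trans ?_) (Nat.cast_nonneg _)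
    simp [hg]
  obtain ⟨m, hm, hym⟩ := NumberField.Embeddings.pow_eq_one_of_norm_le_one K ℂ hy_ne hy_int hy_norm
  have hnorm : ‖(∑ i, f i) / (Fintype.card ι : ℂ)‖ = 1 :=
    Complex.norm_eq_one_of_pow_eq_one (by rw [← hy, ← map_pow, hym, map_one]) hm.ne'
  rwa [norm_div, Complex.norm_natCast, div_eq_one_iff_eq (by exact_mod_cast hcard)] at hnorm

end RootsOfUnity

section FiniteOrderMatrix

open Polynomial

variable {n : Type*} [Fintype n] [DecidableEq n] {M : Matrix n n ℂ} {m : ℕ}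

theorem pow_eq_one_of_mem_roots_charpoly (hM : M ^ m = 1) {z : ℂ} (hz : z ∈ M.charpoly.roots) :
    z ^ m = 1 := by
  have hspec : z ∈ spectrum ℂ M :=
    Matrix.mem_spectrum_iff_isRoot_charpoly.mpr (isRoot_of_mem_roots hz)
  have : Nontrivial (Matrix n n ℂ) := by
    by_contra h
    rw [not_nontrivial_iff_subsingleton] at h
    simp at hspec
  simpa [hM] using spectrum.pow_mem_pow M m hspec

theorem isIntegral_trace_of_pow_eq_one (hm : m ≠ 0) (hM : M ^ m = 1) : IsIntegral ℤ M.trace := by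
  rw [Matrix.trace_eq_sum_roots_charpoly]
  exact IsIntegral.multiset_sum fun z hz =>
    IsIntegral.of_pow hm.bot_lt (pow_eq_one_of_mem_roots_charpoly hM hz ▸ isIntegral_one)

theorem roots_charpoly_eq_replicate_of_isIntegral (hm : m ≠ 0) (hM : M ^ m = 1)
    (hint : IsIntegral ℤ (M.trace / Fintype.card n)) (htr : M.trace ≠ 0) :
    ∃ z, M.charpoly.roots = Multiset.replicate (Fintype.card n) z := by
  set s := M.charpoly.roots
  have hcard : s.card = Fintype.card n := by
    rw [splits_iff_card_roots.mp (IsAlgClosed.splits M.charpoly),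
      Matrix.charpoly_natDegree_eq_dim]
  have hsum : ∑ x : s, (x : ℂ) = M.trace := by
    rw [Finset.sum_eq_multiset_sum, Multiset.map_univ_coe, Matrix.trace_eq_sum_roots_charpoly]
  have : Nonempty s := not_isEmpty_iff.mp fun _ => htr (hsum ▸ Fintype.sum_empty _)
  have hroot (x : s) : (x : ℂ) ^ m = 1 := pow_eq_one_of_mem_roots_charpoly hM Multiset.coe_mem
  have hconst := eq_smul_sum_of_norm_sum_eq_card
    (fun x : s => Complex.norm_eq_one_of_pow_eq_one (hroot x) hm)
    (norm_sum_eq_card_of_isIntegral_average hm hroot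
      (by rwa [hsum, Multiset.card_coe, hcard]) (hsum ▸ htr))
  refine ⟨(Fintype.card s : ℝ)⁻¹ • ∑ x : s, (x : ℂ), Multiset.eq_replicate.mpr ⟨hcard, ?_⟩⟩
  intro z hz
  obtain ⟨x, -, rfl⟩ := Multiset.mem_map.mp ((Multiset.map_univ_coe s).symm ▸ hz)
  exact hconst x

-- `M` is diagonalizable, since its minimal polynomial divides the separable `X ^ m - 1`.
theorem eq_scalar_of_roots_charpoly_eq_replicate (hm : m ≠ 0) (hM : M ^ m = 1) {k : ℕ} {z : ℂ}
    (hroots : M.charpoly.roots = Multiset.replicate k z) : M = Matrix.scalar n z := by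
  have hdvd_pow : minpoly ℂ M ∣ (X - C z) ^ k := by
    have hchar := (IsAlgClosed.splits M.charpoly).eq_prod_roots_of_monic (Matrix.charpoly_monic M)
    rw [hroots, Multiset.map_replicate, Multiset.prod_replicate] at hchar
    exact hchar ▸ Matrix.minpoly_dvd_charpoly M
  have hsqfree : Squarefree (minpoly ℂ M) := by
    refine Squarefree.squarefree_of_dvd (minpoly.dvd ℂ M (p := X ^ m - C 1) (by simp [hM])) ?_
    exact (separable_X_pow_sub_C 1 (by exact_mod_cast hm) one_ne_zero).squarefree
  have hdvd : minpoly ℂ M ∣ X - C z := hsqfree.isRadical k _ hdvd_pow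
  have hzero := aeval_eq_zero_of_dvd_aeval_eq_zero hdvd (minpoly.aeval ℂ M)
  rwa [map_sub, aeval_X, aeval_C, sub_eq_zero] at hzero

end FiniteOrderMatrix

section ScalarCommutant

variable {G n : Type*} [Group G] [Fintype n] [DecidableEq n]

/-- Schur's lemma as a property of a matrix representation: only scalar matrices commute with its
image. For complex representations of finite groups this is irreducibility; it is the only
consequence of irreducibility needed for Burnside's theorem. -/
def HasScalarCommutant (ρ : G →* Matrix n n ℂ) : Prop :=
  ∀ M : Matrix n n ℂ, (∀ g, Commute (ρ g) M) → ∃ c, M = Matrix.scalar n c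

variable {ρ : G →* Matrix n n ℂ}

theorem HasScalarCommutant.subsingleton_of_trivial (hρ : HasScalarCommutant ρ)
    (htriv : ∀ g, ρ g = 1) : Subsingleton n := by
  refine ⟨fun i j => by_contra fun hij => ?_⟩
  obtain ⟨c, hc⟩ := hρ (Matrix.single i j 1) fun g => htriv g ▸ Commute.one_left _
  simpa [Matrix.diagonal_apply, hij] using congrFun (congrFun hc i) j

theorem isIntegral_sum_monoidHom {A : Type*} [Ring A] [Finite G] (f : G →* A) (s : Finset G) :
    IsIntegral ℤ (∑ x ∈ s, f x) := by
  have := (IsIntegral.of_finite ℤ (∑ x ∈ s, MonoidAlgebra.single x (1 : ℤ))).map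
    (MonoidAlgebra.lift ℤ A G f)
  simpa using this

theorem isIntegral_trace_apply [Finite G] (g : G) : IsIntegral ℤ (ρ g).trace :=
  isIntegral_trace_of_pow_eq_one (orderOf_pos g).ne'
    (by rw [← map_pow, pow_orderOf_eq_one, map_one])

theorem trace_eq_of_isConj {g x : G} (h : IsConj g x) : (ρ x).trace = (ρ g).trace := by
  obtain ⟨c, rfl⟩ := isConj_iff.mp h
  rw [map_mul, Matrix.trace_mul_comm, ← map_mul, inv_mul_cancel_left]

theorem HasScalarCommutant.sum_eq_zero [Fintype G] (hρ : HasScalarCommutant ρ) {k : G}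
    (hk : ρ k ≠ 1) : ∑ g, ρ g = 0 := by
  have hleft (h : G) : ρ h * ∑ g, ρ g = ∑ g, ρ g := by
    simp only [Finset.mul_sum, ← map_mul]
    exact Equiv.sum_comp (Equiv.mulLeft h) ρ
  have hright (h : G) : (∑ g, ρ g) * ρ h = ∑ g, ρ g := by
    simp only [Finset.sum_mul, ← map_mul]
    exact Equiv.sum_comp (Equiv.mulRight h) ρ
  obtain ⟨c, hc⟩ := hρ _ fun h => (hleft h).trans (hright h).symm
  have hc0 : c = 0 := by
    by_contra hne
    refine hk (smul_right_injective _ hne ?_)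
    have hfix := hleft k
    rwa [hc, Matrix.scalar_apply, ← Matrix.smul_one_eq_diagonal, mul_smul_comm, mul_one] at hfix
  rw [hc, hc0, map_zero]

theorem HasScalarCommutant.exists_isIntegral_class_sum [Finite G] (hρ : HasScalarCommutant ρ)
    (g : G) :
    ∃ w : ℂ, IsIntegral ℤ w ∧ (conjugatesOf g).ncard * (ρ g).trace = Fintype.card n * w := by
  cases isEmpty_or_nonempty n
  · exact ⟨0, isIntegral_zero, by simp [Matrix.trace]⟩
  set C := (conjugatesOf g).toFinite.toFinset
  have hmem (x : G) : x ∈ C ↔ IsConj g x := Set.Finite.mem_toFinset _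
  have hcomm (h : G) : Commute (ρ h) (∑ x ∈ C, ρ x) := by
    rw [Commute, SemiconjBy, Finset.mul_sum, Finset.sum_mul]
    refine Finset.sum_equiv (MulAut.conj h).toEquiv (fun x => ?_) fun x _ => ?_
    · have hx : IsConj x (MulAut.conj h x) := isConj_iff.mpr ⟨h, rfl⟩
      rw [hmem, hmem]
      exact ⟨fun hgx => hgx.trans hx, fun hgx => hgx.trans hx.symm⟩
    · simp [← map_mul]
  obtain ⟨w, hw⟩ := hρ _ hcomm
  refine ⟨w, ?_, ?_⟩
  · have hint : IsIntegral ℤ (algebraMap ℂ (Matrix n n ℂ) w) := hw ▸ isIntegral_sum_monoidHom ρ C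
    exact (isIntegral_algebraMap_iff (algebraMap ℂ (Matrix n n ℂ)).injective).mp hint
  · have htrace := congrArg Matrix.trace hw
    rw [Matrix.trace_sum, Finset.sum_congr rfl fun x hx => trace_eq_of_isConj ((hmem x).mp hx),
      Finset.sum_const, nsmul_eq_mul, ← Set.ncard_eq_toFinset_card] at htrace
    simpa [Matrix.trace, Matrix.scalar_apply] using htrace

theorem HasScalarCommutant.exists_eq_scalar_of_coprime [Finite G] (hρ : HasScalarCommutant ρ)
    {g : G} (hcop : (conjugatesOf g).ncard.Coprime (Fintype.card n)) (htr : (ρ g).trace ≠ 0) :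
    ∃ z, ρ g = Matrix.scalar n z := by
  have hm : orderOf g ≠ 0 := (orderOf_pos g).ne'
  have hpow : ρ g ^ orderOf g = 1 := by rw [← map_pow, pow_orderOf_eq_one, map_one]
  have hint : IsIntegral ℤ ((ρ g).trace / Fintype.card n) := by
    obtain ⟨w, hw, hwtr⟩ := hρ.exists_isIntegral_class_sum g
    obtain ⟨u, v, huv⟩ := Nat.isCoprime_iff_coprime.mpr hcop
    have : Nonempty n := not_isEmpty_iff.mp fun _ => htr (by simp [Matrix.trace])
    have hn : (Fintype.card n : ℂ) ≠ 0 := by exact_mod_cast Fintype.card_ne_zero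
    have hbezout : (ρ g).trace / Fintype.card n = u * w + v * (ρ g).trace := by
      have huv' : (u : ℂ) * (conjugatesOf g).ncard + v * (Fintype.card n : ℂ) = 1 := by
        exact_mod_cast huv
      rw [div_eq_iff hn]
      linear_combination (-(ρ g).trace) * huv' + u * hwtr
    rw [hbezout]
    exact ((isIntegral_algebraMap (R := ℤ) (x := u)).mul hw).add
      ((isIntegral_algebraMap (R := ℤ) (x := v)).mul (isIntegral_trace_apply g))
  obtain ⟨z, hz⟩ := roots_charpoly_eq_replicate_of_isIntegral hm hpow hint htr
  exact ⟨z, eq_scalar_of_roots_charpoly_eq_replicate hm hpow hz⟩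

end ScalarCommutant

section RegularRepresentation

theorem trace_mulLeft_pi_matrix {ι : Type*} [Fintype ι] {n : ι → Type*} [∀ i, Fintype (n i)]
    {R : Type*} [CommRing R] (x : Π i, Matrix (n i) (n i) R) :
    LinearMap.trace R _ (LinearMap.mulLeft R x) = ∑ i, Fintype.card (n i) * (x i).trace := by
  classical
  let b := Pi.basis fun i => Matrix.stdBasis R (n i) (n i)
  have hdiag (i : ι) (r c : n i) :
      (LinearMap.toMatrix b b (LinearMap.mulLeft R x)).diag ⟨i, r, c⟩ = x i r r := by
    rw [Matrix.diag_apply, LinearMap.toMatrix_apply, LinearMap.mulLeft_apply, Pi.basis_apply,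
      Matrix.stdBasis_eq_single]
    simp [b, Matrix.stdBasis, Matrix.mul_apply, Matrix.single_apply]
  rw [LinearMap.trace_eq_matrix_trace R b, Matrix.trace, Fintype.sum_sigma]
  simp only [Fintype.sum_prod_type, hdiag, Finset.sum_const, Finset.card_univ, nsmul_eq_mul,
    ← Finset.mul_sum, Matrix.trace, Matrix.diag_apply]

theorem trace_mulLeft_single {G R : Type*} [Group G] [Fintype G] [DecidableEq G] [CommRing R]
    (g : G) :
    LinearMap.trace R (MonoidAlgebra R G) (LinearMap.mulLeft R (MonoidAlgebra.single g 1)) =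
      if g = 1 then (Fintype.card G : R) else 0 := by
  let b := MonoidAlgebra.basis G R
  have hdiag (x : G) : (LinearMap.toMatrix b b
      (LinearMap.mulLeft R (MonoidAlgebra.single g 1))).diag x = if g = 1 then 1 else 0 := by
    rw [Matrix.diag_apply, LinearMap.toMatrix_apply, MonoidAlgebra.basis_apply,
      LinearMap.mulLeft_apply, MonoidAlgebra.single_mul_single, one_mul,
      ← MonoidAlgebra.basis_apply, Module.Basis.repr_self, Finsupp.single_apply]
    simp
  rw [LinearMap.trace_eq_matrix_trace R b, Matrix.trace, Finset.sum_congr rfl fun x _ => hdiag x]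
  simp

theorem exists_hasScalarCommutant_family (G : Type*) [Group G] [Fintype G] [DecidableEq G] :
    ∃ (m : ℕ) (d : Fin m → ℕ) (ρ : ∀ i, G →* Matrix (Fin (d i)) (Fin (d i)) ℂ),
      (∀ i, d i ≠ 0 ∧ HasScalarCommutant (ρ i)) ∧
      ∀ g, ∑ i, d i * (ρ i g).trace = if g = 1 then (Fintype.card G : ℂ) else 0 := by
  obtain ⟨m, d, hd, ⟨φ⟩⟩ := IsSemisimpleRing.exists_algEquiv_pi_matrix_of_isAlgClosed
    ℂ (MonoidAlgebra ℂ G)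
  let π (i : Fin m) : MonoidAlgebra ℂ G →ₐ[ℂ] Matrix (Fin (d i)) (Fin (d i)) ℂ :=
    (Pi.evalAlgHom ℂ _ i).comp φ.toAlgHom
  refine ⟨m, d, fun i => (π i : _ →* _).comp (MonoidAlgebra.of ℂ G),
    fun i => ⟨(hd i).out, fun M hM => ?_⟩, fun g => ?_⟩
  · have hcomm (a : MonoidAlgebra ℂ G) : Commute (π i a) M := by
      induction a using MonoidAlgebra.induction_linear with
      | zero => simp
      | add a b ha hb => rw [map_add]; exact ha.add_left hb
      | single g r =>
        rw [← mul_one r, ← smul_eq_mul, ← MonoidAlgebra.smul_single, map_smul]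
        exact (hM g).smul_left r
    obtain ⟨c, hc⟩ := Matrix.mem_range_scalar_iff_commute_single.mpr fun r s _ => by
      simpa [π] using hcomm (φ.symm (Pi.single i (Matrix.single r s 1)))
    exact ⟨c, hc.symm⟩
  · have hconj : φ.toLinearEquiv.conj (LinearMap.mulLeft ℂ (MonoidAlgebra.single g 1)) =
        LinearMap.mulLeft ℂ (φ (MonoidAlgebra.single g 1)) := by
      ext; simp [LinearEquiv.conj_apply]
    rw [← trace_mulLeft_single g, ← LinearMap.trace_conj' _ φ.toLinearEquiv, hconj,
      trace_mulLeft_pi_matrix]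
    simp [π]

end RegularRepresentation

section BurnsideTheorem

theorem natCast_dvd_one_of_isIntegral {p : ℕ} {b : ℂ} (hb : IsIntegral ℤ b) (h : 1 + p * b = 0) :
    p ∣ 1 := by
  have hp : (p : ℂ) ≠ 0 := fun hp => by simp [hp] at h
  have hbq : b = algebraMap ℚ ℂ (-(p : ℚ)⁻¹) := by
    simp only [map_neg, map_inv₀, map_natCast]
    field_simp
    linear_combination h
  obtain ⟨z, hz⟩ := IsIntegrallyClosed.isIntegral_iff.mp
    ((isIntegral_algebraMap_iff (algebraMap ℚ ℂ).injective).mp (hbq ▸ hb))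
  have hz' : b = z := by rw [hbq, ← hz]; simp
  have hdvd : (p : ℤ) ∣ 1 := ⟨-z, by
    rw [hz'] at h
    have : (1 : ℤ) + p * z = 0 := by exact_mod_cast h
    linarith⟩
  exact_mod_cast hdvd

-- The trivial components of the regular representation are counted by summing the character of
-- the regular representation over the whole group.
theorem sum_trivial_components_eq_one {G ι : Type*} [Group G] [Fintype G] [DecidableEq G]
    [Fintype ι] {d : ι → ℕ} {ρ : ∀ i, G →* Matrix (Fin (d i)) (Fin (d i)) ℂ}
    [DecidablePred fun i => ∀ h, ρ i h = 1]
    (hd : ∀ i, d i ≠ 0) (hρ : ∀ i, HasScalarCommutant (ρ i))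
    (htrace : ∀ g, ∑ i, d i * (ρ i g).trace = if g = 1 then (Fintype.card G : ℂ) else 0) (g : G) :
    ∑ i with ∀ h, ρ i h = 1, d i * (ρ i g).trace = 1 := by
  have hdim {i : ι} (hi : ∀ h, ρ i h = 1) : d i = 1 := by
    have := (hρ i).subsingleton_of_trivial hi
    have := Fin.subsingleton_iff_le_one.mp this
    have := hd i
    omega
  have hcomponent (i : ι) : ∑ h, (d i * (ρ i h).trace : ℂ) =
      if ∀ h, ρ i h = 1 then (Fintype.card G : ℂ) else 0 := by
    split_ifs with hi
    · simp [hi, hdim hi]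
    · obtain ⟨k, hk⟩ := not_forall.mp hi
      rw [← Finset.mul_sum, ← Matrix.trace_sum, (hρ i).sum_eq_zero hk, Matrix.trace_zero,
        mul_zero]
  have hcount : ((Finset.univ.filter fun i => ∀ h, ρ i h = 1).card : ℂ) * Fintype.card G =
      1 * Fintype.card G := by
    have htotal := Finset.sum_congr (rfl : (Finset.univ : Finset G) = _) fun h _ => htrace h
    rw [Finset.sum_comm, Finset.sum_congr rfl fun i _ => hcomponent i, ← Finset.sum_filter,
      Finset.sum_const, nsmul_eq_mul] at htotal
    simpa using htotal
  have hterm (i) (hi : i ∈ Finset.univ.filter fun i => ∀ h, ρ i h = 1) :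
      (d i * (ρ i g).trace : ℂ) = 1 := by
    have hi := (Finset.mem_filter.mp hi).2
    simp [hi g, hdim hi]
  rw [Finset.sum_congr rfl hterm, Finset.sum_const, nsmul_one]
  exact mul_right_cancel₀ (by exact_mod_cast Fintype.card_ne_zero) hcount

-- Otherwise every nontrivial component contributes a multiple of `p` to the regular character at
-- `g`, which vanishes, while the trivial component contributes `1`.
theorem exists_nontrivial_rep_eq_scalar {G : Type*} [Group G] [Finite G] {g : G} (hg : g ≠ 1)
    {p k : ℕ} (hp : p.Prime) (hclass : (conjugatesOf g).ncard = p ^ k) :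
    ∃ (d : ℕ) (ρ : G →* Matrix (Fin d) (Fin d) ℂ),
      (∃ h, ρ h ≠ 1) ∧ ∃ z, ρ g = Matrix.scalar (Fin d) z := by
  classical
  have := Fintype.ofFinite G
  by_contra! hcon
  obtain ⟨m, d, ρ, hρ, htrace⟩ := exists_hasScalarCommutant_family G
  have hmultiple (i : Fin m) (hi : ¬ ∀ h, ρ i h = 1) :
      ∃ b : ℂ, IsIntegral ℤ b ∧ d i * (ρ i g).trace = p * b := by
    by_cases hpd : p ∣ d i
    · obtain ⟨c, hc⟩ := hpd
      exact ⟨c * (ρ i g).trace, (isIntegral_natCast c).mul (isIntegral_trace_apply g),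
        by linear_combination (ρ i g).trace * (by exact_mod_cast hc : (d i : ℂ) = p * c)⟩
    · refine ⟨0, isIntegral_zero, ?_⟩
      suffices (ρ i g).trace = 0 by simp [this]
      by_contra htr
      obtain ⟨z, hz⟩ := (hρ i).2.exists_eq_scalar_of_coprime
        (by rw [hclass, Fintype.card_fin]
            exact ((hp.coprime_iff_not_dvd).mpr hpd).pow_left k) htr
      exact hcon (d i) (ρ i) (not_forall.mp hi) z hz
  choose! b hb_int hb using hmultiple
  have hsum := htrace g
  rw [if_neg hg, ← Finset.sum_filter_add_sum_filter_not Finset.univ fun i => ∀ h, ρ i h = 1,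
    sum_trivial_components_eq_one (fun i => (hρ i).1) (fun i => (hρ i).2) htrace,
    Finset.sum_congr rfl fun i hi => hb i (Finset.mem_filter.mp hi).2, ← Finset.mul_sum] at hsum
  have hint : IsIntegral ℤ (∑ i with ¬ ∀ h, ρ i h = 1, b i) :=
    IsIntegral.sum _ fun i hi => hb_int i (Finset.mem_filter.mp hi).2
  exact hp.not_dvd_one (natCast_dvd_one_of_isIntegral hint hsum)

variable {G : Type*} [Group G]

theorem center_eq_top_of_ne_one_of_mem [IsSimpleGroup G] {g : G} (hg : g ≠ 1)
    (hmem : g ∈ Subgroup.center G) : Subgroup.center G = ⊤ :=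
  (inferInstance : (Subgroup.center G).Normal).eq_bot_or_eq_top.resolve_left fun h =>
    hg (Subgroup.mem_bot.mp (h ▸ hmem))

theorem center_eq_top_of_ncard_conjugatesOf_eq_prime_pow [Finite G] [IsSimpleGroup G] {g : G}
    (hg : g ≠ 1) {p k : ℕ} (hp : p.Prime) (hclass : (conjugatesOf g).ncard = p ^ k) :
    Subgroup.center G = ⊤ := by
  obtain ⟨d, ρ, ⟨h, hh⟩, z, hz⟩ := exists_nontrivial_rep_eq_scalar hg hp hclass
  have hker : ρ.ker = ⊥ := ρ.normal_ker.eq_bot_or_eq_top.resolve_right fun htop =>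
    hh (ρ.mem_ker.mp (htop ▸ Subgroup.mem_top h))
  refine center_eq_top_of_ne_one_of_mem hg (Subgroup.mem_center_iff.mpr fun x => ?_)
  refine (MonoidHom.ker_eq_bot_iff ρ).mp hker ?_
  rw [map_mul, map_mul, hz]
  exact (Matrix.scalar_commute z (fun r => Commute.all _ _) (ρ x)).symm

theorem ncard_conjugatesOf_eq_index_centralizer (g : G) :
    (conjugatesOf g).ncard = (Subgroup.centralizer {g}).index := by
  have hindex := MulAction.index_stabilizer (ConjAct G) g
  rw [ConjAct.orbit_eq_carrier_conjClasses, ConjAct.stabilizer_eq_centralizer] at hindex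
  exact hindex.symm

theorem exists_eq_prime_pow_of_card_primeFactors_le_one {n : ℕ} (hn : n ≠ 0)
    (h : n.primeFactors.card ≤ 1) : ∃ p k, p.Prime ∧ n = p ^ k := by
  rcases h.eq_or_lt with h | h
  · obtain ⟨p, k, hp, -, rfl⟩ := (isPrimePow_nat_iff n).mp
      (isPrimePow_iff_card_primeFactors_eq_one.mpr h)
    exact ⟨p, k, hp, rfl⟩
  · have : n = 1 := (Nat.primeFactors_eq_empty.mp
      (Finset.card_eq_zero.mp (Nat.lt_one_iff.mp h))).resolve_left hn
    exact ⟨2, 0, Nat.prime_two, this⟩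

theorem exists_ne_one_sylow_le_centralizer [Finite G] {p : ℕ} [Fact p.Prime]
    (hp : p ∣ Nat.card G) (P : Sylow p G) :
    ∃ z : G, z ≠ 1 ∧ (P : Subgroup G) ≤ Subgroup.centralizer {z} := by
  have : Nontrivial P := (Subgroup.nontrivial_iff_ne_bot _).mpr (P.ne_bot_of_dvd_card hp)
  have := P.isPGroup'.center_nontrivial
  obtain ⟨⟨z, hz⟩, hz1⟩ := exists_ne (1 : Subgroup.center P)
  refine ⟨z, fun h => hz1 (Subtype.ext (Subtype.ext h)), fun x hx => ?_⟩
  rw [Subgroup.mem_centralizer_singleton_iff]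
  exact congrArg Subtype.val (Subgroup.mem_center_iff.mp hz ⟨x, hx⟩)

theorem center_eq_top_of_card_primeFactors_le_two [Finite G] [IsSimpleGroup G]
    (h : (Nat.card G).primeFactors.card ≤ 2) : Subgroup.center G = ⊤ := by
  obtain ⟨r, hr, hrd⟩ := Nat.exists_prime_and_dvd
    (Finite.one_lt_card_iff_nontrivial.mpr (inferInstance : Nontrivial G)).ne'
  have : Fact r.Prime := ⟨hr⟩
  let P : Sylow r G := default
  obtain ⟨z, hz, hPz⟩ := exists_ne_one_sylow_le_centralizer hrd P
  set n := (Subgroup.centralizer {z}).index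
  have hn : n ≠ 0 := Subgroup.index_ne_zero_of_finite
  have hrn : ¬ r ∣ n := fun hd => P.not_dvd_index (hd.trans (Subgroup.index_dvd_of_le hPz))
  have hsub : n.primeFactors ⊆ (Nat.card G).primeFactors.erase r :=
    Finset.subset_erase.mpr ⟨Nat.primeFactors_mono (Subgroup.index_dvd_card _) Nat.card_pos.ne',
      fun hmem => hrn (Nat.dvd_of_mem_primeFactors hmem)⟩
  have hcard : n.primeFactors.card ≤ 1 := by
    have := Finset.card_le_card hsub
    rw [Finset.card_erase_of_mem (Nat.mem_primeFactors.mpr ⟨hr, hrd, Nat.card_pos.ne'⟩)] at this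
    omega
  obtain ⟨p, k, hp, hpk⟩ := exists_eq_prime_pow_of_card_primeFactors_le_one hn hcard
  exact center_eq_top_of_ncard_conjugatesOf_eq_prime_pow hz hp
    ((ncard_conjugatesOf_eq_index_centralizer z).trans hpk)

theorem isSolvable_of_card_primeFactors_le_two [Finite G]
    (h : (Nat.card G).primeFactors.card ≤ 2) : Group.IsSolvable G := by
  induction hn : Nat.card G using Nat.strong_induction_on generalizing G with
  | _ n ih =>
    subst hn
    have hdvd {m : ℕ} (hm : m ∣ Nat.card G) : m.primeFactors.card ≤ 2 :=
      (Finset.card_le_card (Nat.primeFactors_mono hm Nat.card_pos.ne')).trans h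
    by_cases hN : ∃ N : Subgroup G, N.Normal ∧ N ≠ ⊥ ∧ N ≠ ⊤
    · obtain ⟨N, hNnormal, hbot, htop⟩ := hN
      have hmul := N.card_mul_index
      have hindex : 1 < N.index := N.one_lt_index_of_ne_top htop
      have hcard : 1 < Nat.card N := N.one_lt_card_iff_ne_bot.mpr hbot
      have := ih (Nat.card N) (by nlinarith) (hdvd N.card_subgroup_dvd_card) rfl
      have := ih (Nat.card (G ⧸ N)) (by rw [← Subgroup.index]; nlinarith)
        (hdvd N.card_quotient_dvd_card) rfl
      exact Group.isSolvable_of_ker_le_range N.subtype (QuotientGroup.mk' N) (by simp)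
    · cases subsingleton_or_nontrivial G
      · infer_instance
      · have : IsSimpleGroup G := ⟨fun N hNnormal => by by_contra! h; exact hN ⟨N, hNnormal, h⟩⟩
        have hcenter := center_eq_top_of_card_primeFactors_le_two h
        exact Group.isSolvable_of_comm fun a b =>
          Subgroup.mem_center_iff.mp (hcenter ▸ Subgroup.mem_top b) a

end BurnsideTheorem

section Subgroups

variable {G : Type*} [Group G]

theorem card_mul_relIndex_of_le {K H : Subgroup G} (hKH : K ≤ H) :
    Nat.card K * K.relIndex H = Nat.card H := by
  rw [← Subgroup.relIndex_bot_left, Subgroup.relIndex_mul_relIndex ⊥ K H bot_le hKH,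
    Subgroup.relIndex_bot_left]

variable [Finite G]

theorem eq_of_le_of_card_lt_mul {K H : Subgroup G} {m : ℕ} (hKH : K ≤ H)
    (hm : ∀ q, q.Prime → q ∣ Nat.card H → m ≤ q) (h : Nat.card H < m * Nat.card K) : K = H := by
  refine le_antisymm hKH (Subgroup.relIndex_eq_one.mp ?_)
  by_contra hne
  obtain ⟨q, hq, hdvd⟩ := Nat.exists_prime_and_dvd hne
  have hq_le : q ≤ K.relIndex H :=
    Nat.le_of_dvd (Nat.pos_of_dvd_of_pos (K.relIndex_dvd_card H) Nat.card_pos) hdvd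
  have hle : m * Nat.card K ≤ Nat.card K * K.relIndex H := by
    rw [mul_comm]
    exact Nat.mul_le_mul_left _ ((hm q hq (hdvd.trans (K.relIndex_dvd_card H))).trans hq_le)
  rw [card_mul_relIndex_of_le hKH] at hle
  omega

theorem eq_of_le_of_card_lt_two_mul {K H : Subgroup G} (hKH : K ≤ H)
    (h : Nat.card H < 2 * Nat.card K) : K = H :=
  eq_of_le_of_card_lt_mul hKH (fun _ hq _ => hq.two_le) h

theorem ncard_le_card_of_subset {S : Set G} {H : Subgroup G} (h : S ⊆ H) :
    S.ncard ≤ Nat.card H :=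
  Set.ncard_le_ncard h (Set.toFinite _)

theorem ncard_mul_card_le_of_forall_coset (H : Subgroup G) {A S : Set G} {m : ℕ} (hAS : A ⊆ S)
    (hS : ∀ h ∈ H, ∀ s ∈ S, h * s ∈ S)
    (hA : ∀ x ∈ A, ((H : Set G) ∩ (· * x) ⁻¹' A).ncard ≤ m) :
    A.ncard * Nat.card H ≤ S.ncard * m := by
  classical
  have := Fintype.ofFinite G
  rw [Set.ncard_eq_toFinset_card' A, Set.ncard_eq_toFinset_card' S]
  let r (a s : G) : Prop := s * a⁻¹ ∈ H
  refine Finset.card_mul_le_card_mul r (fun a ha => ?_) (fun s _ => ?_)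
  · have hcoset (h : G) (hh : h ∈ (H : Set G)) :
        h * a ∈ (S.toFinset.bipartiteAbove r a : Set G) := by
      simpa [r] using ⟨hS h hh a (hAS (Set.mem_toFinset.mp ha)), hh⟩
    rw [← Set.ncard_coe_finset]
    exact Set.ncard_le_ncard_of_injOn (· * a) hcoset (mul_left_injective a).injOn
  · rcases (A.toFinset.bipartiteBelow r s).eq_empty_or_nonempty with h | h
    · simp [h]
    obtain ⟨x, hx⟩ := h
    simp only [Finset.mem_bipartiteBelow, Set.mem_toFinset] at hx
    refine le_trans ?_ (hA x hx.1)
    rw [← Set.ncard_coe_finset]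
    refine Set.ncard_le_ncard_of_injOn (· * x⁻¹) (fun a ha => ?_) (mul_left_injective _).injOn
    simp only [Finset.coe_bipartiteBelow, Set.mem_toFinset, Set.mem_ofPred_eq] at ha
    exact ⟨by simpa using H.mul_mem (H.inv_mem ha.2) hx.2, by simpa using ha.1⟩

theorem prime_dvd_relIndex_of_not_le {p : ℕ} [Fact p.Prime] {A K Q : Subgroup G}
    [IsMulCommutative A] (hQ : IsPGroup p Q) (hQA : Q ≤ A) (hQK : ¬ Q ≤ K) :
    p ∣ K.relIndex A := by
  obtain ⟨n, hn⟩ := hQ.index (K.subgroupOf Q)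
  change K.relIndex Q = p ^ n at hn
  have hn0 : n ≠ 0 := by
    rintro rfl
    exact hQK (Subgroup.relIndex_eq_one.mp hn)
  have hdvd := (K.subgroupOf A).relIndex_dvd_index_of_normal (Q.subgroupOf A)
  rw [Subgroup.relIndex_subgroupOf hQA, hn] at hdvd
  exact (dvd_pow_self p hn0).trans hdvd

theorem prime_dvd_relIndex_centralizer_singleton {p : ℕ} [Fact p.Prime] {A Q : Subgroup G}
    [IsMulCommutative A] (hQ : IsPGroup p Q) (hQA : Q ≤ A) {y : G}
    (hy : y ∉ Subgroup.centralizer (Q : Set G)) :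
    p ∣ (Subgroup.centralizer {y}).relIndex A := by
  refine prime_dvd_relIndex_of_not_le hQ hQA fun hle => hy ?_
  exact Subgroup.mem_centralizer_iff.mpr fun u hu =>
    Subgroup.mem_centralizer_singleton_iff.mp (hle hu)

end Subgroups

section Inverted

variable {G : Type*} [Group G] {θ : G ≃* G}

/-- The set of elements inverted by an automorphism. It is a subgroup only if its elements
commute. -/
def inverted (θ : G ≃* G) : Set G := {g | θ g = g⁻¹}

/-- The automorphism `θ` followed by conjugation by `x`. When `θ` inverts `x`, the elements
inverted by `twist θ x` form the translate `inverted θ * x⁻¹`. -/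
def twist (θ : G ≃* G) (x : G) : G ≃* G := θ.trans (MulAut.conj x)

theorem one_mem_inverted : (1 : G) ∈ inverted θ := by
  simp [inverted]

theorem mul_mem_inverted_iff {x y : G} (hx : x ∈ inverted θ) (hy : y ∈ inverted θ) :
    x * y ∈ inverted θ ↔ x * y = y * x := by
  change θ (x * y) = (x * y)⁻¹ ↔ _
  rw [map_mul, hx, hy, ← mul_inv_rev, inv_inj, eq_comm]

theorem inverted_twist {x : G} (hx : x ∈ inverted θ) :
    inverted (twist θ x) = (· * x) ⁻¹' inverted θ := by
  ext g
  change x * θ g * x⁻¹ = g⁻¹ ↔ θ (g * x) = (g * x)⁻¹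
  rw [map_mul, hx, mul_inv_rev, mul_assoc, ← eq_inv_mul_iff_mul_eq]

theorem ncard_inverted_twist {x : G} (hx : x ∈ inverted θ) :
    (inverted (twist θ x)).ncard = (inverted θ).ncard := by
  rw [inverted_twist hx, Set.ncard_preimage_of_injective_subset_range (mul_left_injective x)]
  exact fun g _ => ⟨g * x⁻¹, inv_mul_cancel_right g x⟩

theorem isMulCommutative_of_subset_inverted {A : Subgroup G} (hA : (A : Set G) ⊆ inverted θ) :
    IsMulCommutative A :=
  ⟨⟨fun u v => Subtype.ext ((mul_mem_inverted_iff (hA u.2) (hA v.2)).mp (hA (u * v).2))⟩⟩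

theorem closure_subset_inverted {S : Set G} (hS : S ⊆ inverted θ)
    (hcomm : ∀ x ∈ S, ∀ y ∈ S, x * y = y * x) :
    (Subgroup.closure S : Set G) ⊆ inverted θ := by
  have := Subgroup.isMulCommutative_closure hcomm
  intro x hx
  induction hx using Subgroup.closure_induction with
  | mem x hx => exact hS hx
  | one => exact one_mem_inverted
  | mul x y hx hy hx' hy' =>
    have hxy := mul_comm' (⟨x, hx⟩ : Subgroup.closure S) ⟨y, hy⟩
    exact (mul_mem_inverted_iff hx' hy').mpr (congrArg Subtype.val hxy)
  | inv x _ hx' =>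
    change θ x⁻¹ = x⁻¹⁻¹
    rw [map_inv, hx']

theorem apply_apply_of_mem_closure_inverted {x : G} (hx : x ∈ Subgroup.closure (inverted θ)) :
    θ (θ x) = x := by
  refine MonoidHom.eqOn_closure (f := (θ.trans θ).toMonoidHom) (g := MonoidHom.id G)
    (fun g hg => ?_) hx
  change θ (θ g) = g
  rw [hg, map_inv, hg, inv_inv]

theorem apply_mem_closure {S : Set G} (hS : S ⊆ inverted θ) {x : G}
    (hx : x ∈ Subgroup.closure S) : θ x ∈ Subgroup.closure S := by
  refine (Subgroup.closure_le ((Subgroup.closure S).comap θ.toMonoidHom)).mpr (fun g hg => ?_) hx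
  change θ g ∈ Subgroup.closure S
  rw [hS hg]
  exact inv_mem (Subgroup.subset_closure hg)

theorem ncard_inverted_eq_card_filter [Fintype G] [DecidableEq G] (θ : G ≃* G) :
    (inverted θ).ncard = (Finset.univ.filter fun g : G => θ g = g⁻¹).card := by
  rw [← Set.ncard_coe_finset, Finset.coe_filter_univ]
  rfl

variable [Finite G]

theorem exists_card_mul_ncard_inter_inverted_twist_ge (θ : G ≃* G) (H : Subgroup G) :
    ∃ x ∈ inverted θ, (inverted θ).ncard * Nat.card H ≤
      Nat.card G * ((H : Set G) ∩ inverted (twist θ x)).ncard := by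
  obtain ⟨x, hx, hmax⟩ := Set.exists_max_image (inverted θ)
    (fun x => ((H : Set G) ∩ inverted (twist θ x)).ncard) (Set.toFinite _) ⟨1, one_mem_inverted⟩
  refine ⟨x, hx, ?_⟩
  rw [← Set.ncard_univ G]
  refine ncard_mul_card_le_of_forall_coset H (Set.subset_univ _) (fun _ _ _ _ => trivial)
    fun y hy => ?_
  rw [← inverted_twist hy]
  exact hmax y hy

theorem two_mul_ncard_inter_inverted_le {H : Subgroup G} {h : G} (hH : h ∈ H)
    (hθ : h ∈ inverted θ) :
    2 * ((H : Set G) ∩ inverted θ).ncard ≤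
      Nat.card H + Nat.card (H ⊓ Subgroup.centralizer {h} : Subgroup G) := by
  set J := (H : Set G) ∩ inverted θ
  have hunion : ((h * ·) '' J ∪ J).ncard ≤ Nat.card H := by
    refine ncard_le_card_of_subset (Set.union_subset ?_ Set.inter_subset_left)
    rintro _ ⟨j, hj, rfl⟩
    exact H.mul_mem hH hj.1
  have hinter : ((h * ·) '' J ∩ J).ncard ≤
      Nat.card (H ⊓ Subgroup.centralizer {h} : Subgroup G) := by
    rw [← Set.image_inter_preimage, Set.ncard_image_of_injective _ (mul_right_injective h)]
    refine ncard_le_card_of_subset fun j hj => ⟨hj.1.1, ?_⟩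
    exact Subgroup.mem_centralizer_singleton_iff.mpr
      ((mul_mem_inverted_iff hθ hj.1.2).mp hj.2.2).symm
  have hsum := Set.ncard_union_add_ncard_inter ((h * ·) '' J) J
  rw [Set.ncard_image_of_injective _ (mul_right_injective h)] at hsum
  omega

theorem subset_inverted_of_three_mul_card_lt {H : Subgroup G}
    (h : 3 * Nat.card H < 4 * ((H : Set G) ∩ inverted θ).ncard) :
    (H : Set G) ⊆ inverted θ := by
  have hclosure : Subgroup.closure ((H : Set G) ∩ inverted θ) = H := by
    have := ncard_le_card_of_subset (Subgroup.subset_closure (k := (H : Set G) ∩ inverted θ))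
    exact eq_of_le_of_card_lt_two_mul ((Subgroup.closure_le H).mpr Set.inter_subset_left) (by omega)
  rw [← hclosure]
  refine closure_subset_inverted Set.inter_subset_right fun x hx y hy => ?_
  have hcentral : H ⊓ Subgroup.centralizer {y} = H := by
    have := two_mul_ncard_inter_inverted_le hy.1 hy.2
    exact eq_of_le_of_card_lt_two_mul inf_le_left (by omega)
  exact Subgroup.mem_centralizer_singleton_iff.mp (inf_eq_left.mp hcentral hx.1)

-- If `a` is inverted and `b` is fixed, then `(a * b) * (θ (a * b))⁻¹ = a ^ 2`, so `a * b`
-- determines `a` in a group of odd order.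
theorem ncard_inter_inverted_mul_card_fixed_le {H : Subgroup G} (hodd : Odd (Nat.card H)) :
    ((H : Set G) ∩ inverted θ).ncard *
      Nat.card (H ⊓ θ.toMonoidHom.eqLocus (MonoidHom.id G) : Subgroup G) ≤ Nat.card H := by
  change _ * (SetLike.coe (H ⊓ θ.toMonoidHom.eqLocus (MonoidHom.id G))).ncard ≤ _
  rw [← Set.ncard_prod]
  refine Set.ncard_le_ncard_of_injOn (t := (H : Set G)) (fun q : G × G => q.1 * q.2)
    (fun q hq => H.mul_mem hq.1.1 hq.2.1) ?_ (Set.toFinite _)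
  rintro ⟨a, b⟩ ⟨⟨haH, ha⟩, -, hb⟩ ⟨a', b'⟩ ⟨⟨ha'H, ha'⟩, -, hb'⟩ hab
  have sq_eq {x y : G} (hx : θ x = x⁻¹) (hy : θ y = y) : x ^ 2 = x * y * (θ (x * y))⁻¹ := by
    rw [map_mul, hx, hy, mul_inv_rev, inv_inv, mul_assoc, mul_inv_cancel_left, pow_two]
  have hsq : a ^ 2 = a' ^ 2 := by
    rw [sq_eq ha hb, sq_eq ha' hb', show a * b = a' * b' from hab]
  have haa' : (⟨a, haH⟩ : H) = ⟨a', ha'H⟩ :=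
    (powCoprime hodd.coprime_two_right).injective (Subtype.ext hsq)
  obtain rfl : a = a' := congrArg Subtype.val haa'
  exact Prod.ext rfl (mul_left_cancel hab)

theorem subset_inverted_of_odd_card {H : Subgroup G} {m : ℕ} (hodd : Odd (Nat.card H))
    (hm : ∀ q, q.Prime → q ∣ Nat.card H → m ≤ q)
    (h : Nat.card H < m * ((H : Set G) ∩ inverted θ).ncard) : (H : Set G) ⊆ inverted θ := by
  have hclosure : Subgroup.closure ((H : Set G) ∩ inverted θ) = H := by
    refine eq_of_le_of_card_lt_mul ((Subgroup.closure_le H).mpr Set.inter_subset_left) hm ?_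
    exact h.trans_le (Nat.mul_le_mul_left m (ncard_le_card_of_subset Subgroup.subset_closure))
  have hfixed : H ⊓ θ.toMonoidHom.eqLocus (MonoidHom.id G) = ⊥ := by
    have hcard := ncard_inter_inverted_mul_card_fixed_le (θ := θ) hodd
    refine (eq_of_le_of_card_lt_mul bot_le (m := m) (fun q hq hdvd => hm q hq
      (hdvd.trans (Subgroup.card_dvd_of_le inf_le_left))) ?_).symm
    rw [Subgroup.card_bot, mul_one]
    exact Nat.lt_of_mul_lt_mul_left ((hcard.trans_lt h).trans_eq (mul_comm _ _))
  have hmap (u : H) : θ u ∈ H :=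
    hclosure.le (apply_mem_closure Set.inter_subset_right (hclosure.ge u.2))
  let φ : H →* H := (θ.toMonoidHom.comp H.subtype).codRestrict H hmap
  have hfree : MonoidHom.FixedPointFree φ := fun u hu => Subtype.ext <| Subgroup.mem_bot.mp <|
    hfixed ▸ Subgroup.mem_inf.mpr ⟨u.2, congrArg Subtype.val hu⟩
  have hinvol : Function.Involutive φ := fun u => Subtype.ext <|
    apply_apply_of_mem_closure_inverted <|
      Subgroup.closure_mono Set.inter_subset_right (hclosure.ge u.2)
  intro u hu
  exact congrArg Subtype.val (congrFun (hfree.coe_eq_inv_of_involutive hinvol) ⟨u, hu⟩)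

theorem mul_ncard_inverted_sdiff_centralizer_le {A : Subgroup G} {m : ℕ}
    (hA : (A : Set G) ⊆ inverted θ)
    (hm : ∀ y ∉ Subgroup.centralizer (A : Set G), m ≤ (Subgroup.centralizer {y}).relIndex A) :
    m * (inverted θ \ Subgroup.centralizer (A : Set G)).ncard ≤
      (Subgroup.centralizer (A : Set G) : Set G)ᶜ.ncard := by
  have := isMulCommutative_of_subset_inverted hA
  set C := Subgroup.centralizer (A : Set G)
  have hAC : A ≤ C := Subgroup.le_centralizer A
  rcases m.eq_zero_or_pos with rfl | hm_pos
  · simp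
  have hcoset (y : G) (hy : y ∈ inverted θ \ C) :
      ((A : Set G) ∩ (· * y) ⁻¹' (inverted θ \ C)).ncard ≤ Nat.card A / m := by
    have hsub : (A : Set G) ∩ (· * y) ⁻¹' (inverted θ \ C) ⊆
        (Subgroup.centralizer {y} ⊓ A : Subgroup G) := fun u hu =>
      ⟨Subgroup.mem_centralizer_singleton_iff.mpr
        ((mul_mem_inverted_iff (hA hu.1) hy.1).mp hu.2.1), hu.1⟩
    rw [Nat.le_div_iff_mul_le hm_pos, ← card_mul_relIndex_of_le (K := Subgroup.centralizer {y} ⊓ A)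
      inf_le_right, Subgroup.inf_relIndex_right]
    exact Nat.mul_le_mul (ncard_le_card_of_subset hsub) (hm y hy.2)
  have hcount := ncard_mul_card_le_of_forall_coset A (S := (C : Set G)ᶜ) (fun x hx => hx.2)
    (fun u hu s hs hus => hs ((C.mul_mem_cancel_left (hAC hu)).mp hus)) hcoset
  refine Nat.le_of_mul_le_mul_right (c := Nat.card A) ?_ Nat.card_pos
  calc m * (inverted θ \ C).ncard * Nat.card A
      = (inverted θ \ C).ncard * Nat.card A * m := by ring
    _ ≤ (C : Set G)ᶜ.ncard * (Nat.card A / m) * m := Nat.mul_le_mul_right m hcount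
    _ = (C : Set G)ᶜ.ncard * (Nat.card A / m * m) := by ring
    _ ≤ (C : Set G)ᶜ.ncard * Nat.card A := Nat.mul_le_mul_left _ (Nat.div_mul_le_self _ m)

theorem mul_ncard_inverted_add_card_centralizer_le {A : Subgroup G} {m : ℕ}
    (hA : (A : Set G) ⊆ inverted θ)
    (hm : ∀ y ∉ Subgroup.centralizer (A : Set G), m ≤ (Subgroup.centralizer {y}).relIndex A) :
    m * (inverted θ).ncard + Nat.card (Subgroup.centralizer (A : Set G)) ≤
      m * ((Subgroup.centralizer (A : Set G) : Set G) ∩ inverted θ).ncard + Nat.card G := by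
  have hinverted := Set.ncard_inter_add_ncard_sdiff_eq_ncard (inverted θ)
    (Subgroup.centralizer (A : Set G))
  have hcompl := Set.ncard_add_ncard_compl (Subgroup.centralizer (A : Set G) : Set G)
  have hle := mul_ncard_inverted_sdiff_centralizer_le hA hm
  rw [Set.inter_comm, ← hinverted, ← hcompl, mul_add]
  change _ + _ ≤ _ + (Nat.card (Subgroup.centralizer (A : Set G)) + _)
  omega

end Inverted

section Perfect

variable {G : Type*} [Group G]

theorem monoidHom_eq_one_of_isPerfect {K : Type*} [Group K] [Group.IsPerfect G]
    [Group.IsSolvable K] (f : G →* K) : f = 1 := by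
  have := Group.IsPerfect.range f
  have : Subsingleton f.range := by
    by_contra h
    have := not_subsingleton_iff_nontrivial.mp h
    exact Group.IsPerfect.not_isSolvable f.range inferInstance
  ext g
  exact congrArg Subtype.val (Subsingleton.elim (f.rangeRestrict g) 1)

theorem isSolvable_perm_of_card_le_four {X : Type*} [Finite X] (hX : Nat.card X ≤ 4) :
    Group.IsSolvable (Equiv.Perm X) := by
  refine isSolvable_of_card_primeFactors_le_two ?_
  have hdvd : Nat.card (Equiv.Perm X) ∣ 24 := by
    rw [Nat.card_perm]
    exact Nat.factorial_dvd_factorial hX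
  calc (Nat.card (Equiv.Perm X)).primeFactors.card
      ≤ (24 : ℕ).primeFactors.card :=
        Finset.card_le_card (Nat.primeFactors_mono hdvd (by norm_num))
    _ = 2 := by decide +kernel

variable [Finite G] [Group.IsPerfect G]

theorem eq_top_of_index_le_four_of_isPerfect {H : Subgroup G} (hH : H.index ≤ 4) : H = ⊤ := by
  have := isSolvable_perm_of_card_le_four (X := G ⧸ H) hH
  refine (Subgroup.eq_top_iff' H).mpr fun g => ?_
  have hfix : g • ((1 : G) : G ⧸ H) = (1 : G) :=
    DFunLike.congr_fun (DFunLike.congr_fun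
      (monoidHom_eq_one_of_isPerfect (MulAction.toPermHom G (G ⧸ H))) g) ((1 : G) : G ⧸ H)
  rw [← MulAction.mem_stabilizer_iff, MulAction.stabilizer_quotient] at hfix
  exact hfix

theorem not_normalizer_le_centralizer_of_isPerfect {p : ℕ} [Fact p.Prime]
    (hp : p ∣ Nat.card G) (P : Sylow p G) :
    ¬ Subgroup.normalizer (P : Set G) ≤ Subgroup.centralizer (P : Set G) := by
  intro hP
  have := P.isPGroup'.isNilpotent
  have hker : (MonoidHom.transferSylow P hP).ker = ⊤ := by
    rw [monoidHom_eq_one_of_isPerfect (MonoidHom.transferSylow P hP), MonoidHom.ker_one]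
  have hcompl := MonoidHom.ker_transferSylow_isComplement' P hP
  rw [hker, Subgroup.isComplement'_top_left] at hcompl
  exact P.ne_bot_of_dvd_card hp hcompl

theorem exists_index_centralizer_eq_mul_card_sylow {p : ℕ} [Fact p.Prime]
    (hp : p ∣ Nat.card G) (P : Sylow p G) :
    ∃ k ≥ 2, (Subgroup.centralizer (P : Set G)).index = k * Nat.card (Sylow p G) := by
  have hindex := Subgroup.relIndex_mul_index (Subgroup.centralizer_le_normalizer (P : Set G))
  refine ⟨_, ?_, by rw [P.card_eq_index_normalizer]; exact hindex.symm⟩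
  refine (Nat.two_le_iff _).mpr ⟨fun h => ?_, fun h => ?_⟩
  · rw [h, zero_mul] at hindex
    exact Subgroup.index_ne_zero_of_finite hindex.symm
  · exact not_normalizer_le_centralizer_of_isPerfect hp P (Subgroup.relIndex_eq_one.mp h)

end Perfect

section SylowAction

variable {G : Type*} [Group G] {p : ℕ}

theorem smul_sylow_ne_of_mem_normalizer {P Q : Sylow p G} {g : G}
    (hg : g ∈ Subgroup.normalizer (P : Set G)) (hQ : Q ≠ P) : g • Q ≠ P := by
  rwa [Ne, ← Sylow.smul_eq_iff_mem_normalizer.mpr hg, smul_left_cancel_iff]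

open scoped Pointwise in
theorem apply_smul_smul_sylow (φ : MulAut G) (g : G) (P : Sylow p G) :
    φ g • φ • P = φ • g • P := by
  rw [Sylow.smul_def, Sylow.smul_def, smul_smul, smul_smul]
  congr 1
  ext x
  simp

theorem faithfulSMul_mulAut_sylow [FaithfulSMul G (Sylow p G)] :
    FaithfulSMul (MulAut G) (Sylow p G) := by
  refine ⟨fun {φ ψ} h => MulEquiv.ext fun g => ?_⟩
  refine FaithfulSMul.eq_of_smul_eq_smul (α := Sylow p G) fun P => ?_
  obtain ⟨Q, rfl⟩ := MulAction.surjective φ P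
  change φ g • φ • Q = ψ g • φ • Q
  rw [apply_smul_smul_sylow, h (g • Q), h Q, apply_smul_smul_sylow]

theorem characteristic_ker_toPermHom_sylow :
    (MulAction.toPermHom G (Sylow p G)).ker.Characteristic := by
  refine Subgroup.characteristic_iff_le_comap.mpr fun φ g hg => ?_
  have hfix (P : Sylow p G) : g • P = P := DFunLike.congr_fun (MonoidHom.mem_ker.mp hg) P
  change MulAction.toPermHom G (Sylow p G) (φ g) = 1
  ext1 P
  obtain ⟨Q, rfl⟩ := MulAction.surjective (φ : MulAut G) P
  exact (apply_smul_smul_sylow φ g Q).trans (congrArg _ (hfix Q))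

end SylowAction

/-- A group without characteristic subgroups other than `⊥` and `⊤`. Unlike for simple groups in
Mathlib, the trivial group is not excluded. -/
def IsCharacteristicallySimple (G : Type*) [Group G] : Prop :=
  ∀ K : Subgroup G, K.Characteristic → K = ⊥ ∨ K = ⊤

namespace IsCharacteristicallySimple

variable {G : Type*} [Group G]

theorem isPerfect (hG : IsCharacteristicallySimple G) (hns : ¬ Group.IsSolvable G) :
    Group.IsPerfect G := by
  refine (Group.isPerfect_def).mpr ((hG (commutator G) inferInstance).resolve_left fun h => ?_)
  rw [commutator_def, Subgroup.commutator_eq_bot_iff_le_centralizer] at h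
  exact hns (Group.isSolvable_of_comm fun a b => h (Subgroup.mem_top b) a (Subgroup.mem_top a))

theorem center_eq_bot (hG : IsCharacteristicallySimple G) (hns : ¬ Group.IsSolvable G) :
    Subgroup.center G = ⊥ :=
  (hG _ inferInstance).resolve_right fun h => hns <| Group.isSolvable_of_comm fun a b =>
    Subgroup.mem_center_iff.mp (h ▸ Subgroup.mem_top b) a

variable [Finite G] {p : ℕ} [Fact p.Prime]

theorem not_normal_sylow (hG : IsCharacteristicallySimple G) (hns : ¬ Group.IsSolvable G)
    (hp : p ∣ Nat.card G) (P : Sylow p G) : ¬ (P : Subgroup G).Normal := by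
  intro hnormal
  rcases hG P (P.characteristic_of_normal hnormal) with h | h
  · exact P.ne_bot_of_dvd_card hp h
  · have hpGroup : IsPGroup p (⊤ : Subgroup G) := h ▸ P.isPGroup'
    have := (hpGroup.of_equiv Subgroup.topEquiv).isNilpotent
    exact hns inferInstance

theorem card_sylow_ne_one (hG : IsCharacteristicallySimple G) (hns : ¬ Group.IsSolvable G)
    (hp : p ∣ Nat.card G) : Nat.card (Sylow p G) ≠ 1 := by
  intro h
  obtain ⟨P⟩ : Nonempty (Sylow p G) := inferInstance
  rw [P.card_eq_index_normalizer, Subgroup.index_eq_one] at h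
  exact hG.not_normal_sylow hns hp P (Subgroup.normalizer_eq_top_iff.mp h)

theorem exists_card_sylow_eq (hG : IsCharacteristicallySimple G) (hns : ¬ Group.IsSolvable G)
    (hp : p ∣ Nat.card G) : ∃ t ≥ 1, Nat.card (Sylow p G) = p * t + 1 := by
  obtain ⟨t, ht⟩ := (Nat.modEq_iff_dvd' Nat.card_pos).mp (card_sylow_modEq_one p G).symm
  have hpos : 0 < Nat.card (Sylow p G) := Nat.card_pos
  have hne := hG.card_sylow_ne_one hns hp
  refine ⟨t, Nat.one_le_iff_ne_zero.mpr ?_, by omega⟩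
  rintro rfl
  omega

theorem four_lt_card_sylow (hG : IsCharacteristicallySimple G) (hns : ¬ Group.IsSolvable G)
    (hp : p ∣ Nat.card G) : 4 < Nat.card (Sylow p G) := by
  have := hG.isPerfect hns
  obtain ⟨P⟩ : Nonempty (Sylow p G) := inferInstance
  have hne := hG.card_sylow_ne_one hns hp
  rw [P.card_eq_index_normalizer] at hne ⊢
  by_contra! hle
  exact hne (Subgroup.index_eq_one.mpr (eq_top_of_index_le_four_of_isPerfect hle))

theorem faithfulSMul_sylow (hG : IsCharacteristicallySimple G) (hns : ¬ Group.IsSolvable G)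
    (hp : p ∣ Nat.card G) : FaithfulSMul G (Sylow p G) := by
  suffices hker : (MulAction.toPermHom G (Sylow p G)).ker = ⊥ from
    ⟨fun h => (MonoidHom.ker_eq_bot_iff _).mp hker (Equiv.ext h)⟩
  refine (hG _ characteristic_ker_toPermHom_sylow).resolve_right fun htop => ?_
  obtain ⟨P⟩ : Nonempty (Sylow p G) := inferInstance
  refine hG.not_normal_sylow hns hp P (Subgroup.normalizer_eq_top_iff.mp ?_)
  refine (Subgroup.eq_top_iff' _).mpr fun g => Sylow.smul_eq_iff_mem_normalizer.mp ?_
  have hg : g ∈ (MulAction.toPermHom G (Sylow p G)).ker := htop ▸ Subgroup.mem_top g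
  exact DFunLike.congr_fun (MonoidHom.mem_ker.mp hg) P

end IsCharacteristicallySimple

section ManyInverted

variable {G : Type*} [Group G] [Finite G] {θ : G ≃* G} {p : ℕ} [Fact p.Prime]

theorem exists_subset_inverted_of_isPGroup (hp2 : p ≠ 2)
    (hθ : Nat.card G < p * (inverted θ).ncard) {P : Subgroup G} (hP : IsPGroup p P) :
    ∃ θ' : G ≃* G, (inverted θ').ncard = (inverted θ).ncard ∧ (P : Set G) ⊆ inverted θ' := by
  have hp : p.Prime := Fact.out
  obtain ⟨x, hx, hle⟩ := exists_card_mul_ncard_inter_inverted_twist_ge θ P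
  obtain ⟨n, hn⟩ := IsPGroup.iff_card.mp hP
  refine ⟨twist θ x, ncard_inverted_twist hx, subset_inverted_of_odd_card (m := p) ?_ ?_ ?_⟩
  · exact hn ▸ (hp.odd_of_ne_two hp2).pow
  · intro q hq hdvd
    rw [hn] at hdvd
    exact ((Nat.prime_dvd_prime_iff_eq hq hp).mp (hq.dvd_of_dvd_pow hdvd)).ge
  · refine Nat.lt_of_mul_lt_mul_left (a := Nat.card G) ?_
    have hlt : Nat.card G * Nat.card P < p * (inverted θ).ncard * Nat.card P :=
      Nat.mul_lt_mul_of_pos_right hθ Nat.card_pos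
    nlinarith

theorem prime_mul_ncard_inverted_add_card_centralizer_le {P : Subgroup G} (hP : IsPGroup p P)
    (hinv : (P : Set G) ⊆ inverted θ) :
    p * (inverted θ).ncard + Nat.card (Subgroup.centralizer (P : Set G)) ≤
      p * ((Subgroup.centralizer (P : Set G) : Set G) ∩ inverted θ).ncard + Nat.card G := by
  have := isMulCommutative_of_subset_inverted hinv
  exact mul_ncard_inverted_add_card_centralizer_le hinv fun y hy =>
    Nat.le_of_dvd (Nat.pos_of_ne_zero Subgroup.FiniteIndex.index_ne_zero)
      (prime_dvd_relIndex_centralizer_singleton hP le_rfl hy)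

theorem index_centralizer_bound (hθ : 2 * Nat.card G < 9 * (inverted θ).ncard)
    {P : Subgroup G} (hP : IsPGroup p P) (hinv : (P : Set G) ⊆ inverted θ) :
    2 * p * (Subgroup.centralizer (P : Set G)).index + 9 <
      9 * p + 9 * (Subgroup.centralizer (P : Set G)).index := by
  have hle := prime_mul_ncard_inverted_add_card_centralizer_le hP hinv
  set C := Subgroup.centralizer (P : Set G)
  have hCle : ((C : Set G) ∩ inverted θ).ncard ≤ Nat.card C :=
    ncard_le_card_of_subset Set.inter_subset_left
  have hp : 0 < p := (Fact.out : p.Prime).pos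
  have hpθ := Nat.mul_lt_mul_of_pos_left hθ hp
  have hpC := Nat.mul_le_mul_left p hCle
  refine Nat.lt_of_mul_lt_mul_left (a := Nat.card C) ?_
  calc Nat.card C * (2 * p * C.index + 9)
      = p * (2 * Nat.card G) + 9 * Nat.card C := by rw [← C.card_mul_index]; ring
    _ < 9 * (p * Nat.card C) + 9 * Nat.card G := by linarith
    _ = Nat.card C * (9 * p + 9 * C.index) := by rw [← C.card_mul_index]; ring

theorem centralizer_subset_inverted_of_index_eq (hθ : 2 * Nat.card G < 9 * (inverted θ).ncard)
    [Fact (Nat.Prime 5)] {P : Subgroup G} (hP : IsPGroup 5 P)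
    (hinv : (P : Set G) ⊆ inverted θ) (h32 : (Subgroup.centralizer (P : Set G)).index = 32) :
    (Subgroup.centralizer (P : Set G) : Set G) ⊆ inverted θ := by
  have hle := prime_mul_ncard_inverted_add_card_centralizer_le hP hinv
  have hcard := (Subgroup.centralizer (P : Set G)).card_mul_index
  rw [h32] at hcard
  exact subset_inverted_of_three_mul_card_lt (by omega)

end ManyInverted

namespace IsCharacteristicallySimple

variable {G : Type*} [Group G] [Finite G] {θ : G ≃* G}

theorem eq_five_of_prime_dvd_card (hG : IsCharacteristicallySimple G)
    (hns : ¬ Group.IsSolvable G) (hθ : 2 * Nat.card G < 9 * (inverted θ).ncard) {p : ℕ}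
    (hp : p.Prime) (hp5 : 5 ≤ p) (hdvd : p ∣ Nat.card G) : p = 5 := by
  have := Fact.mk hp
  have := hG.isPerfect hns
  obtain ⟨P⟩ : Nonempty (Sylow p G) := inferInstance
  obtain ⟨θ', hcard, hinv⟩ := exists_subset_inverted_of_isPGroup (θ := θ) (by omega)
    (by nlinarith) P.isPGroup'
  have hbound : 2 * p * (Subgroup.centralizer (P : Set G)).index + 9 <
      9 * p + 9 * (Subgroup.centralizer (P : Set G)).index :=
    index_centralizer_bound (hcard ▸ hθ) P.isPGroup' hinv
  obtain ⟨t, ht, hsylow⟩ := hG.exists_card_sylow_eq hns hdvd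
  obtain ⟨k, hk, hindex⟩ := exists_index_centralizer_eq_mul_card_sylow hdvd P
  have hindex_ge : 2 * (p + 1) ≤ (Subgroup.centralizer (P : Set G)).index := by
    rw [hindex, hsylow]
    exact Nat.mul_le_mul hk (by nlinarith)
  by_contra hne
  have hp6 : p ≠ 6 := by rintro rfl; exact absurd hp (by norm_num)
  have hp7 : 7 ≤ p := by omega
  nlinarith

theorem primeFactors_card_eq (hG : IsCharacteristicallySimple G)
    (hns : ¬ Group.IsSolvable G) (hθ : 2 * Nat.card G < 9 * (inverted θ).ncard) :
    (Nat.card G).primeFactors = {2, 3, 5} := by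
  refine Finset.eq_of_subset_of_card_le (fun p hp => ?_) ?_
  · have hprime := Nat.prime_of_mem_primeFactors hp
    have h5 := hG.eq_five_of_prime_dvd_card hns hθ hprime
      (hdvd := Nat.dvd_of_mem_primeFactors hp)
    have h4 : p ≠ 4 := by rintro rfl; exact absurd hprime (by norm_num)
    have := hprime.two_le
    rw [Finset.mem_insert, Finset.mem_insert, Finset.mem_singleton]
    omega
  · by_contra! hlt
    exact hns (isSolvable_of_card_primeFactors_le_two (Nat.le_of_lt_succ hlt))

theorem index_centralizer_sylow_five_eq (hG : IsCharacteristicallySimple G)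
    (hns : ¬ Group.IsSolvable G) (hθ : 2 * Nat.card G < 9 * (inverted θ).ncard)
    [Fact (Nat.Prime 5)] (P : Sylow 5 G) (hinv : (P : Set G) ⊆ inverted θ) :
    (Subgroup.centralizer (P : Set G)).index = 32 ∨
      Nat.card (Sylow 5 G) = 6 ∧
        ∃ k, 2 ≤ k ∧ k < 6 ∧ (Subgroup.centralizer (P : Set G)).index = k * 6 := by
  have := hG.isPerfect hns
  have hfactors := hG.primeFactors_card_eq hns hθ
  have h5 : 5 ∣ Nat.card G := Nat.dvd_of_mem_primeFactors (by rw [hfactors]; decide)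
  have hbound : 2 * 5 * (Subgroup.centralizer (P : Set G)).index + 9 <
      9 * 5 + 9 * (Subgroup.centralizer (P : Set G)).index :=
    index_centralizer_bound hθ P.isPGroup' hinv
  obtain ⟨t, ht, hsylow⟩ := hG.exists_card_sylow_eq hns h5
  obtain ⟨k, hk, hindex⟩ := exists_index_centralizer_eq_mul_card_sylow h5 P
  have hlt : k * (5 * t + 1) < 36 := by rw [← hsylow, ← hindex]; omega
  have ht4 : t < 4 := by nlinarith
  rw [hindex, hsylow]
  interval_cases t
  · exact Or.inr ⟨rfl, k, hk, by omega, rfl⟩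
  · have h11 : 11 ∣ Nat.card G :=
      (hsylow ▸ Sylow.card_dvd_index P).trans (P : Subgroup G).index_dvd_card
    exact absurd (hG.eq_five_of_prime_dvd_card hns hθ (by norm_num) (by norm_num) h11) (by norm_num)
  · exact Or.inl (by omega)

end IsCharacteristicallySimple

theorem exists_sylow_le_of_not_dvd_index {G : Type*} [Group G] [Finite G] {p : ℕ} [Fact p.Prime]
    {H : Subgroup G} (hH : ¬ p ∣ H.index) :
    ∃ R : Sylow p G, (R : Subgroup G) ≤ H := by
  obtain ⟨Q⟩ : Nonempty (Sylow p H) := inferInstance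
  refine ⟨(Q.isPGroup'.map H.subtype).toSylow ?_, Subgroup.map_subtype_le _⟩
  rw [Subgroup.index_map_subtype, Nat.Prime.dvd_mul Fact.out]
  exact not_or.mpr ⟨Q.not_dvd_index, hH⟩

namespace IsCharacteristicallySimple

variable {G : Type*} [Group G] [Finite G] {θ : G ≃* G}

theorem index_centralizer_sylow_three_eq (hG : IsCharacteristicallySimple G)
    (hns : ¬ Group.IsSolvable G) (h3 : 3 ∣ Nat.card G) (R : Sylow 3 G)
    (h32 : (Subgroup.centralizer (R : Set G)).index ∣ 32) :
    (Subgroup.centralizer (R : Set G)).index = 32 := by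
  have := hG.isPerfect hns
  obtain ⟨t, -, hsylow⟩ := hG.exists_card_sylow_eq hns h3
  obtain ⟨k, hk, hindex⟩ := exists_index_centralizer_eq_mul_card_sylow h3 R
  have hlt := hG.four_lt_card_sylow hns h3
  rw [hsylow] at hindex hlt
  rw [hindex] at h32 ⊢
  have hle := Nat.le_of_dvd (by norm_num) h32
  have ht : t ≤ 5 := by nlinarith
  have hdvd : 3 * t + 1 ∣ 32 := (Nat.dvd_mul_left _ k).trans h32
  obtain rfl : t = 5 := by interval_cases t <;> omega
  omega

theorem centralizer_sylow_three_eq (hG : IsCharacteristicallySimple G)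
    (hns : ¬ Group.IsSolvable G) (h3 : 3 ∣ Nat.card G) {A : Subgroup G} [IsMulCommutative A]
    (hA : A.index = 32) {R : Sylow 3 G} (hRA : (R : Subgroup G) ≤ A) :
    Subgroup.centralizer (R : Set G) = A := by
  have hle : A ≤ Subgroup.centralizer (R : Set G) :=
    A.le_centralizer.trans (Subgroup.centralizer_le hRA)
  have hindex := hG.index_centralizer_sylow_three_eq hns h3 R
    (hA ▸ Subgroup.index_dvd_of_le hle)
  have hrel := Subgroup.relIndex_mul_index hle
  rw [hindex, hA, Nat.mul_eq_right (by norm_num), Subgroup.relIndex_eq_one] at hrel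
  exact le_antisymm hrel hle

theorem index_centralizer_sylow_five_ne (hG : IsCharacteristicallySimple G)
    (hns : ¬ Group.IsSolvable G) (hθ : 2 * Nat.card G < 9 * (inverted θ).ncard)
    [Fact (Nat.Prime 5)] (P : Sylow 5 G) (hinv : (P : Set G) ⊆ inverted θ) :
    (Subgroup.centralizer (P : Set G)).index ≠ 32 := by
  intro h32
  have h3 : 3 ∣ Nat.card G := Nat.dvd_of_mem_primeFactors (by
    rw [hG.primeFactors_card_eq hns hθ]; decide)
  have hCinv : (Subgroup.centralizer (P : Set G) : Set G) ⊆ inverted θ :=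
    centralizer_subset_inverted_of_index_eq hθ P.isPGroup' hinv h32
  set C := Subgroup.centralizer (P : Set G)
  have := isMulCommutative_of_subset_inverted hCinv
  have hPC : (P : Subgroup G) ≤ C :=
    Subgroup.le_centralizer_iff_isMulCommutative.mpr (isMulCommutative_of_subset_inverted hinv)
  have hCC : Subgroup.centralizer (C : Set G) = C :=
    le_antisymm (Subgroup.centralizer_le hPC) C.le_centralizer
  obtain ⟨R, hRC⟩ : ∃ R : Sylow 3 G, (R : Subgroup G) ≤ C :=
    exists_sylow_le_of_not_dvd_index (by rw [h32]; norm_num)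
  have hCR := hG.centralizer_sylow_three_eq hns h3 h32 hRC
  have hrel (y : G) (hy : y ∉ Subgroup.centralizer (C : Set G)) :
      15 ≤ (Subgroup.centralizer {y}).relIndex C := by
    rw [hCC] at hy
    have hdvd5 := prime_dvd_relIndex_centralizer_singleton P.isPGroup' hPC hy
    have hdvd3 := prime_dvd_relIndex_centralizer_singleton R.isPGroup' hRC (hCR ▸ hy)
    exact Nat.le_of_dvd (Nat.pos_of_ne_zero Subgroup.FiniteIndex.index_ne_zero)
      (Nat.Coprime.mul_dvd_of_dvd_of_dvd (by norm_num : Nat.Coprime 3 5) hdvd3 hdvd5)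
  have hbound := mul_ncard_inverted_add_card_centralizer_le hCinv hrel
  rw [hCC] at hbound
  have hinter : ((C : Set G) ∩ inverted θ).ncard ≤ Nat.card C :=
    ncard_le_card_of_subset Set.inter_subset_left
  have hpos : 0 < Nat.card C := Nat.card_pos
  have hcard := C.card_mul_index
  rw [h32] at hcard
  omega

end IsCharacteristicallySimple

section SylowActionPrime

variable {G : Type*} [Group G] [Finite G] {p : ℕ} [Fact p.Prime] {P Q R : Sylow p G}

theorem prime_dvd_card_orbit_sylow (hQ : Q ≠ P) : p ∣ Nat.card (MulAction.orbit P Q) := by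
  obtain ⟨n, hn⟩ := P.isPGroup'.card_orbit Q
  rw [hn]
  refine dvd_pow_self p ?_
  rintro rfl
  have hfix : Q ∈ MulAction.fixedPoints P (Sylow p G) :=
    MulAction.subsingleton_orbit_iff_mem_fixedPoints.mp
      (Set.ncard_le_one_iff_subsingleton.mp hn.le)
  exact hQ (Sylow.ext (P.is_maximal' Q.isPGroup' (P.isPGroup'.sylow_mem_fixedPoints_iff.mp hfix)))

theorem exists_mem_smul_sylow_eq (hcard : Nat.card (Sylow p G) = p + 1) (hQ : Q ≠ P)
    (hR : R ≠ P) : ∃ u ∈ P, u • Q = R := by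
  have hsub : MulAction.orbit P Q ⊆ {P}ᶜ := by
    rintro _ ⟨u, rfl⟩
    exact smul_sylow_ne_of_mem_normalizer (Subgroup.le_normalizer u.2) hQ
  have hle : p ≤ (MulAction.orbit P Q).ncard :=
    Nat.le_of_dvd ((Set.ncard_pos).mpr (MulAction.nonempty_orbit Q)) (prime_dvd_card_orbit_sylow hQ)
  have hcompl : ({P}ᶜ : Set (Sylow p G)).ncard = p := by
    rw [Set.ncard_compl, hcard, Set.ncard_singleton, Nat.add_sub_cancel]
  have horbit := Set.eq_of_subset_of_ncard_le hsub (by rwa [hcompl])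
  obtain ⟨u, hu⟩ : R ∈ MulAction.orbit P Q := horbit ▸ hR
  exact ⟨u, u.2, hu⟩

variable [FaithfulSMul G (Sylow p G)]

theorem eq_one_of_mem_centralizer_of_smul_sylow_eq (hcard : Nat.card (Sylow p G) = p + 1)
    (hQ : Q ≠ P) {c : G} (hc : c ∈ Subgroup.centralizer (P : Set G)) (hcQ : c • Q = Q) :
    c = 1 := by
  refine FaithfulSMul.eq_of_smul_eq_smul (α := Sylow p G) fun R => ?_
  rw [one_smul]
  rcases eq_or_ne R P with rfl | hR
  · exact Sylow.smul_eq_iff_mem_normalizer.mpr (Subgroup.centralizer_le_normalizer _ hc)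
  · obtain ⟨u, hu, rfl⟩ := exists_mem_smul_sylow_eq hcard hQ hR
    rw [smul_smul, ← Subgroup.mem_centralizer_iff.mp hc u hu, mul_smul, hcQ]

theorem card_centralizer_sylow_le (hcard : Nat.card (Sylow p G) = p + 1) (P : Sylow p G) :
    Nat.card (Subgroup.centralizer (P : Set G)) ≤ p := by
  have : Nontrivial (Sylow p G) := by
    rw [← Finite.one_lt_card_iff_nontrivial, hcard]
    exact Nat.succ_lt_succ (Fact.out : p.Prime).pos
  obtain ⟨Q, hQ⟩ := exists_ne P
  have hcompl : ({P}ᶜ : Set (Sylow p G)).ncard = p := by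
    rw [Set.ncard_compl, hcard, Set.ncard_singleton, Nat.add_sub_cancel]
  refine le_of_le_of_eq ?_ hcompl
  refine Set.ncard_le_ncard_of_injOn
    (s := (Subgroup.centralizer (P : Set G) : Set G)) (t := {P}ᶜ) (· • Q) ?_ ?_
  · intro c hc
    exact smul_sylow_ne_of_mem_normalizer (Subgroup.centralizer_le_normalizer _ hc) hQ
  · intro c hc d hd hcd
    have hfix : (d⁻¹ * c) • Q = Q := by rw [mul_smul, inv_smul_eq_iff]; exact hcd
    exact (inv_mul_eq_one.mp (eq_one_of_mem_centralizer_of_smul_sylow_eq hcard hQ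
      (mul_mem (inv_mem hd) hc) hfix)).symm

end SylowActionPrime

section Alternating

variable {G : Type*} [Group G] [Group.IsPerfect G]
  {X : Type*} [Fintype X] [DecidableEq X] {f : G →* Equiv.Perm X}

theorem range_le_alternatingGroup_of_isPerfect : f.range ≤ alternatingGroup X := by
  rintro _ ⟨g, rfl⟩
  rw [Equiv.Perm.mem_alternatingGroup]
  exact DFunLike.congr_fun (monoidHom_eq_one_of_isPerfect (Equiv.Perm.sign.comp f)) g

theorem card_eq_or_five_mul_card_le_of_isPerfect (hX : 5 ≤ Nat.card X)
    (hf : Function.Injective f) :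
    Nat.card G = Nat.card (alternatingGroup X) ∨
      5 * Nat.card G ≤ Nat.card (alternatingGroup X) := by
  have : Group.IsPerfect (alternatingGroup X) :=
    Group.isPerfect_def.mpr (commutator_alternatingGroup_eq_top hX)
  have hrel := card_mul_relIndex_of_le (range_le_alternatingGroup_of_isPerfect (f := f))
  rw [← Nat.card_congr (MonoidHom.ofInjective hf).toEquiv] at hrel
  rw [← hrel]
  by_cases h : f.range.relIndex (alternatingGroup X) ≤ 4
  · left
    rw [Subgroup.relIndex, eq_top_of_index_le_four_of_isPerfect h, Subgroup.index_top, mul_one]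
  · right
    rw [mul_comm]
    exact Nat.mul_le_mul_left _ (by omega)

end Alternating

namespace IsCharacteristicallySimple

variable {G : Type*} [Group G] [Finite G] {θ : G ≃* G}

theorem card_eq_sixty_of_card_sylow_eq (hG : IsCharacteristicallySimple G)
    (hns : ¬ Group.IsSolvable G) [Fact (Nat.Prime 5)] (h5 : 5 ∣ Nat.card G)
    (h6 : Nat.card (Sylow 5 G) = 6) {P : Sylow 5 G} [IsMulCommutative P] {k : ℕ} (hk : 2 ≤ k)
    (hk6 : k < 6) (hindex : (Subgroup.centralizer (P : Set G)).index = k * 6) :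
    Nat.card G = 60 := by
  have := hG.isPerfect hns
  have := hG.faithfulSMul_sylow hns h5
  have hcentralizer : Nat.card (Subgroup.centralizer (P : Set G)) = 5 := by
    have hdvd : 5 ∣ Nat.card (Subgroup.centralizer (P : Set G)) :=
      (P.dvd_card_of_dvd_card h5).trans (Subgroup.card_dvd_of_le (P : Subgroup G).le_centralizer)
    exact le_antisymm (card_centralizer_sylow_le h6 P) (Nat.le_of_dvd Nat.card_pos hdvd)
  have hcard := (Subgroup.centralizer (P : Set G)).card_mul_index
  rw [hcentralizer, hindex] at hcard
  classical
  have := Fintype.ofFinite (Sylow 5 G)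
  have := Finite.one_lt_card_iff_nontrivial.mp (by omega : 1 < Nat.card (Sylow 5 G))
  have hA : Nat.card (alternatingGroup (Sylow 5 G)) = 360 := by
    rw [nat_card_alternatingGroup, h6]
    rfl
  have hor := card_eq_or_five_mul_card_le_of_isPerfect (f := MulAction.toPermHom G (Sylow 5 G))
    (by omega) MulAction.toPerm_injective
  omega

theorem card_eq_sixty (hG : IsCharacteristicallySimple G) (hns : ¬ Group.IsSolvable G)
    (hθ : 2 * Nat.card G < 9 * (inverted θ).ncard) : Nat.card G = 60 := by
  have := Fact.mk Nat.prime_five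
  have h5 : 5 ∣ Nat.card G := Nat.dvd_of_mem_primeFactors (by
    rw [hG.primeFactors_card_eq hns hθ]; decide)
  obtain ⟨P⟩ : Nonempty (Sylow 5 G) := inferInstance
  obtain ⟨θ', hcard, hinv⟩ := exists_subset_inverted_of_isPGroup (θ := θ) (by norm_num)
    (by omega) P.isPGroup'
  rw [← hcard] at hθ
  have := isMulCommutative_of_subset_inverted hinv
  rcases hG.index_centralizer_sylow_five_eq hns hθ P hinv with h32 | ⟨h6, k, hk, hk6, hindex⟩
  · exact absurd h32 (hG.index_centralizer_sylow_five_ne hns hθ P hinv)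
  · exact hG.card_eq_sixty_of_card_sylow_eq hns h5 h6 hk hk6 hindex

end IsCharacteristicallySimple

section PermFinFive

open Equiv Finset

theorem card_centralizer_singleton_le_twelve {t : Perm (Fin 5)} (ht : t ≠ 1) :
    Nat.card (Subgroup.centralizer {t}) ≤ 12 := by
  rw [Perm.nat_card_centralizer, Fintype.card_fin]
  have hne : t.cycleType ≠ 0 := Perm.cycleType_eq_zero.not.mpr ht
  have htwo : ∀ n ∈ t.cycleType, 2 ≤ n := fun n => Perm.two_le_of_mem_cycleType
  have hsum : t.cycleType.sum ≤ 5 :=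
    t.sum_cycleType.trans_le ((card_le_univ _).trans_eq (Fintype.card_fin 5))
  generalize t.cycleType = m at *
  have hcard : m.card * 2 ≤ m.sum := Multiset.card_nsmul_le_sum htwo
  have hpos : m.card ≠ 0 := Multiset.card_eq_zero.not.mpr hne
  obtain hone | htwo' : m.card = 1 ∨ m.card = 2 := by omega
  · obtain ⟨a, rfl⟩ := Multiset.card_eq_one.mp hone
    have ha := htwo a (by simp)
    rw [Multiset.sum_singleton] at hsum
    interval_cases a <;> decide
  · obtain ⟨a, b, rfl⟩ := Multiset.card_eq_two.mp htwo'
    have ha := htwo a (by simp)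
    have hb := htwo b (by simp)
    rw [Multiset.sum_pair] at hsum
    obtain ⟨rfl, rfl⟩ | ⟨rfl, rfl⟩ | ⟨rfl, rfl⟩ :
      a = 2 ∧ b = 2 ∨ a = 2 ∧ b = 3 ∨ a = 3 ∧ b = 2 := by omega
    all_goals decide

theorem ncard_mul_self_eq_le_twelve {t : Perm (Fin 5)} (ht : t ≠ 1) :
    {y : Perm (Fin 5) | y * y = t}.ncard ≤ 12 := by
  refine (ncard_le_card_of_subset ?_).trans (card_centralizer_singleton_le_twelve ht)
  rintro y rfl
  exact Subgroup.mem_centralizer_singleton_iff.mpr (mul_assoc y y y).symm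

theorem ncard_mul_self_eq_le (t : Perm (Fin 5)) :
    {y : Perm (Fin 5) | y * y = t}.ncard ≤ 26 := by
  rcases eq_or_ne t 1 with rfl | ht
  · rw [Set.ncard_eq_toFinset_card', Set.toFinset_ofPred]
    decide +kernel
  · exact (ncard_mul_self_eq_le_twelve ht).trans (by norm_num)

theorem ncard_mul_self_eq_and_sign_eq_le (t : Perm (Fin 5)) (ε : ℤˣ) :
    {y : Perm (Fin 5) | y * y = t ∧ Perm.sign y = ε}.ncard ≤ 16 := by
  rcases eq_or_ne t 1 with rfl | ht
  · rw [Set.ncard_eq_toFinset_card', Set.toFinset_ofPred]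
    revert ε
    decide +kernel
  · have hsub : {y : Perm (Fin 5) | y * y = t ∧ Perm.sign y = ε} ⊆ {y | y * y = t} :=
      fun y hy => hy.1
    exact (Set.ncard_le_ncard hsub).trans ((ncard_mul_self_eq_le_twelve ht).trans (by norm_num))

end PermFinFive

section InvertedInPerm

variable {G K : Type*} [Group G] [Group K] {θ : G ≃* G}

theorem ncard_inverted_le_of_injective [Finite K] {f : G →* K} (hf : Function.Injective f) {s : K}
    (hs : ∀ g, f (θ g) = s * f g * s⁻¹) :
    (inverted θ).ncard ≤ {y : K | y * y = s⁻¹ * s⁻¹ ∧ y * s ∈ f.range}.ncard := by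
  refine Set.ncard_le_ncard_of_injOn (fun g => f g * s⁻¹) (fun g hg => ⟨?_, g, ?_⟩)
    fun g _ h _ hgh => hf (mul_right_cancel hgh)
  · have hinv : s * f g * s⁻¹ = (f g)⁻¹ := by rw [← hs, show θ g = g⁻¹ from hg, map_inv]
    calc f g * s⁻¹ * (f g * s⁻¹) = s⁻¹ * (s * f g * s⁻¹) * (f g * s⁻¹) := by group
      _ = s⁻¹ * s⁻¹ := by rw [hinv]; group
  · exact (inv_mul_cancel_right (f g) s).symm

variable {f : G →* Equiv.Perm (Fin 5)} {s : Equiv.Perm (Fin 5)}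

theorem ncard_inverted_le_twenty_six (hf : Function.Injective f)
    (hs : ∀ g, f (θ g) = s * f g * s⁻¹) : (inverted θ).ncard ≤ 26 :=
  (ncard_inverted_le_of_injective hf hs).trans <|
    (Set.ncard_le_ncard fun _ hy => hy.1).trans (ncard_mul_self_eq_le _)

theorem ncard_inverted_le_sixteen [Group.IsPerfect G] (hf : Function.Injective f)
    (hs : ∀ g, f (θ g) = s * f g * s⁻¹) : (inverted θ).ncard ≤ 16 := by
  refine (ncard_inverted_le_of_injective hf hs).trans <| (Set.ncard_le_ncard fun y hy => ?_).trans
    (ncard_mul_self_eq_and_sign_eq_le (s⁻¹ * s⁻¹) (Equiv.Perm.sign s))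
  have hsign : Equiv.Perm.sign (y * s) = 1 := range_le_alternatingGroup_of_isPerfect hy.2
  rw [map_mul, mul_eq_one_iff_eq_inv, Int.units_inv_eq_self] at hsign
  exact ⟨hy.1, hsign⟩

end InvertedInPerm

section NormalSubgroup

variable {G : Type*} [Group G] (N : Subgroup G)

theorem ncard_inter_inverted_eq [N.Characteristic] (θ : G ≃* G) :
    ((N : Set G) ∩ inverted θ).ncard = (inverted (MulAut.characteristic N θ)).ncard := by
  rw [← Set.ncard_image_of_injective _ N.subtype_injective]
  congr 1
  ext g
  constructor
  · rintro ⟨hgN, hg⟩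
    exact ⟨⟨g, hgN⟩, Subtype.ext hg, rfl⟩
  · rintro ⟨n, hn, rfl⟩
    exact ⟨n.2, congrArg Subtype.val hn⟩

theorem conjNormal_apply_eq [N.Characteristic] (θ : MulAut G) (g : G) :
    (MulAut.conjNormal (θ g) : MulAut N) =
      MulAut.characteristic N θ * MulAut.conjNormal g * (MulAut.characteristic N θ)⁻¹ := by
  rw [eq_mul_inv_iff_mul_eq]
  ext n
  simp

theorem ker_conjNormal [N.Normal] :
    (MulAut.conjNormal : G →* MulAut N).ker = Subgroup.centralizer (N : Set G) := by
  ext g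
  simp [MonoidHom.mem_ker, MulEquiv.ext_iff, Subtype.ext_iff, Subgroup.mem_centralizer_iff,
    mul_inv_eq_iff_eq_mul, eq_comm (b := g * _)]

variable {N}

open scoped commutatorElement in
theorem isMulCommutative_centralizer [N.Normal] (hN : Subgroup.center N = ⊥)
    [IsMulCommutative (G ⧸ N)] : IsMulCommutative (Subgroup.centralizer (N : Set G)) := by
  have hcomm : commutator G ≤ N :=
    Subgroup.Normal.quotient_commutative_iff_commutator_le.mp inferInstance
  refine .of_comm fun a b => ?_
  rw [← commutatorElement_eq_one_iff_mul_comm]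
  have hmem : ((⁅a, b⁆ : Subgroup.centralizer (N : Set G)) : G) ∈ N :=
    hcomm (Subgroup.commutator_mem_commutator (Subgroup.mem_top _) (Subgroup.mem_top _))
  have hcenter : (⟨_, hmem⟩ : N) ∈ Subgroup.center N := Subgroup.mem_center_iff.mpr fun n =>
    Subtype.ext (Subgroup.mem_centralizer_iff.mp ⁅a, b⁆.2 n n.2)
  rw [hN, Subgroup.mem_bot] at hcenter
  exact Subtype.ext (congrArg (Subtype.val : N → G) hcenter)

variable [Finite G] {θ : G ≃* G} {m : ℕ}

theorem ncard_inverted_le_mul_ncard_inverted_quotient [N.Characteristic]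
    (hm : ∀ φ : N ≃* N, (inverted φ).ncard ≤ m) :
    (inverted θ).ncard ≤ m * (inverted (QuotientGroup.congr N N θ
      (Subgroup.characteristic_iff_map_eq.mp inferInstance θ))).ncard := by
  set θ' := QuotientGroup.congr N N θ (Subgroup.characteristic_iff_map_eq.mp inferInstance θ)
  have hle := ncard_mul_card_le_of_forall_coset N (A := inverted θ)
    (S := (QuotientGroup.mk : G → G ⧸ N) ⁻¹' inverted θ') (m := m)
    (fun g hg => congrArg QuotientGroup.mk (show θ g = g⁻¹ from hg))
    (fun n hn g hg => by
      rw [Set.mem_preimage, QuotientGroup.mk_mul, (QuotientGroup.eq_one_iff n).mpr hn, one_mul]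
      exact hg)
    (fun x hx => by
      rw [← inverted_twist hx, ncard_inter_inverted_eq]
      exact hm _)
  have hcard : ((QuotientGroup.mk : G → G ⧸ N) ⁻¹' inverted θ').ncard =
      Nat.card N * (inverted θ').ncard := QuotientGroup.card_preimage_mk N _
  rw [hcard] at hle
  nlinarith [Nat.card_pos (α := N)]

theorem isMulCommutative_quotient_of_forall_ncard_inverted_le [N.Characteristic]
    (hm : ∀ φ : N ≃* N, (inverted φ).ncard ≤ m)
    (hθ : 3 * m * N.index < 4 * (inverted θ).ncard) : IsMulCommutative (G ⧸ N) := by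
  have hle := ncard_inverted_le_mul_ncard_inverted_quotient (θ := θ) hm
  set θ' := QuotientGroup.congr N N θ (Subgroup.characteristic_iff_map_eq.mp inferInstance θ)
  have htop : ((⊤ : Subgroup (G ⧸ N)) : Set (G ⧸ N)) ⊆ inverted θ' := by
    apply subset_inverted_of_three_mul_card_lt
    rw [Subgroup.coe_top, Set.univ_inter, Subgroup.card_top, ← Subgroup.index]
    by_contra! h
    nlinarith
  have := isMulCommutative_of_subset_inverted htop
  exact .of_comm fun a b => congrArg Subtype.val
    (mul_comm' (⟨a, Subgroup.mem_top a⟩ : (⊤ : Subgroup (G ⧸ N))) ⟨b, Subgroup.mem_top b⟩)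

end NormalSubgroup

theorem exists_characteristic_isCharacteristicallySimple (G : Type*) [Group G] [Finite G]
    [Nontrivial G] :
    ∃ N : Subgroup G, N.Characteristic ∧ N ≠ ⊥ ∧ IsCharacteristicallySimple N := by
  obtain ⟨N, hN⟩ := (Set.toFinite {N : Subgroup G | N.Characteristic ∧ N ≠ ⊥}).exists_minimal
    ⟨⊤, inferInstance, top_ne_bot⟩
  obtain ⟨hchar, hbot⟩ := hN.prop
  refine ⟨N, hchar, hbot, fun K hK => or_iff_not_imp_left.mpr fun hKbot => ?_⟩
  have hmap : K.map N.subtype ≠ ⊥ :=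
    (Subgroup.map_eq_bot_iff_of_injective K N.subtype_injective).not.mpr hKbot
  have hle : N ≤ K.map N.subtype :=
    hN.le_of_le ⟨inferInstance, hmap⟩ (Subgroup.map_subtype_le K)
  rwa [eq_top_iff, ← Subgroup.map_subtype_le_map_subtype, ← MonoidHom.range_eq_map,
    Subgroup.range_subtype]

theorem nonempty_mulEquiv_alternatingGroup {G X : Type*} [Group G] [Fintype X] [DecidableEq X]
    {f : G →* Equiv.Perm X} (hf : Function.Injective f)
    (hcard : 2 * Nat.card G = Nat.card (Equiv.Perm X)) : Nonempty (G ≃* alternatingGroup X) := by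
  have hindex : f.range.index = 2 := by
    have hmul := f.range.card_mul_index
    rw [← hcard, ← Nat.card_congr (MonoidHom.ofInjective hf).toEquiv, mul_comm] at hmul
    have : Finite G := .of_injective f hf
    exact Nat.eq_of_mul_eq_mul_right Nat.card_pos hmul
  exact ⟨(MonoidHom.ofInjective hf).trans (MulEquiv.subgroupCongr
    (Equiv.Perm.eq_alternatingGroup_of_index_eq_two hindex))⟩

namespace IsCharacteristicallySimple

variable {G : Type*} [Group G] [Finite G]

theorem card_sylow_two_eq_five (hG : IsCharacteristicallySimple G) (hns : ¬ Group.IsSolvable G)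
    (hcard : Nat.card G = 60) : Nat.card (Sylow 2 G) = 5 := by
  have := hG.isPerfect hns
  have h2 : 2 ∣ Nat.card G := by omega
  obtain ⟨P⟩ : Nonempty (Sylow 2 G) := inferInstance
  have hP : Nat.card P = 2 ^ 2 := by
    have hfactorization : Nat.factorization 60 2 = 2 := by decide +kernel
    rw [P.card_eq_multiplicity, hcard, hfactorization]
  have := IsPGroup.isMulCommutative_of_card_eq_prime_sq hP
  have hdvd : 2 ^ 2 ∣ Nat.card (Subgroup.centralizer (P : Set G)) :=
    hP ▸ Subgroup.card_dvd_of_le (P : Subgroup G).le_centralizer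
  obtain ⟨k, hk, hindex⟩ := exists_index_centralizer_eq_mul_card_sylow h2 P
  have hlt := hG.four_lt_card_sylow hns h2
  have hmul := (Subgroup.centralizer (P : Set G)).card_mul_index
  obtain ⟨c, hc⟩ := hdvd
  rw [hc, hindex, hcard] at hmul
  have hfifteen : c * k * Nat.card (Sylow 2 G) = 15 := by linarith
  have hle : 2 ≤ c * k := by
    have hc0 : c ≠ 0 := by
      rintro rfl
      simp at hfifteen
    nlinarith [Nat.pos_of_ne_zero hc0]
  have hle7 : Nat.card (Sylow 2 G) ≤ 7 := by nlinarith
  generalize Nat.card (Sylow 2 G) = n at *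
  interval_cases n <;> omega

theorem exists_injective_mulAut_perm_fin_five (hG : IsCharacteristicallySimple G)
    (hns : ¬ Group.IsSolvable G) (hcard : Nat.card G = 60) :
    ∃ F : MulAut G →* Equiv.Perm (Fin 5), Function.Injective F := by
  have := hG.faithfulSMul_sylow (p := 2) hns (by omega)
  have := faithfulSMul_mulAut_sylow (G := G) (p := 2)
  have e : Sylow 2 G ≃ Fin 5 := Finite.equivFinOfCardEq (hG.card_sylow_two_eq_five hns hcard)
  exact ⟨e.permCongrHom.toMonoidHom.comp (MulAction.toPermHom (MulAut G) (Sylow 2 G)),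
    e.permCongrHom.injective.comp MulAction.toPerm_injective⟩

theorem ncard_inverted_le_sixteen (hG : IsCharacteristicallySimple G)
    (hns : ¬ Group.IsSolvable G) (hcard : Nat.card G = 60) (θ : G ≃* G) :
    (inverted θ).ncard ≤ 16 := by
  have := hG.isPerfect hns
  obtain ⟨F, hF⟩ := hG.exists_injective_mulAut_perm_fin_five hns hcard
  have hconj : Function.Injective (MulAut.conj : G →* MulAut G) := by
    refine (injective_iff_map_eq_one _).mpr fun g hg => ?_
    rw [← Subgroup.mem_bot, ← hG.center_eq_bot hns, Subgroup.mem_center_iff]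
    exact fun h => (mul_inv_eq_iff_eq_mul.mp (MulEquiv.congr_fun hg h)).symm
  refine _root_.ncard_inverted_le_sixteen (f := F.comp MulAut.conj) (s := F θ) (hF.comp hconj)
    fun g => ?_
  have hθ : MulAut.conj (θ g) = (θ : MulAut G) * MulAut.conj g * (θ : MulAut G)⁻¹ := by
    ext
    simp
  rw [MonoidHom.comp_apply, hθ, map_mul, map_mul, map_inv, MonoidHom.comp_apply]

variable {N : Subgroup G} [N.Characteristic] {θ : G ≃* G}

theorem card_eq_sixty_of_characteristic (hN : IsCharacteristicallySimple N)
    (hns : ¬ Group.IsSolvable N) (hθ : 2 * Nat.card G < 9 * (inverted θ).ncard) :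
    Nat.card N = 60 := by
  obtain ⟨x, -, hx⟩ := exists_card_mul_ncard_inter_inverted_twist_ge θ N
  rw [ncard_inter_inverted_eq] at hx
  refine hN.card_eq_sixty hns (θ := MulAut.characteristic N (twist θ x)) ?_
  have := Nat.card_pos (α := N)
  by_contra! hle
  nlinarith

theorem exists_injective_perm_fin_five (hN : IsCharacteristicallySimple N)
    (hns : ¬ Group.IsSolvable N) (hcard : Nat.card N = 60)
    (hcentralizer : Subgroup.centralizer (N : Set G) = ⊥) :
    ∃ f : G →* Equiv.Perm (Fin 5), Function.Injective f ∧
      ∀ θ : G ≃* G, ∃ s, ∀ g, f (θ g) = s * f g * s⁻¹ := by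
  obtain ⟨F, hF⟩ := hN.exists_injective_mulAut_perm_fin_five hns hcard
  have hconj : Function.Injective (MulAut.conjNormal : G →* MulAut N) := by
    rw [← MonoidHom.ker_eq_bot_iff, ker_conjNormal, hcentralizer]
  refine ⟨F.comp MulAut.conjNormal, hF.comp hconj, fun θ => ⟨F (MulAut.characteristic N θ),
    fun g => ?_⟩⟩
  rw [MonoidHom.comp_apply, conjNormal_apply_eq N θ g, map_mul, map_mul, map_inv,
    MonoidHom.comp_apply]

end IsCharacteristicallySimple

theorem iso_A5_of_many_inverted {G : Type*} [Group G] [Fintype G] [DecidableEq G]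
    (hns : ¬ IsSolvable G)
    (hnorm : ∀ N : Subgroup G, N.Normal → IsSolvable N → N = ⊥)
    (θ : G ≃* G)
    (h : (2 / 9 : ℚ) * (Fintype.card G : ℚ) <
      ((Finset.univ.filter fun g : G => θ g = g⁻¹).card : ℚ)) :
    Nonempty (G ≃* alternatingGroup (Fin 5)) := by
  have hθ : 2 * Nat.card G < 9 * (inverted θ).ncard := by
    rw [ncard_inverted_eq_card_filter, Nat.card_eq_fintype_card, ← @Nat.cast_lt ℚ]
    push_cast
    linarith
  have : Nontrivial G := not_subsingleton_iff_nontrivial.mp fun _ =>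
    hns (Group.isSolvable_of_comm fun _ _ => Subsingleton.elim _ _)
  obtain ⟨N, hchar, hbot, hN⟩ := exists_characteristic_isCharacteristicallySimple G
  have hNns : ¬ Group.IsSolvable N := fun hs => hbot (hnorm N inferInstance hs)
  have hcardN : Nat.card N = 60 := hN.card_eq_sixty_of_characteristic hNns hθ
  have hcentralizer : Subgroup.centralizer (N : Set G) = ⊥ := by
    have := isMulCommutative_quotient_of_forall_ncard_inverted_le (θ := θ)
      (hN.ncard_inverted_le_sixteen hNns hcardN) (by
        rw [← N.card_mul_index, hcardN] at hθ
        omega)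
    have := isMulCommutative_centralizer (hN.center_eq_bot hNns)
    exact hnorm _ inferInstance (Group.isSolvable_of_comm mul_comm')
  obtain ⟨f, hf, hconj⟩ := hN.exists_injective_perm_fin_five hNns hcardN hcentralizer
  have hcardG : Nat.card G = 60 := by
    obtain ⟨s, hs⟩ := hconj θ
    have hle := ncard_inverted_le_twenty_six hf hs
    have hdvd : 60 ∣ Nat.card G := hcardN ▸ N.card_subgroup_dvd_card
    have hpos := Nat.card_pos (α := G)
    omega
  exact nonempty_mulEquiv_alternatingGroup hf (by rw [hcardG, Nat.card_perm, Nat.card_fin]; rfl)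
end
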